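/- arXiv:2604.26246 — 2 statements merged into one kernel-verified Lean document; each statement's English description precedes it below -/
import Mathlib

section
/- Let θ > 0 and let u : ℝ² → ℝ be a smooth solution of arctan λ₁(D²u(x)) + arctan λ₂(D²u(x)) = θ + f(x) on ℝ², with θ + f(x) ∈ (0,π) for all x, f Lipschitz continuous outside a bounded set, and f satisfying the decay condition D(β) relative to u for some β > 2. Suppose there exist A ∈ 𝒜_θ, ε ∈ (0, 1/2), C₁ > 0 and R₀ > 0 with |u(x) − ½ xᵀAx| ≤ C₁ |x|^{2−ε} for all |x| ≥ R₀. Set w(x) = u(x) − ½ xᵀAx. Then for every ε̄ ∈ (0, 2ε) and every α ∈ (0,1) there exist C > 0 and R > R₀ such that: |Dᵏw(x)| ≤ C |x|^{2−ε̄−k} for all |x| > R and k = 0,1,2, and |D²w(x₁) − D²w(x₂)| ≤ C |x₁|^{−ε̄−α} |x₁ − x₂|^α for all x₁ with |x₁| > R and all x₂ ∈ B_{|x₁|/2}(x₁). -/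
/-!
Write `w = u - ½ xᵀAx`, identify the plane with `ℂ`, and let `q = Dw`, so that `Du = A x + q`.
A bounded `q` with `Dq = O(1/|x|)` and Hölder bound `|x|^{-1-α}` for `Dq` is more than is claimed,
since the exponent in the claim is below `2ε < 1`. These stronger bounds are what is proved
(`complex_asymptotics`).

The mechanism is the Lewy–Yuan rotation. For an angle `φ₀` near `θ` put
`Z(x) = cos (φ₀/2) x + sin (φ₀/2) Du(x)` and `Y(x) = cos (φ₀/2) Du(x) - sin (φ₀/2) x`. Where the
phase `φ` of `D²u` is close to `φ₀`, the derivative of `Z` is coercive (`HasPhase.coercive`), and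
the conjugate of `Y`, as a function of `ζ = Z(x)`, is holomorphic up to a defect
`|∂/∂ζ̄| ≤ C |φ - φ₀|` (`HasPhase.dbar_le`). A globally coercive map is a diffeomorphism of the
plane (`coercive_diffeo`), so this gives an almost holomorphic function on all of `ℂ`
(`rotated_coords`). Nothing is assumed about the phase near the origin, hence `q` is first
modified in a ball to make `Z` coercive everywhere (`exists_extension`); the cutoff error is small
because `q = O(|x|^{1-ε/2})`, which follows from the growth of `w` and the lower bound on its
Hessian (`grad_bound`).

The rotation is used twice.

* With `φ₀ = θ`, the defect is `O(|ζ|^{-β})` with `β > 2`. After a complex linear function is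
  subtracted (`HasPhase.complex_linear`), the almost holomorphic function grows sublinearly. The
  Cauchy–Pompeiu formula (`pompeiu`) then bounds it (`liouville_bound`), and so `q` is bounded
  (`global_bound`).
* With `φ₀ = θ + f(x₀)`, the phase at `x₀`, the defect at `x` is controlled by
  `|f(x) - f(x₀)| ≤ C |x₀|^{-2} |x - x₀|`, hence vanishes linearly at `x₀`. A pointwise `C^{1,α}`
  estimate for the Cauchy transform (`cauchy_taylor`) at scale `|x₀|` (`local_taylor`,
  `local_step`) gives `Dq(x₀) = O(1/|x₀|)` and a first-order expansion of `q` at `x₀` with error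
  `C |x₀|^{-1-α} |x - x₀|^{1+α}` (`expansion`). Comparing the expansions at two points yields the
  Hölder bound for `Dq` (`holder_of_expansion`).
-/

open Real MeasureTheory

noncomputable section

abbrev E2 : Type := EuclideanSpace ℝ (Fin 2)

/-- Entries of the Hessian matrix `D²u(x)`. -/
noncomputable def Hess (u : E2 → ℝ) (x : E2) : Matrix (Fin 2) (Fin 2) ℝ :=
  Matrix.of fun i j =>
    iteratedFDeriv ℝ 2 u x ![EuclideanSpace.single i 1, EuclideanSpace.single j 1]

/-- Smaller eigenvalue of a symmetric `2×2` real matrix. -/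
noncomputable def lam1 (M : Matrix (Fin 2) (Fin 2) ℝ) : ℝ :=
  ((M 0 0 + M 1 1) - Real.sqrt ((M 0 0 - M 1 1) ^ 2 + 4 * M 0 1 ^ 2)) / 2

/-- Larger eigenvalue of a symmetric `2×2` real matrix. -/
noncomputable def lam2 (M : Matrix (Fin 2) (Fin 2) ℝ) : ℝ :=
  ((M 0 0 + M 1 1) + Real.sqrt ((M 0 0 - M 1 1) ^ 2 + 4 * M 0 1 ^ 2)) / 2

/-- The Lagrangian phase `F(M) = arctan λ₁(M) + arctan λ₂(M)`. -/
noncomputable def Phase (M : Matrix (Fin 2) (Fin 2) ℝ) : ℝ :=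
  Real.arctan (lam1 M) + Real.arctan (lam2 M)

/-- `𝒜_θ`: symmetric `2×2` matrices with phase `θ`. -/
def calA (θ : ℝ) : Set (Matrix (Fin 2) (Fin 2) ℝ) := {M | M.IsSymm ∧ Phase M = θ}

/-- The quadratic form `xᵀ A x`. -/
noncomputable def quadForm (A : Matrix (Fin 2) (Fin 2) ℝ) (x : E2) : ℝ :=
  ∑ i, ∑ j, A i j * x i * x j

/-- Hölder seminorm `[g]_{C^{0,a}(U)}`, valued in `ℝ≥0∞`. -/
noncomputable def hSemi {E F : Type*} [NormedAddCommGroup E] [NormedAddCommGroup F]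
    (a : ℝ) (U : Set E) (g : E → F) : ENNReal :=
  ⨆ x ∈ U, ⨆ y ∈ U, ENNReal.ofReal (‖g x - g y‖ / ‖x - y‖ ^ a)

/-- The decay condition `D(β)` of `f` relative to `u`:
`(|x|+|Du(x)|)^β |f(x)| + (|x|+|Du(x)|)^{β+1} [f]_{C^{0,1}(B_{|x|/2}(x))} ≤ C₀` for `|x| ≥ R₀`. -/
def DecayCond (β : ℝ) (u f : E2 → ℝ) : Prop :=
  ∃ C₀ > (0:ℝ), ∃ R₀ > (0:ℝ), ∀ x : E2, R₀ ≤ ‖x‖ →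
    ENNReal.ofReal ((‖x‖ + ‖gradient u x‖) ^ β * |f x|)
      + ENNReal.ofReal ((‖x‖ + ‖gradient u x‖) ^ (β + 1)) *
          hSemi 1 (Metric.ball x (‖x‖ / 2)) f
      ≤ ENNReal.ofReal C₀

/-! ### The Cauchy–Pompeiu formula -/

/-- Twice the Wirtinger derivative `∂/∂z̄` of a real-linear map `D : ℂ → ℂ`. -/
def dbar (D : ℂ →L[ℝ] ℂ) : ℂ := D 1 + Complex.I * D Complex.I

/-- The operator `dbar` computed in a rotated orthonormal frame `e, i e`. With `e = exp (i t)` it is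
the polar form of `∂/∂z̄`. -/
theorem dbar_rotate (D : ℂ →L[ℝ] ℂ) (e : ℂ) (he : ‖e‖ = 1) :
    dbar D / e = D e + Complex.I * D (Complex.I * e) := by
  have he0 : e ≠ 0 := by intro h; simp [h] at he
  have h1 : ∀ v : ℂ, D v = v.re * D 1 + v.im * D Complex.I := by
    intro v
    have : v = v.re • (1:ℂ) + v.im • Complex.I := by
      simp
    conv_lhs => rw [this]
    rw [map_add, map_smul, map_smul, Complex.real_smul, Complex.real_smul]
  have h2 : e.re * e.re + e.im * e.im = 1 := by
    have := Complex.normSq_apply e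
    rw [Complex.normSq_eq_norm_sq, he] at this
    linarith
  rw [div_eq_iff he0, h1 e, h1 (Complex.I * e), dbar]
  have h3 : ((e.re:ℂ) * e.re + e.im * e.im) = 1 := by exact_mod_cast h2
  have h4 : e = e.re + e.im * Complex.I := (Complex.re_add_im e).symm
  have hI : Complex.I * Complex.I = -1 := Complex.I_mul_I
  simp only [Complex.mul_re, Complex.mul_im, Complex.I_re, Complex.I_im, zero_mul, one_mul,
    zero_sub, zero_add, Complex.ofReal_neg]
  generalize (e.re:ℂ) = a at *
  generalize (e.im:ℂ) = b at *
  subst h4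
  linear_combination (-(D 1) - Complex.I * D Complex.I) * h3 + (D 1 * b * b - a * b * D Complex.I) * hI

/-- The Cauchy–Pompeiu formula for compactly supported functions, centred at the origin. -/
theorem pompeiu_zero (V : ℂ → ℂ) (hV : ContDiff ℝ 1 V) (ρ : ℝ) (hρ : 0 < ρ)
    (hs : ∀ w, ρ ≤ ‖w‖ → V w = 0) (hs' : ∀ w, ρ ≤ ‖w‖ → fderiv ℝ V w = 0) :
    ∫ w, dbar (fderiv ℝ V w) / w = -(2 * π) * V 0 := by
  have hd : Continuous (fderiv ℝ V) := hV.continuous_fderiv (by norm_num)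
  set E : ℝ → ℂ := fun t => Complex.exp (t * Complex.I) with hE
  have hEn : ∀ t, ‖E t‖ = 1 := fun t => Complex.norm_exp_ofReal_mul_I t
  have hEc : Continuous E := by fun_prop
  have hE0 : ∀ t, E t ≠ 0 := fun t => Complex.exp_ne_zero _
  set P : ℝ × ℝ → ℂ := fun p => fderiv ℝ V (p.1 * E p.2) (E p.2) with hP
  set Q : ℝ × ℝ → ℂ := fun p => fderiv ℝ V (p.1 * E p.2) (Complex.I * E p.2) with hQ
  have hPc : Continuous P := by
    have : Continuous fun p : ℝ × ℝ => (p.1 : ℂ) * E p.2 := by fun_prop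
    exact (hd.comp this).clm_apply (by fun_prop)
  have hQc : Continuous Q := by
    have : Continuous fun p : ℝ × ℝ => (p.1 : ℂ) * E p.2 := by fun_prop
    exact (hd.comp this).clm_apply (by fun_prop)
  have hsub : Set.Ioc (0:ℝ) ρ ×ˢ Set.Ioo (-π) π ⊆ Set.Icc (0:ℝ) ρ ×ˢ Set.Icc (-π) π :=
    Set.prod_mono Set.Ioc_subset_Icc_self Set.Ioo_subset_Icc_self
  have hK : IsCompact (Set.Icc (0:ℝ) ρ ×ˢ Set.Icc (-π) π) := isCompact_Icc.prod isCompact_Icc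
  have hPi : IntegrableOn P (Set.Ioc (0:ℝ) ρ ×ˢ Set.Ioo (-π) π) (volume.prod volume) :=
    (hPc.continuousOn.integrableOn_compact hK).mono_set hsub
  have hQi : IntegrableOn Q (Set.Ioc (0:ℝ) ρ ×ˢ Set.Ioo (-π) π) (volume.prod volume) :=
    (hQc.continuousOn.integrableOn_compact hK).mono_set hsub
  -- in polar coordinates the integrand is a radial derivative plus `i` times an angular one
  rw [← Complex.integral_comp_polarCoord_symm]
  have e1 : ∫ p in polarCoord.target, p.1 • (dbar (fderiv ℝ V (Complex.polarCoord.symm p)) /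
      (Complex.polarCoord.symm p)) = ∫ p in Set.Ioc (0:ℝ) ρ ×ˢ Set.Ioo (-π) π,
        (P p + Complex.I * Q p) := by
    rw [polarCoord_target]
    have hEE : ∀ p : ℝ × ℝ, Complex.polarCoord.symm p = p.1 * E p.2 := by
      intro p
      simp only [Complex.polarCoord_symm_apply, hE, Complex.exp_mul_I, Complex.ofReal_cos,
        Complex.ofReal_sin]
    have : ∀ p ∈ Set.Ioi (0:ℝ) ×ˢ Set.Ioo (-π) π,
        p.1 • (dbar (fderiv ℝ V (Complex.polarCoord.symm p)) / (Complex.polarCoord.symm p))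
        = P p + Complex.I * Q p := by
      rintro ⟨r, t⟩ ⟨hr, ht⟩
      have hr0 : (r:ℂ) ≠ 0 := by
        simp only [Set.mem_Ioi] at hr
        exact_mod_cast hr.ne'
      rw [hEE]
      simp only [hP, hQ]
      rw [← dbar_rotate _ _ (hEn t), Complex.real_smul]
      field_simp [hE0 t]
    rw [setIntegral_congr_fun (measurableSet_Ioi.prod measurableSet_Ioo) this]
    refine setIntegral_eq_of_subset_of_forall_sdiff_eq_zero
      (measurableSet_Ioi.prod measurableSet_Ioo)
      (Set.prod_mono Set.Ioc_subset_Ioi_self subset_rfl) ?_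
    rintro ⟨r, t⟩ ⟨⟨hr, ht⟩, hn⟩
    have hr' : ρ < r := by
      by_contra! h
      exact hn ⟨⟨hr, h⟩, ht⟩
    have : ρ ≤ ‖(r:ℂ) * E t‖ := by
      rw [norm_mul, hEn, mul_one, Complex.norm_real, Real.norm_eq_abs]
      exact hr'.le.trans (le_abs_self r)
    simp [hP, hQ, hs' _ this]
  rw [e1]
  have hcurve : ∀ t r : ℝ, HasDerivAt (fun r : ℝ => V (r * E t)) (P (r, t)) r := by
    intro t r
    have h1 : HasFDerivAt V (fderiv ℝ V (r * E t)) (r * E t) :=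
      (hV.differentiable (by norm_num)).differentiableAt.hasFDerivAt
    have h2 : HasDerivAt (fun r : ℝ => (r:ℂ) * E t) (E t) r := by
      simpa using (Complex.ofRealCLM.hasDerivAt (x := r)).mul_const (E t)
    exact h1.comp_hasDerivAt r h2
  have hcircle : ∀ r t : ℝ, HasDerivAt (fun t : ℝ => V (r * E t)) (r * Q (r, t)) t := by
    intro r t
    have h1 : HasFDerivAt V (fderiv ℝ V (r * E t)) (r * E t) :=
      (hV.differentiable (by norm_num)).differentiableAt.hasFDerivAt
    have h3 : HasDerivAt E (Complex.I * E t) t := by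
      have : HasDerivAt (fun t : ℝ => (t:ℂ) * Complex.I) Complex.I t := by
        simpa using (Complex.ofRealCLM.hasDerivAt (x := t)).mul_const Complex.I
      exact this.cexp.congr_deriv (mul_comm _ _)
    have h2 : HasDerivAt (fun t : ℝ => (r:ℂ) * E t) (r * (Complex.I * E t)) t := h3.const_mul _
    have := h1.comp_hasDerivAt t h2
    refine this.congr_deriv ?_
    simp only [hQ]
    generalize fderiv ℝ V (r * E t) = D
    rw [← Complex.real_smul, map_smul, Complex.real_smul]
  have hpi : -π ≤ π := by linarith [Real.pi_pos]
  -- along each ray the radial part integrates to `-V 0`, by compact support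
  have i1 : ∫ p in Set.Ioc (0:ℝ) ρ ×ˢ Set.Ioo (-π) π, P p = -(2 * π) * V 0 := by
    rw [Measure.volume_eq_prod, ← setIntegral_prod_swap, setIntegral_prod]
    · have : ∀ t : ℝ, ∫ r in Set.Ioc (0:ℝ) ρ, P (r, t) = - V 0 := by
        intro t
        rw [← intervalIntegral.integral_of_le hρ.le,
          intervalIntegral.integral_eq_sub_of_hasDerivAt (fun r _ => hcurve t r)]
        · have : V (ρ * E t) = 0 := hs _ (by
            rw [norm_mul, hEn, mul_one, Complex.norm_real, Real.norm_eq_abs]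
            exact le_abs_self ρ)
          simp [this]
        · exact (hPc.comp (by fun_prop : Continuous fun r : ℝ => (r, t))).intervalIntegrable _ _
      simp only [Prod.swap_prod_mk, this]
      rw [setIntegral_const]
      simp [Measure.real, Real.volume_Ioo, Complex.real_smul]
      rw [ENNReal.toReal_ofReal (by linarith [Real.pi_pos])]
      left; push_cast; ring
    · exact hPi.swap
  -- along each circle the angular part integrates to zero, by periodicity
  have i2 : ∫ p in Set.Ioc (0:ℝ) ρ ×ˢ Set.Ioo (-π) π, Q p = 0 := by
    rw [Measure.volume_eq_prod, setIntegral_prod _ hQi]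
    have : ∀ r ∈ Set.Ioc (0:ℝ) ρ, ∫ t in Set.Ioo (-π) π, Q (r, t) = 0 := by
      intro r hr
      have hr0 : (r:ℂ) ≠ 0 := by exact_mod_cast hr.1.ne'
      rw [← integral_Ioc_eq_integral_Ioo, ← intervalIntegral.integral_of_le hpi]
      have h := intervalIntegral.integral_eq_sub_of_hasDerivAt (a := -π) (b := π)
        (fun t _ => hcircle r t) (Continuous.intervalIntegrable (by
          exact continuous_const.mul (hQc.comp (by fun_prop : Continuous fun t : ℝ => (r, t)))) _ _)
      have hEE : E π = E (-π) := by
        simp [hE, Complex.exp_neg, Complex.exp_pi_mul_I]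
      rw [hEE, sub_self, intervalIntegral.integral_const_mul] at h
      exact (mul_eq_zero.mp h).resolve_left hr0
    rw [setIntegral_congr_fun measurableSet_Ioc this]
    simp
  rw [Measure.volume_eq_prod] at i1 i2 ⊢
  rw [integral_add hPi (hQi.const_mul _), integral_const_mul, i1, i2]
  simp

/-- The Cauchy–Pompeiu formula for compactly supported functions. -/
theorem pompeiu (V : ℂ → ℂ) (hV : ContDiff ℝ 1 V) (hc : HasCompactSupport V) (z : ℂ) :
    ∫ w, dbar (fderiv ℝ V w) / (w - z) = -(2 * π) * V z := by
  obtain ⟨ρ, hρ⟩ := hc.isCompact.isBounded.subset_closedBall (z)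
  have hs : ∀ w, |ρ| + 1 ≤ ‖w‖ → w + z ∉ tsupport V := by
    intro w hw h
    have := hρ h
    simp at this
    linarith [le_abs_self ρ]
  have key := pompeiu_zero (fun w => V (w + z)) (hV.comp (by fun_prop)) (|ρ| + 1) (by positivity)
    (fun w hw => image_eq_zero_of_notMem_tsupport (hs w hw))
    (fun w hw => by
      rw [fderiv_comp_add_right]
      exact image_eq_zero_of_notMem_tsupport (fun h => hs w hw (tsupport_fderiv_subset ℝ h)))
  simp only [fderiv_comp_add_right, zero_add] at key
  rw [← key, ← integral_add_right_eq_self _ z]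
  simp

/-! ### Estimates for the Cauchy kernel -/

/-- The truncated Riesz kernel `|w|^{-s}` on the disc of radius `2`. -/
def riesz (s : ℝ) (w : ℂ) : ℝ := (Metric.ball (0:ℂ) 2).indicator (fun w => ‖w‖ ^ (-s)) w

theorem riesz_nonneg (s : ℝ) (w : ℂ) : 0 ≤ riesz s w := by
  unfold riesz
  exact Set.indicator_nonneg (fun _ _ => by positivity) _

theorem riesz_eq (s : ℝ) {w : ℂ} (hw : ‖w‖ < 2) : riesz s w = ‖w‖ ^ (-s) := by
  unfold riesz
  rw [Set.indicator_of_mem (by simpa using hw)]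

theorem riesz_integrable {s : ℝ} (hs : s < 2) : Integrable (riesz s) := by
  unfold riesz
  have hm : Measurable fun w : ℂ => ‖w‖ ^ (-s) := by fun_prop
  rw [integrable_indicator_iff measurableSet_ball]
  refine integrableOn_ball_of_norm_le_rpow (C := 1) (α := s) ?_ ?_ ?_ hm.aestronglyMeasurable
  · simp
  · simpa using hs
  · refine Filter.Eventually.of_forall fun w => ?_
    rw [Real.norm_of_nonneg (by positivity), one_mul]

theorem riesz_shift_integrable {s : ℝ} (hs : s < 2) (z : ℂ) :
    Integrable (fun w => riesz s (w - z)) := (riesz_integrable hs).comp_sub_right z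

theorem riesz_shift_integral (s : ℝ) (z : ℂ) :
    ∫ w, riesz s (w - z) = ∫ w, riesz s w := integral_sub_right_eq_self _ z

theorem ae_ne (z : ℂ) : ∀ᵐ w : ℂ, w ≠ z := by
  simp [ae_iff, measure_singleton]

/-- The elementary inequality behind the `C^{1,α}` bound of the Cauchy transform. -/
theorem kernel_ineq {α a b d : ℝ} (hα0 : 0 < α) (hα : α < 1) (ha : 0 < a) (hb : 0 < b) (hd : 0 < d)
    (h : d ≤ a + b) : d ^ 2 / (a * b) ≤ 2 * d ^ (1 + α) * (a ^ (-(1 + α)) + b ^ (-(1 + α))) := by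
  wlog hab : a ≤ b generalizing a b
  · have := this hb ha (by linarith) (le_of_not_ge hab)
    rw [mul_comm a b, add_comm (a ^ _)]
    exact this
  have h1 : d ^ (1 - α) ≤ 2 * b ^ (1 - α) := by
    calc d ^ (1 - α) ≤ (2 * b) ^ (1 - α) := by
          apply Real.rpow_le_rpow hd.le (by linarith) (by linarith)
      _ = 2 ^ (1 - α) * b ^ (1 - α) := Real.mul_rpow (by norm_num) hb.le
      _ ≤ 2 * b ^ (1 - α) := by
          gcongr
          calc (2:ℝ) ^ (1 - α) ≤ 2 ^ (1:ℝ) := by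
                apply Real.rpow_le_rpow_of_exponent_le <;> linarith
            _ = 2 := by simp
  have h2 : b ^ (1 - α) ≤ b * a ^ (-α) := by
    calc b ^ (1 - α) = b * b ^ (-α) := by
          rw [sub_eq_add_neg, Real.rpow_add hb, Real.rpow_one]
      _ ≤ b * a ^ (-α) := by
          have h7 : b ^ (-α) ≤ a ^ (-α) :=
            Real.rpow_le_rpow_of_nonpos ha hab (by linarith)
          gcongr
  have h3 : a ^ (-(1 + α)) = a ^ (-α) / a := by
    rw [show -(1 + α) = -α - 1 by ring, Real.rpow_sub_one ha.ne']
  have h4 : d ^ 2 = d ^ (1 + α) * d ^ (1 - α) := by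
    rw [← Real.rpow_add hd]; norm_num
  have h5 : 0 < d ^ (1 + α) := by positivity
  calc d ^ 2 / (a * b) = d ^ (1 + α) * (d ^ (1 - α) / (a * b)) := by rw [h4]; ring
    _ ≤ d ^ (1 + α) * (2 * (b * a ^ (-α)) / (a * b)) := by
        gcongr
        linarith
    _ = 2 * d ^ (1 + α) * (a ^ (-α) / a) := by field_simp
    _ ≤ _ := by
        rw [h3]
        have : 0 < b ^ (-(1 + α)) := by positivity
        gcongr
        linarith

theorem dbar_continuous : Continuous dbar := by
  unfold dbar
  fun_prop

/-- Pointwise `C^{1,α}` estimate at the origin for a compactly supported function whose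
`∂/∂z̄`-derivative vanishes linearly there. -/
theorem cauchy_taylor {α : ℝ} (hα0 : 0 < α) (hα : α < 1) (V : ℂ → ℂ) (hV : ContDiff ℝ 1 V)
    (hc : HasCompactSupport V) (K : ℝ) (hK : 0 ≤ K)
    (h1 : ∀ w, ‖dbar (fderiv ℝ V w)‖ ≤ K * ‖w‖)
    (h2 : ∀ w, 1 ≤ ‖w‖ → dbar (fderiv ℝ V w) = 0) :
    ∃ p : ℂ, ‖p‖ ≤ 4 * (∫ w, riesz (1 + α) w) * K ∧ ∀ z, ‖z‖ ≤ 1 →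
      ‖V z - V 0 - p * z‖ ≤ 4 * (∫ w, riesz (1 + α) w) * K * ‖z‖ ^ (1 + α) := by
  set J := ∫ w, riesz (1 + α) w with hJ
  have hJ0 : 0 ≤ J := integral_nonneg (riesz_nonneg _)
  set G : ℂ → ℂ := fun w => dbar (fderiv ℝ V w) with hG
  have hGc : Continuous G := dbar_continuous.comp (hV.continuous_fderiv (by norm_num))
  have hGm : Measurable G := hGc.measurable
  have hpi := Real.pi_gt_three
  have hriesz : ∀ z, ‖z‖ ≤ 1 → ∀ w, ‖w‖ < 1 → w ≠ z →
      ‖w - z‖⁻¹ ≤ 2 * riesz (1 + α) (w - z) := by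
    intro z hz w hw hwz
    have h0 : 0 < ‖w - z‖ := norm_pos_iff.2 (sub_ne_zero.2 hwz)
    have h2' : ‖w - z‖ < 2 := by linarith [norm_sub_le w z]
    rw [riesz_eq _ h2', Real.rpow_neg h0.le, Real.rpow_add h0, Real.rpow_one, mul_inv]
    have : ‖w - z‖ ^ α ≤ 2 := by
      calc ‖w - z‖ ^ α ≤ 2 ^ α := by gcongr
        _ ≤ 2 ^ (1:ℝ) := by apply Real.rpow_le_rpow_of_exponent_le <;> linarith
        _ = 2 := by simp
    have h3 : 0 < ‖w - z‖ ^ α := by positivity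
    have h4 : 1 ≤ 2 * (‖w - z‖ ^ α)⁻¹ := by
      rw [← div_eq_mul_inv, le_div_iff₀ h3]; linarith
    have : 0 < ‖w - z‖⁻¹ := by positivity
    nlinarith
  have hint1 : ∀ z, ‖z‖ ≤ 1 → Integrable fun w => G w / (w - z) := by
    intro z hz
    refine Integrable.mono' (((riesz_shift_integrable (s := 1 + α) (by linarith) z).const_mul 
      (2 * K))) (hGm.div (by fun_prop)).aestronglyMeasurable ?_
    filter_upwards [ae_ne z] with w hw
    by_cases hw1 : 1 ≤ ‖w‖
    · simp only [hG, h2 w hw1, zero_div, norm_zero]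
      have := riesz_nonneg (1 + α) (w - z)
      positivity
    · push Not at hw1
      have := hriesz z hz w hw1 hw
      rw [norm_div, div_eq_mul_inv]
      calc ‖G w‖ * ‖w - z‖⁻¹ ≤ K * (2 * riesz (1 + α) (w - z)) := by
            gcongr
            exact (h1 w).trans (by nlinarith)
        _ = _ := by ring
  have hbd2 : ∀ᵐ w, ‖G w / w ^ 2‖ ≤ (2 * K) * riesz (1 + α) w := by
    filter_upwards [ae_ne 0] with w hw
    by_cases hw1 : 1 ≤ ‖w‖
    · simp only [hG, h2 w hw1, zero_div, norm_zero]
      have := riesz_nonneg (1 + α) w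
      positivity
    · push Not at hw1
      have := hriesz 0 (by simp) w hw1 hw
      rw [sub_zero] at this
      have hw0 : 0 < ‖w‖ := norm_pos_iff.2 hw
      rw [norm_div, norm_pow]
      calc ‖G w‖ / ‖w‖ ^ 2 ≤ K * ‖w‖ / ‖w‖ ^ 2 := by gcongr; exact h1 w
        _ = K * ‖w‖⁻¹ := by field_simp
        _ ≤ K * (2 * riesz (1 + α) w) := by gcongr
        _ = _ := by ring
  have hint2 : Integrable fun w => G w / w ^ 2 :=
    Integrable.mono' ((riesz_integrable (s := 1 + α) (by linarith)).const_mul (2 * K))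
      (hGm.div (by fun_prop)).aestronglyMeasurable hbd2
  have hV' : ∀ z, V z = -(2 * π : ℂ)⁻¹ * ∫ w, G w / (w - z) := by
    intro z
    have := pompeiu V hV hc z
    rw [hG, this]
    have : (2 * π : ℂ) ≠ 0 := by
      have := Real.pi_ne_zero
      simp [this]
    field_simp
  have hn : ‖-(2 * π : ℂ)⁻¹‖ ≤ 1 := by
    rw [norm_neg, norm_inv, norm_mul, Complex.norm_real, Real.norm_of_nonneg Real.pi_pos.le]
    apply inv_le_one_of_one_le₀
    simp; linarith
  refine ⟨-(2 * π : ℂ)⁻¹ * ∫ w, G w / w ^ 2, ?_, ?_⟩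
  · rw [norm_mul]
    have := norm_integral_le_of_norm_le
      ((riesz_integrable (s := 1 + α) (by linarith)).const_mul (2 * K)) hbd2
    rw [integral_const_mul, ← hJ] at this
    nlinarith [mul_nonneg hJ0 hK, norm_nonneg (∫ w, G w / w ^ 2)]
  · intro z hz
    by_cases hz0 : z = 0
    · subst hz0
      simp only [sub_self, mul_zero, norm_zero]
      positivity
    have e0 := hV' 0
    simp only [sub_zero] at e0
    have hint0 : Integrable fun w => G w / w := by simpa using hint1 0 (by simp)
    have e1 : V z - V 0 - (-(2 * π : ℂ)⁻¹ * ∫ w, G w / w ^ 2) * z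
        = -(2 * π : ℂ)⁻¹ * ∫ w, (G w / (w - z) - G w / w - z * (G w / w ^ 2)) := by
      have hsub : Integrable fun w => G w / (w - z) - G w / w := (hint1 z hz).sub hint0
      rw [integral_sub hsub (hint2.const_mul _),
        integral_sub (hint1 z hz) hint0, integral_const_mul, hV' z, e0]
      ring
    rw [e1, norm_mul]
    have hz1 : 0 < ‖z‖ := norm_pos_iff.2 hz0
    have hb : ∀ᵐ w, ‖G w / (w - z) - G w / w - z * (G w / w ^ 2)‖ ≤
        2 * K * ‖z‖ ^ (1 + α) * (riesz (1 + α) (w - z) + riesz (1 + α) w) := by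
      filter_upwards [ae_ne 0, ae_ne z] with w hw hwz
      by_cases hw1 : 1 ≤ ‖w‖
      · simp only [hG, h2 w hw1, zero_div, sub_zero, mul_zero, norm_zero]
        have := riesz_nonneg (1 + α) w
        have := riesz_nonneg (1 + α) (w - z)
        positivity
      push Not at hw1
      have hwz' : w - z ≠ 0 := sub_ne_zero.2 hwz
      have e2 : G w / (w - z) - G w / w - z * (G w / w ^ 2) =
          G w * (z ^ 2 / ((w - z) * w ^ 2)) := by
        field_simp
        ring
      have ha : 0 < ‖w - z‖ := norm_pos_iff.2 hwz'
      have hb : 0 < ‖w‖ := norm_pos_iff.2 hw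
      rw [e2, norm_mul, norm_div, norm_mul, norm_pow, norm_pow,
        riesz_eq _ (by linarith [norm_sub_le w z] : ‖w - z‖ < 2), riesz_eq _ (by linarith)]
      have hd : ‖z‖ ≤ ‖w - z‖ + ‖w‖ := by
        have := norm_sub_le w (w - z)
        simp only [sub_sub_cancel] at this
        linarith
      have := kernel_ineq hα0 hα ha hb hz1 hd
      calc ‖G w‖ * (‖z‖ ^ 2 / (‖w - z‖ * ‖w‖ ^ 2))
          ≤ K * ‖w‖ * (‖z‖ ^ 2 / (‖w - z‖ * ‖w‖ ^ 2)) := by gcongr; exact h1 w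
        _ = K * (‖z‖ ^ 2 / (‖w - z‖ * ‖w‖)) := by field_simp
        _ ≤ K * (2 * ‖z‖ ^ (1 + α) * (‖w - z‖ ^ (-(1 + α)) + ‖w‖ ^ (-(1 + α)))) := by gcongr
        _ = _ := by ring
    have := norm_integral_le_of_norm_le
      (((riesz_shift_integrable (s := 1 + α) (by linarith) z).add
        (riesz_integrable (s := 1 + α) (by linarith))).const_mul (2 * K * ‖z‖ ^ (1 + α))) hb
    simp only [Pi.add_apply] at this
    rw [integral_const_mul, integral_add (riesz_shift_integrable (by linarith) z)
      (riesz_integrable (by linarith)), riesz_shift_integral, ← hJ] at this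
    have h0 := norm_nonneg (∫ w, (G w / (w - z) - G w / w - z * (G w / w ^ 2)))
    calc _ ≤ 1 * (2 * K * ‖z‖ ^ (1 + α) * (J + J)) := by gcongr
      _ = _ := by ring

/-! ### Cutoffs and the local `C^{1,α}` estimate -/

/-- A smooth cutoff equal to `1` on the disc of radius `1/2` and to `0` outside the unit disc, with
bounded derivative. -/
theorem exists_cutoff : ∃ χ : ℂ → ℝ, ∃ B : ℝ, 0 ≤ B ∧ ContDiff ℝ (⊤ : ℕ∞) χ ∧
    (∀ x, 0 ≤ χ x) ∧ (∀ x, χ x ≤ 1) ∧ (∀ x, ‖x‖ ≤ 1 / 2 → χ x = 1) ∧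
    (∀ x, 1 ≤ ‖x‖ → χ x = 0) ∧ (∀ x, ‖fderiv ℝ χ x‖ ≤ B) ∧
    (∀ x, ‖x‖ ≤ 1 / 2 → fderiv ℝ χ x = 0) ∧ (∀ x, 1 ≤ ‖x‖ → fderiv ℝ χ x = 0) := by
  let b : ContDiffBump (0 : ℂ) := ⟨1 / 2, 1, by norm_num, by norm_num⟩
  have hb : ContDiff ℝ (⊤ : ℕ∞) b := b.contDiff
  have hcd : Continuous (fderiv ℝ b) := hb.continuous_fderiv (by simp)
  have hcs : HasCompactSupport (fderiv ℝ b) := b.hasCompactSupport.fderiv ℝ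
  obtain ⟨B, hB⟩ := hcs.exists_bound_of_continuous hcd
  have h1 : ∀ x : ℂ, ‖x‖ ≤ 1 / 2 → b x = 1 := fun x hx =>
    b.one_of_mem_closedBall (mem_closedBall_zero_iff.2 hx)
  have h0 : ∀ x : ℂ, 1 ≤ ‖x‖ → b x = 0 := fun x hx =>
    b.zero_of_le_dist (by simpa [b] using hx)
  refine ⟨b, B, (norm_nonneg _).trans (hB 0), hb, fun x => b.nonneg, fun x => b.le_one, h1, h0, hB,
    fun x hx => ?_, fun x hx => ?_⟩
  · apply IsLocalMax.fderiv_eq_zero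
    exact Filter.Eventually.of_forall fun y => by rw [h1 x hx]; exact b.le_one
  · apply IsLocalMin.fderiv_eq_zero
    exact Filter.Eventually.of_forall fun y => by rw [h0 x hx]; exact b.nonneg

/-- The product rule for `dbar`. -/
theorem dbar_smul {χ : ℂ → ℝ} {W : ℂ → ℂ} {x : ℂ} (hχ : DifferentiableAt ℝ χ x)
    (hW : DifferentiableAt ℝ W x) :
    dbar (fderiv ℝ (fun x => χ x • W x) x) = χ x • dbar (fderiv ℝ W x) +
      W x * (fderiv ℝ χ x 1 + Complex.I * fderiv ℝ χ x Complex.I) := by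
  rw [fderiv_fun_smul hχ hW]
  simp only [dbar, add_apply, smul_apply,
    ContinuousLinearMap.smulRight_apply, Complex.real_smul]
  ring

/-- Cutting `W` off by `χ` changes its `dbar` by a term supported where `fderiv ℝ χ ≠ 0`. -/
theorem norm_dbar_smul_le {χ : ℂ → ℝ} {W : ℂ → ℂ} {x : ℂ} (hχ : DifferentiableAt ℝ χ x)
    (hW : DifferentiableAt ℝ W x) (h0 : 0 ≤ χ x) (h1 : χ x ≤ 1) :
    ‖dbar (fderiv ℝ (fun x => χ x • W x) x)‖ ≤ ‖dbar (fderiv ℝ W x)‖ +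
      2 * ‖W x‖ * ‖fderiv ℝ χ x‖ := by
  rw [dbar_smul hχ hW]
  have e1 : ‖fderiv ℝ χ x 1‖ ≤ ‖fderiv ℝ χ x‖ := by
    simpa using (fderiv ℝ χ x).le_opNorm 1
  have e2 : ‖fderiv ℝ χ x Complex.I‖ ≤ ‖fderiv ℝ χ x‖ := by
    simpa using (fderiv ℝ χ x).le_opNorm Complex.I
  have e3 : ‖((fderiv ℝ χ x 1 : ℝ) : ℂ) + Complex.I * ((fderiv ℝ χ x Complex.I : ℝ) : ℂ)‖ ≤
      2 * ‖fderiv ℝ χ x‖ := by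
    refine (norm_add_le _ _).trans ?_
    rw [norm_mul, Complex.norm_I, one_mul, Complex.norm_real, Complex.norm_real]
    linarith
  refine (norm_add_le _ _).trans ?_
  rw [norm_smul, norm_mul, Real.norm_of_nonneg h0]
  have := norm_nonneg (dbar (fderiv ℝ W x))
  have := norm_nonneg (W x)
  nlinarith

/-- Scaled pointwise `C^{1,α}` estimate: on a disc of radius `ρ` on which `W` is bounded by `S` and
`dbar` of the derivative of `W` is at most `K` times the distance to the centre, `W` is complex affine up to an error of
order `1 + α`. -/
theorem local_taylor {α : ℝ} (hα0 : 0 < α) (hα : α < 1) : ∃ C : ℝ, 0 < C ∧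
    ∀ (W : ℂ → ℂ), ContDiff ℝ 1 W → ∀ (z₀ : ℂ) (ρ K S : ℝ), 0 < ρ → 0 ≤ K → 0 ≤ S →
    (∀ w, ‖w - z₀‖ ≤ ρ → ‖dbar (fderiv ℝ W w)‖ ≤ K * ‖w - z₀‖) →
    (∀ w, ‖w - z₀‖ ≤ ρ → ‖W w‖ ≤ S) →
    ∃ p : ℂ, ‖p‖ ≤ C * (S / ρ + K * ρ) ∧ ∀ z, ‖z - z₀‖ ≤ ρ / 2 →
      ‖W z - W z₀ - p * (z - z₀)‖ ≤ C * (S / ρ + K * ρ) * ρ ^ (-α) * ‖z - z₀‖ ^ (1 + α) := by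
  obtain ⟨χ, B, hB, hχ, hχ0, hχ1, hχi, hχo, hDB, hDi, hDo⟩ := exists_cutoff
  set J := ∫ w, riesz (1 + α) w with hJ
  have hJ0 : 0 ≤ J := integral_nonneg (riesz_nonneg _)
  refine ⟨4 * J * (1 + 4 * B) + 1, by positivity, ?_⟩
  intro W hW z₀ ρ K S hρ hK hS hKb hSb
  set U : ℂ → ℂ := fun x => W (z₀ + ρ • x) with hU
  have hUc : ContDiff ℝ 1 U := hW.comp (by fun_prop)
  have hUd : ∀ x, DifferentiableAt ℝ U x := fun x => (hUc.differentiable (by norm_num)) x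
  have hχc : ContDiff ℝ 1 χ := hχ.of_le (by exact_mod_cast le_top)
  have hχd : ∀ x, DifferentiableAt ℝ χ x := fun x => (hχc.differentiable (by norm_num)) x
  have hin : ∀ x : ℂ, ‖x‖ ≤ 1 → ‖(z₀ + ρ • x) - z₀‖ ≤ ρ := by
    intro x hx
    rw [add_sub_cancel_left, norm_smul, Real.norm_of_nonneg hρ.le]
    nlinarith
  have hUf : ∀ x, dbar (fderiv ℝ U x) = ρ • dbar (fderiv ℝ W (z₀ + ρ • x)) := by
    intro x
    have h1 : HasFDerivAt W (fderiv ℝ W (z₀ + ρ • x)) (z₀ + ρ • x) :=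
      ((hW.differentiable (by norm_num)) _).hasFDerivAt
    have h2 : HasFDerivAt (fun x : ℂ => z₀ + ρ • x) (ρ • ContinuousLinearMap.id ℝ ℂ) x := by
      simpa using ((hasFDerivAt_id (𝕜 := ℝ) x).const_smul ρ).const_add z₀
    have h3 := (h1.comp x h2).fderiv
    have : U = W ∘ (fun x : ℂ => z₀ + ρ • x) := rfl
    rw [this, h3]
    simp [dbar]
    ring
  have hVc : ContDiff ℝ 1 (fun x => χ x • U x) := hχc.smul hUc
  have hχs : HasCompactSupport χ := HasCompactSupport.of_support_subset_isCompact
    (isCompact_closedBall (0:ℂ) 1) (fun x hx => by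
      by_contra h
      simp only [Metric.mem_closedBall, dist_zero_right, not_le] at h
      exact hx (hχo x h.le))
  have hVs : HasCompactSupport (fun x => χ x • U x) := hχs.smul_right
  have hb1 : ∀ w, ‖dbar (fderiv ℝ (fun x => χ x • U x) w)‖ ≤ (K * ρ ^ 2 + 4 * B * S) * ‖w‖ := by
    intro w
    by_cases hw : 1 ≤ ‖w‖
    · rw [dbar_smul (hχd w) (hUd w), hχo w hw, hDo w hw]
      simp
      positivity
    push Not at hw
    refine (norm_dbar_smul_le (hχd w) (hUd w) (hχ0 w) (hχ1 w)).trans ?_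
    have e1 : ‖dbar (fderiv ℝ U w)‖ ≤ K * ρ ^ 2 * ‖w‖ := by
      rw [hUf, norm_smul, Real.norm_of_nonneg hρ.le]
      have := hKb _ (hin w hw.le)
      rw [add_sub_cancel_left, norm_smul, Real.norm_of_nonneg hρ.le] at this
      nlinarith
    have e2 : 2 * ‖U w‖ * ‖fderiv ℝ χ w‖ ≤ 4 * B * S * ‖w‖ := by
      by_cases hw2 : ‖w‖ ≤ 1 / 2
      · rw [hDi w hw2]
        simp
        positivity
      · push Not at hw2
        have h3 : ‖U w‖ ≤ S := hSb _ (hin w hw.le)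
        have h4 := hDB w
        calc 2 * ‖U w‖ * ‖fderiv ℝ χ w‖ ≤ 2 * S * B := by gcongr
          _ ≤ 4 * B * S * ‖w‖ := by nlinarith [mul_nonneg hB hS]
    linarith
  have hb2 : ∀ w, 1 ≤ ‖w‖ → dbar (fderiv ℝ (fun x => χ x • U x) w) = 0 := by
    intro w hw
    rw [dbar_smul (hχd w) (hUd w), hχo w hw, hDo w hw]
    simp
  obtain ⟨p, hp, hpz⟩ := cauchy_taylor hα0 hα _ hVc hVs _ (by positivity) hb1 hb2
  rw [← hJ] at hp hpz
  have hρ0 : (ρ:ℂ) ≠ 0 := by exact_mod_cast hρ.ne'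
  have hC : 4 * J * (K * ρ ^ 2 + 4 * B * S) / ρ ≤
      (4 * J * (1 + 4 * B) + 1) * (S / ρ + K * ρ) := by
    have : 4 * J * (K * ρ ^ 2 + 4 * B * S) / ρ = 4 * J * (K * ρ + 4 * B * (S / ρ)) := by
      field_simp
    rw [this]
    have h1 : 0 ≤ S / ρ := by positivity
    have h2 : 0 ≤ K * ρ := by positivity
    have h3 : 0 ≤ J * B := by positivity
    nlinarith [mul_nonneg h3 h2, mul_nonneg hJ0 h1]
  refine ⟨p / ρ, ?_, ?_⟩
  · rw [norm_div, Complex.norm_real, Real.norm_of_nonneg hρ.le]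
    refine le_trans ?_ hC
    gcongr
  · intro z hz
    have hn : ‖(z - z₀) / ρ‖ = ‖z - z₀‖ / ρ := by
      rw [norm_div, Complex.norm_real, Real.norm_of_nonneg hρ.le]
    have hx : ‖(z - z₀) / ρ‖ ≤ 1 / 2 := by
      rw [hn, div_le_iff₀ hρ]; linarith
    have := hpz ((z - z₀) / ρ) (by linarith)
    have eU : U ((z - z₀) / ρ) = W z := by
      simp only [hU, Complex.real_smul]
      congr 1
      field_simp
      ring
    have eU0 : U 0 = W z₀ := by simp [hU]
    simp only [hχi _ hx, hχi 0 (by simp), one_smul, eU, eU0] at this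
    rw [hn] at this
    have e : p * ((z - z₀) / ρ) = p / ρ * (z - z₀) := by ring
    rw [e] at this
    refine this.trans ?_
    rw [Real.div_rpow (norm_nonneg _) hρ.le, Real.rpow_add hρ, Real.rpow_one, Real.rpow_neg hρ.le]
    calc _ = 4 * J * (K * ρ ^ 2 + 4 * B * S) / ρ * ((ρ ^ α)⁻¹ * ‖z - z₀‖ ^ (1 + α)) := by
            field_simp
      _ ≤ (4 * J * (1 + 4 * B) + 1) * (S / ρ + K * ρ) *
            ((ρ ^ α)⁻¹ * ‖z - z₀‖ ^ (1 + α)) := by gcongr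
      _ = _ := by ring

/-! ### A Liouville-type bound -/

/-- The Cauchy kernel against a decaying weight is dominated by an integrable function whose integral
does not depend on `z`. -/
theorem riesz_one_le {β : ℝ} (hβ : 0 ≤ β) (z w : ℂ) :
    (1 + ‖w‖) ^ (-β) * ‖w - z‖⁻¹ ≤ riesz 1 (w - z) + (1 + ‖w‖) ^ (-β) := by
  have h0 : 0 ≤ (1 + ‖w‖) ^ (-β) := by positivity
  have h1 : (1 + ‖w‖) ^ (-β) ≤ 1 :=
    Real.rpow_le_one_of_one_le_of_nonpos (by linarith [norm_nonneg w]) (by linarith)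
  by_cases h : ‖w - z‖ < 2
  · rw [riesz_eq _ h, Real.rpow_neg_one]
    have : 0 ≤ ‖w - z‖⁻¹ := by positivity
    nlinarith
  · push Not at h
    have : ‖w - z‖⁻¹ ≤ 1 := inv_le_one_of_one_le₀ (by linarith)
    have := riesz_nonneg 1 (w - z)
    nlinarith

theorem integrable_weight {β : ℝ} (hβ : 2 < β) :
    Integrable fun w : ℂ => (1 + ‖w‖) ^ (-β) := by
  refine integrable_one_add_norm ?_
  simpa using hβ

/-- A function of sublinear growth whose `∂/∂z̄`-derivative decays faster than quadratically is
bounded. -/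
theorem liouville_bound {β δ K C R : ℝ} (hβ : 2 < β) (hδ0 : 0 < δ) (hδ1 : δ < 1) (hK : 0 ≤ K)
    (hC : 0 ≤ C) (W : ℂ → ℂ) (hW : ContDiff ℝ 1 W)
    (h1 : ∀ w, ‖dbar (fderiv ℝ W w)‖ ≤ K * (1 + ‖w‖) ^ (-β))
    (h2 : ∀ w, R ≤ ‖w‖ → ‖W w‖ ≤ C * ‖w‖ ^ (1 - δ)) : ∃ M, ∀ w, ‖W w‖ ≤ M := by
  obtain ⟨χ, B, hB, hχ, hχ0, hχ1, hχi, hχo, hDB, hDi, hDo⟩ := exists_cutoff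
  set J := ∫ w, riesz 1 w with hJ
  set I := ∫ w : ℂ, (1 + ‖w‖) ^ (-β) with hI
  set I' := ∫ w : ℂ, (1 + ‖w‖) ^ (-(2 + δ / 2)) with hI'
  have hi : Integrable fun w : ℂ => (1 + ‖w‖) ^ (-β) := integrable_weight hβ
  have hi' : Integrable fun w : ℂ => (1 + ‖w‖) ^ (-(2 + δ / 2)) :=
    integrable_weight (by linarith)
  have hr : Integrable (riesz 1) := riesz_integrable (by norm_num)
  suffices H : ∀ z, ‖W z - W 0‖ ≤ K * (2 * J + 2 * I) + I' from
    ⟨K * (2 * J + 2 * I) + I' + ‖W 0‖, fun z => by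
      have := norm_sub_norm_le (W z) (W 0); linarith [H z]⟩
  intro z
  -- the cutoff radius `ρ`, so large that the commutator term, of size `ρ^(-δ) |z|`, is harmless
  have hlim : ∀ᶠ ρ : ℝ in Filter.atTop, 128 * C * B * ‖z‖ * ρ ^ (-(δ / 2)) < 1 := by
    have := (tendsto_rpow_neg_atTop (y := δ / 2) (by linarith)).const_mul (128 * C * B * ‖z‖)
    rw [mul_zero] at this
    exact this.eventually_lt_const one_pos
  obtain ⟨ρ, hρs, hρR, hρz⟩ := (hlim.and ((Filter.eventually_ge_atTop (2 * R)).and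
    (Filter.eventually_ge_atTop (4 * (‖z‖ + 1))))).exists
  have hz0 := norm_nonneg z
  have hρ1 : 1 ≤ ρ := by linarith
  have hρ : 0 < ρ := by linarith
  set ψ : ℂ → ℝ := fun x => χ (ρ⁻¹ • x) with hψ
  have hχc : ContDiff ℝ 1 χ := hχ.of_le (by exact_mod_cast le_top)
  have hψc : ContDiff ℝ 1 ψ := hχc.comp (by fun_prop)
  have hψd : ∀ x, DifferentiableAt ℝ ψ x := fun x => (hψc.differentiable (by norm_num)) x
  have hWd : ∀ x, DifferentiableAt ℝ W x := fun x => (hW.differentiable (by norm_num)) x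
  have hns : ∀ x : ℂ, ‖ρ⁻¹ • x‖ = ‖x‖ / ρ := fun x => by
    rw [norm_smul, norm_inv, Real.norm_of_nonneg hρ.le, inv_mul_eq_div]
  have hψf : ∀ x, fderiv ℝ ψ x = ρ⁻¹ • fderiv ℝ χ (ρ⁻¹ • x) := fun x => by
    have a1 : HasFDerivAt χ (fderiv ℝ χ (ρ⁻¹ • x)) (ρ⁻¹ • x) :=
      ((hχc.differentiable (by norm_num)) _).hasFDerivAt
    have a2 : HasFDerivAt (fun x : ℂ => ρ⁻¹ • x) (ρ⁻¹ • ContinuousLinearMap.id ℝ ℂ) x := by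
      exact (hasFDerivAt_id (𝕜 := ℝ) x).const_smul ρ⁻¹
    have a3 := (a1.comp x a2).fderiv
    have : ψ = χ ∘ (fun x : ℂ => ρ⁻¹ • x) := rfl
    rw [this, a3]
    ext v
    simp
  set V : ℂ → ℂ := fun x => ψ x • W x with hV
  have hVc : ContDiff ℝ 1 V := hψc.smul hW
  have hVs : HasCompactSupport V := by
    refine HasCompactSupport.of_support_subset_isCompact (isCompact_closedBall (0:ℂ) ρ) ?_
    intro x hx
    by_contra h
    simp only [Metric.mem_closedBall, dist_zero_right, not_le] at h
    apply hx
    have : ψ x = 0 := hχo _ (by rw [hns, le_div_iff₀ hρ]; linarith)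
    simp [hV, this]
  set G : ℂ → ℂ := fun w => dbar (fderiv ℝ V w) with hG
  have hGc : Continuous G := dbar_continuous.comp (hVc.continuous_fderiv (by norm_num))
  have hGm : Measurable G := hGc.measurable
  have hGs : HasCompactSupport G := by
    have : HasCompactSupport (fderiv ℝ V) := hVs.fderiv ℝ
    exact this.comp_left (g := dbar) (by simp [dbar])
  obtain ⟨N, hN⟩ : ∃ N, ∀ w, ‖(1 + ‖w‖) ^ 3 • G w‖ ≤ N :=
    (HasCompactSupport.smul_left (f := fun w : ℂ => (1 + ‖w‖) ^ 3) hGs).exists_bound_of_continuous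
      (by fun_prop)
  have hN0 : 0 ≤ N := (norm_nonneg _).trans (hN 0)
  have hG3 : ∀ w, ‖G w‖ ≤ N * (1 + ‖w‖) ^ (-(3:ℝ)) := fun w => by
    have := hN w
    have h1 : 0 < (1 + ‖w‖) ^ 3 := by positivity
    rw [norm_smul, Real.norm_of_nonneg h1.le] at this
    rw [Real.rpow_neg (by positivity), ← div_eq_mul_inv, le_div_iff₀ (by positivity)]
    norm_cast
    linarith
  have hint : ∀ z, Integrable fun w => G w / (w - z) := by
    intro z
    refine Integrable.mono' (((riesz_shift_integrable (s := 1) (by norm_num) z).add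
      (integrable_weight (β := 3) (by norm_num))).const_mul N)
      (hGm.div (by fun_prop)).aestronglyMeasurable (Filter.Eventually.of_forall fun w => ?_)
    rw [norm_div, div_eq_mul_inv]
    calc ‖G w‖ * ‖w - z‖⁻¹ ≤ N * (1 + ‖w‖) ^ (-(3:ℝ)) * ‖w - z‖⁻¹ := by gcongr; exact hG3 w
      _ = N * ((1 + ‖w‖) ^ (-(3:ℝ)) * ‖w - z‖⁻¹) := by ring
      _ ≤ _ := by gcongr; exact riesz_one_le (by norm_num) z w
  have hVz : V z = W z := by
    have : ψ z = 1 := hχi _ (by rw [hns, div_le_iff₀ hρ]; linarith)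
    simp [hV, this]
  have hV0 : V 0 = W 0 := by
    have : ψ 0 = 1 := hχi _ (by simp)
    simp [hV, this]
  have p1 := pompeiu V hVc hVs z
  have p0 := pompeiu V hVc hVs 0
  rw [hVz] at p1
  rw [hV0] at p0
  -- comparing the representation at `z` with that at `0` gains the factor `|z| / |w - z|`
  have hsub : ∫ w, (G w / (w - z) - G w / (w - 0)) = -(2 * π) * (W z - W 0) := by
    rw [integral_sub (hint z) (hint 0), mul_sub, ← p1, ← p0]
  have hbd : ∀ᵐ w, ‖G w / (w - z) - G w / (w - 0)‖ ≤
      K * ((riesz 1 (w - z) + (1 + ‖w‖) ^ (-β)) + (riesz 1 w + (1 + ‖w‖) ^ (-β)))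
        + (1 + ‖w‖) ^ (-(2 + δ / 2)) := by
    filter_upwards [ae_ne 0, ae_ne z] with w hw hwz
    have hw0 : 0 < ‖w‖ := norm_pos_iff.2 hw
    have hwz' : w - z ≠ 0 := sub_ne_zero.2 hwz
    have ha : 0 < ‖w - z‖ := norm_pos_iff.2 hwz'
    set k : ℂ := 1 / (w - z) - 1 / w with hk
    have e : G w / (w - z) - G w / (w - 0) = G w * k := by rw [hk, sub_zero]; ring
    have k1 : ‖k‖ ≤ ‖w - z‖⁻¹ + ‖w‖⁻¹ := by
      refine (norm_sub_le _ _).trans ?_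
      simp
    have k2 : ‖k‖ = ‖z‖ / (‖w - z‖ * ‖w‖) := by
      have : k = z / ((w - z) * w) := by rw [hk]; field_simp; ring
      rw [this, norm_div, norm_mul]
    have hGb : ‖G w‖ ≤ K * (1 + ‖w‖) ^ (-β) + 2 * ‖W w‖ * ‖fderiv ℝ ψ w‖ :=
      (norm_dbar_smul_le (hψd w) (hWd w) (hχ0 _) (hχ1 _)).trans (by linarith [h1 w])
    have part1 : K * (1 + ‖w‖) ^ (-β) * ‖k‖ ≤
        K * ((riesz 1 (w - z) + (1 + ‖w‖) ^ (-β)) + (riesz 1 w + (1 + ‖w‖) ^ (-β))) := by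
      have t1 := riesz_one_le (β := β) (by linarith) z w
      have t2 := riesz_one_le (β := β) (by linarith) 0 w
      rw [sub_zero] at t2
      have : 0 ≤ (1 + ‖w‖) ^ (-β) := by positivity
      rw [mul_assoc]
      gcongr
      nlinarith
    -- the derivative of the cutoff lives in the annulus `ρ / 2 < |w| < ρ`
    have part2 : 2 * ‖W w‖ * ‖fderiv ℝ ψ w‖ * ‖k‖ ≤ (1 + ‖w‖) ^ (-(2 + δ / 2)) := by
      have hpos : 0 ≤ (1 + ‖w‖) ^ (-(2 + δ / 2)) := by positivity
      by_cases c1 : ‖w‖ ≤ ρ / 2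
      · rw [hψf, hDi _ (by rw [hns, div_le_iff₀ hρ]; linarith)]
        simpa using hpos
      by_cases c2 : ρ ≤ ‖w‖
      · rw [hψf, hDo _ (by rw [hns, le_div_iff₀ hρ]; linarith)]
        simpa using hpos
      push Not at c1 c2
      have b1 : ‖W w‖ ≤ C * ρ ^ (1 - δ) := (h2 w (by linarith)).trans (by gcongr)
      have b2 : ‖fderiv ℝ ψ w‖ ≤ ρ⁻¹ * B := by
        rw [hψf, norm_smul, norm_inv, Real.norm_of_nonneg hρ.le]
        gcongr
        exact hDB _
      have b3 : ‖k‖ ≤ ‖z‖ / (ρ / 4 * (ρ / 2)) := by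
        rw [k2]
        have : ρ / 4 ≤ ‖w - z‖ := by
          have := norm_sub_norm_le w z
          linarith
        gcongr
      have b4 : ρ ^ (-(2 + δ / 2)) ≤ 8 * (1 + ‖w‖) ^ (-(2 + δ / 2)) := by
        have : (2 * ρ) ^ (-(2 + δ / 2)) ≤ (1 + ‖w‖) ^ (-(2 + δ / 2)) :=
          Real.rpow_le_rpow_of_nonpos (by positivity) (by linarith) (by linarith)
        rw [Real.mul_rpow (by norm_num) hρ.le] at this
        have h8 : (8:ℝ)⁻¹ ≤ 2 ^ (-(2 + δ / 2)) := by
          calc (8:ℝ)⁻¹ = 2 ^ (-(3:ℝ)) := by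
                rw [Real.rpow_neg (by norm_num)]; norm_num
            _ ≤ _ := Real.rpow_le_rpow_of_exponent_le (by norm_num) (by linarith)
        have : 8⁻¹ * ρ ^ (-(2 + δ / 2)) ≤ (1 + ‖w‖) ^ (-(2 + δ / 2)) :=
          le_trans (by gcongr) this
        linarith
      have e5 : ρ ^ (1 - δ) * ρ⁻¹ / (ρ * ρ) = ρ ^ (-(δ / 2)) * ρ ^ (-(2 + δ / 2)) := by
        rw [← Real.rpow_neg_one, ← Real.rpow_add hρ, ← Real.rpow_add hρ, div_eq_iff (by positivity)]
        have : ρ * ρ = ρ ^ (2:ℝ) := by norm_cast; ring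
        rw [this, ← Real.rpow_add hρ]
        congr 1
        ring
      calc 2 * ‖W w‖ * ‖fderiv ℝ ψ w‖ * ‖k‖
          ≤ 2 * (C * ρ ^ (1 - δ)) * (ρ⁻¹ * B) * (‖z‖ / (ρ / 4 * (ρ / 2))) := by gcongr
        _ = 16 * C * B * ‖z‖ * (ρ ^ (1 - δ) * ρ⁻¹ / (ρ * ρ)) := by field_simp; ring
        _ = 16 * C * B * ‖z‖ * ρ ^ (-(δ / 2)) * ρ ^ (-(2 + δ / 2)) := by rw [e5]; ring
        _ ≤ 16 * C * B * ‖z‖ * ρ ^ (-(δ / 2)) * (8 * (1 + ‖w‖) ^ (-(2 + δ / 2))) := by gcongr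
        _ = (128 * C * B * ‖z‖ * ρ ^ (-(δ / 2))) * (1 + ‖w‖) ^ (-(2 + δ / 2)) := by ring
        _ ≤ 1 * (1 + ‖w‖) ^ (-(2 + δ / 2)) := by gcongr
        _ = _ := one_mul _
    rw [e, norm_mul]
    calc ‖G w‖ * ‖k‖ ≤ (K * (1 + ‖w‖) ^ (-β) + 2 * ‖W w‖ * ‖fderiv ℝ ψ w‖) * ‖k‖ := by gcongr
      _ = K * (1 + ‖w‖) ^ (-β) * ‖k‖ + 2 * ‖W w‖ * ‖fderiv ℝ ψ w‖ * ‖k‖ := by ring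
      _ ≤ _ := add_le_add part1 part2
  have hs := riesz_shift_integrable (s := 1) (by norm_num) z
  have g1 : Integrable fun w => riesz 1 (w - z) + (1 + ‖w‖) ^ (-β) := hs.add hi
  have g2 : Integrable fun w => riesz 1 w + (1 + ‖w‖) ^ (-β) := hr.add hi
  have g3 : Integrable fun w => K * ((riesz 1 (w - z) + (1 + ‖w‖) ^ (-β)) +
    (riesz 1 w + (1 + ‖w‖) ^ (-β))) := (g1.add g2).const_mul K
  have := norm_integral_le_of_norm_le (g3.add hi') hbd
  simp only [Pi.add_apply] at this
  rw [hsub, integral_add g3 hi', integral_const_mul, integral_add g1 g2, integral_add hs hi,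
    integral_add hr hi, riesz_shift_integral, ← hI', ← hI, ← hJ, norm_mul, norm_neg, norm_mul,
    Complex.norm_real, Real.norm_of_nonneg Real.pi_pos.le] at this
  have hpi := Real.pi_gt_three
  have hn := norm_nonneg (W z - W 0)
  have h2 : ‖(2:ℂ)‖ = 2 := by simp
  rw [h2] at this
  have hle : ‖W z - W 0‖ ≤ 2 * π * ‖W z - W 0‖ := by nlinarith
  linarith

/-! ### Coercive maps of the plane -/

/-- A map with coercive derivative expands distances: integrate the coercivity along the segment
from `y` to `x`. -/
theorem coercive_expand {Z : ℂ → ℂ} (hZ : ContDiff ℝ 1 Z) {κ : ℝ}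
    (h : ∀ x v, κ * ‖v‖ ^ 2 ≤ inner ℝ (fderiv ℝ Z x v) v) (x y : ℂ) :
    κ * ‖x - y‖ ≤ ‖Z x - Z y‖ := by
  set v := x - y with hv
  have hd : ∀ t : ℝ, HasDerivAt (fun t : ℝ => inner ℝ (Z (y + t • v)) v)
      (inner ℝ (fderiv ℝ Z (y + t • v) v) v) t := fun t => by
    have a1 : HasFDerivAt Z (fderiv ℝ Z (y + t • v)) (y + t • v) :=
      ((hZ.differentiable (by norm_num)) _).hasFDerivAt
    have a2 : HasDerivAt (fun t : ℝ => y + t • v) v t := by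
      simpa using ((hasDerivAt_id t).smul_const v).const_add y
    have a3 := a1.comp_hasDerivAt t a2
    simpa using a3.inner ℝ (hasDerivAt_const t v)
  have hdiff : Differentiable ℝ (fun t : ℝ => inner ℝ (Z (y + t • v)) v) :=
    fun t => (hd t).differentiableAt
  have := mul_sub_le_image_sub_of_le_deriv hdiff (C := κ * ‖v‖ ^ 2)
    (fun t => by rw [(hd t).deriv]; exact h _ _) zero_le_one
  simp only [sub_zero, mul_one, one_smul, zero_smul, add_zero] at this
  have e : y + v = x := by rw [hv]; ring
  rw [e, ← inner_sub_left] at this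
  have h2 := real_inner_le_norm (Z x - Z y) v
  by_cases h0 : ‖v‖ = 0
  · rw [h0]; simp
  have h0' : 0 < ‖v‖ := lt_of_le_of_ne (norm_nonneg _) (Ne.symm h0)
  nlinarith

/-- A `C¹` map of the plane whose derivative is uniformly coercive is a `C¹` diffeomorphism. -/
theorem coercive_diffeo {Z : ℂ → ℂ} (hZ : ContDiff ℝ 1 Z) {κ : ℝ} (hκ : 0 < κ)
    (h : ∀ x v, κ * ‖v‖ ^ 2 ≤ inner ℝ (fderiv ℝ Z x v) v) :
    ∃ Φ : ℂ → ℂ, ContDiff ℝ 1 Φ ∧ (∀ x, Φ (Z x) = x) ∧ (∀ x, Z (Φ x) = x) := by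
  have hexp := coercive_expand hZ h
  have hZd : ∀ x, HasFDerivAt Z (fderiv ℝ Z x) x := fun x =>
    ((hZ.differentiable (by norm_num)) x).hasFDerivAt
  have hinj : ∀ x, Function.Injective (fderiv ℝ Z x) := fun x => by
    rw [injective_iff_map_eq_zero]
    intro v hv
    have := h x v
    rw [hv, inner_zero_left] at this
    have h1 : ‖v‖ ^ 2 ≤ 0 := by
      by_contra h2
      push Not at h2
      nlinarith
    have : ‖v‖ = 0 := by nlinarith [norm_nonneg v]
    exact norm_eq_zero.1 this
  have hsurj : ∀ x, Function.Surjective (fderiv ℝ Z x) := fun x =>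
    (LinearMap.injective_iff_surjective (f := (fderiv ℝ Z x : ℂ →ₗ[ℝ] ℂ))).1 (hinj x)
  have hZinj : Function.Injective Z := fun x y hxy => by
    have := hexp x y
    rw [hxy, sub_self, norm_zero] at this
    have : ‖x - y‖ ≤ 0 := by
      by_contra h2
      push Not at h2
      nlinarith
    exact sub_eq_zero.1 (norm_le_zero_iff.1 this)
  -- a minimiser of `|Z x - z|²` is a solution of `Z x = z`, since `DZ` is onto
  have hZsurj : Function.Surjective Z := fun z => by
    have hc : Continuous fun x => ‖Z x - z‖ ^ 2 := by
      have := hZ.continuous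
      fun_prop
    have hlim : Filter.Tendsto (fun x => ‖Z x - z‖ ^ 2) (Filter.cocompact ℂ) Filter.atTop := by
      have t1 : Filter.Tendsto (fun x : ℂ => κ * ‖x‖ - ‖Z 0 - z‖) (Filter.cocompact ℂ)
          Filter.atTop :=
        Filter.tendsto_atTop_add_const_right _ _
          ((tendsto_norm_cocompact_atTop (E := ℂ)).const_mul_atTop hκ)
      have t2 : Filter.Tendsto (fun x : ℂ => ‖Z x - z‖) (Filter.cocompact ℂ) Filter.atTop := by
        refine Filter.tendsto_atTop_mono (fun x => ?_) t1
        have a := hexp x 0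
        rw [sub_zero] at a
        have b := norm_sub_le (Z x - z) (Z 0 - z)
        rw [sub_sub_sub_cancel_right] at b
        linarith
      exact (Filter.tendsto_pow_atTop (by norm_num)).comp t2
    obtain ⟨x, hx⟩ := hc.exists_forall_le hlim
    refine ⟨x, ?_⟩
    have hmin : IsLocalMin (fun x => ‖Z x - z‖ ^ 2) x := Filter.Eventually.of_forall hx
    have hd : HasFDerivAt (fun x => ‖Z x - z‖ ^ 2) _ x := ((hZd x).sub_const z).norm_sq
    have h0 := hmin.hasFDerivAt_eq_zero hd
    obtain ⟨v, hv⟩ := hsurj x (Z x - z)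
    have := DFunLike.congr_fun h0 v
    have : (2:ℕ) • inner ℝ (Z x - z) (fderiv ℝ Z x v) = 0 := this
    rw [hv, real_inner_self_eq_norm_sq, nsmul_eq_mul, Nat.cast_ofNat] at this
    have : ‖Z x - z‖ = 0 := by nlinarith
    exact sub_eq_zero.1 (norm_eq_zero.1 this)
  let Ze : ℂ ≃ ℂ := Equiv.ofBijective Z ⟨hZinj, hZsurj⟩
  have hΦ : Continuous Ze.symm := by
    have : LipschitzWith (Real.toNNReal κ⁻¹) Ze.symm := by
      refine LipschitzWith.of_dist_le_mul fun a b => ?_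
      rw [dist_eq_norm, dist_eq_norm]
      have := hexp (Ze.symm a) (Ze.symm b)
      have e1 : Z (Ze.symm a) = a := Ze.apply_symm_apply a
      have e2 : Z (Ze.symm b) = b := Ze.apply_symm_apply b
      rw [e1, e2] at this
      rw [Real.coe_toNNReal _ (by positivity)]
      rw [inv_mul_eq_div, le_div_iff₀ hκ]
      linarith
    exact this.continuous
  let Zh : ℂ ≃ₜ ℂ := ⟨Ze, hZ.continuous, hΦ⟩
  let D : ℂ → (ℂ ≃L[ℝ] ℂ) := fun x =>
    (LinearEquiv.ofInjectiveEndo (fderiv ℝ Z x : ℂ →ₗ[ℝ] ℂ) (hinj x)).toContinuousLinearEquiv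
  have hD : ∀ x, HasFDerivAt Zh (D x : ℂ →L[ℝ] ℂ) x := fun x => by
    have : (D x : ℂ →L[ℝ] ℂ) = fderiv ℝ Z x := by
      ext v
      rfl
    rw [this]
    exact hZd x
  exact ⟨Zh.symm, Zh.contDiff_symm hD hZ, fun x => Ze.symm_apply_apply x,
    fun x => Ze.apply_symm_apply x⟩

/-! ### Linear algebra of the phase -/

theorem inner_re_im (a b : ℂ) : inner ℝ a b = a.re * b.re + a.im * b.im := by
  simp [Complex.inner]
  ring

theorem clm_re (D : ℂ →L[ℝ] ℂ) (v : ℂ) :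
    (D v).re = v.re * (D 1).re + v.im * (D Complex.I).re := by
  conv_lhs => rw [show v = v.re • (1:ℂ) + v.im • Complex.I by simp]
  rw [map_add, map_smul, map_smul]
  simp

theorem clm_im (D : ℂ →L[ℝ] ℂ) (v : ℂ) :
    (D v).im = v.re * (D 1).im + v.im * (D Complex.I).im := by
  conv_lhs => rw [show v = v.re • (1:ℂ) + v.im • Complex.I by simp]
  rw [map_add, map_smul, map_smul]
  simp

/-- The algebraic content of `F(D) = φ` for a symmetric real-linear map `D` of the plane and
`φ ∈ (0, π)`: with `λ₁, λ₂` the eigenvalues of `D`, `sin φ (1 - λ₁ λ₂) = cos φ (λ₁ + λ₂)` and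
`sin φ λᵢ + cos φ ≥ 0`. -/
structure HasPhase (D : ℂ →L[ℝ] ℂ) (φ : ℝ) : Prop where
  symm : (D 1).im = (D Complex.I).re
  det : sin φ * (1 - ((D 1).re * (D Complex.I).im - (D 1).im ^ 2)) =
    cos φ * ((D 1).re + (D Complex.I).im)
  nonneg : ∀ v, 0 ≤ sin φ * inner ℝ (D v) v + cos φ * ‖v‖ ^ 2

/-- A symmetric `2 × 2` form with nonnegative trace and determinant is positive semidefinite. -/
theorem psd_two {p q r x y : ℝ} (ht : 0 ≤ p + r) (hd : 0 ≤ p * r - q ^ 2) :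
    0 ≤ p * x ^ 2 + 2 * q * x * y + r * y ^ 2 := by
  have hp : 0 ≤ p := by
    by_contra h
    push Not at h
    nlinarith [sq_nonneg q]
  rcases hp.eq_or_lt with h | h
  · subst h
    have : q = 0 := by nlinarith [sq_nonneg q]
    subst this
    have : 0 ≤ r := by linarith
    have := mul_nonneg this (sq_nonneg y)
    linarith
  · have : 0 ≤ p * (p * x ^ 2 + 2 * q * x * y + r * y ^ 2) := by
      have e : p * (p * x ^ 2 + 2 * q * x * y + r * y ^ 2) =
        (p * x + q * y) ^ 2 + (p * r - q ^ 2) * y ^ 2 := by ring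
      rw [e]
      positivity
    exact nonneg_of_mul_nonneg_right this h

/-- The phase equation in terms of the numbers `l₁, l₂` with the trace and the determinant of `D` as
sum and product. -/
theorem hasPhase_of_eigenvalues {D : ℂ →L[ℝ] ℂ} {φ l₁ l₂ : ℝ} (hs : (D 1).im = (D Complex.I).re)
    (ht : l₁ + l₂ = (D 1).re + (D Complex.I).im)
    (hd : l₁ * l₂ = (D 1).re * (D Complex.I).im - (D 1).im ^ 2)
    (hφ : arctan l₁ + arctan l₂ = φ) : HasPhase D φ := by
  have c1 := cos_arctan_pos l₁
  have c2 := cos_arctan_pos l₂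
  have t1 : l₁ * cos (arctan l₁) = sin (arctan l₁) := by
    rw [← tan_mul_cos c1.ne', tan_arctan]
  have t2 : l₂ * cos (arctan l₂) = sin (arctan l₂) := by
    rw [← tan_mul_cos c2.ne', tan_arctan]
  have q1 := sin_sq_add_cos_sq (arctan l₁)
  have q2 := sin_sq_add_cos_sq (arctan l₂)
  have hsin : sin φ = sin (arctan l₁) * cos (arctan l₂) + cos (arctan l₁) * sin (arctan l₂) := by
    rw [← hφ, sin_add]
  have hcos : cos φ = cos (arctan l₁) * cos (arctan l₂) - sin (arctan l₁) * sin (arctan l₂) := by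
    rw [← hφ, cos_add]
  generalize cos (arctan l₁) = C1 at *
  generalize cos (arctan l₂) = C2 at *
  rw [← t1] at q1 hsin hcos
  rw [← t2] at q2 hsin hcos
  have e1 : (sin φ * l₁ + cos φ) * C1 = C2 := by
    rw [hsin, hcos]
    linear_combination C2 * q1
  have e2 : (sin φ * l₂ + cos φ) * C2 = C1 := by
    rw [hsin, hcos]
    linear_combination C1 * q2
  have n1 : 0 < sin φ * l₁ + cos φ := by
    by_contra h
    push Not at h
    nlinarith
  have n2 : 0 < sin φ * l₂ + cos φ := by
    by_contra h
    push Not at h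
    nlinarith
  refine ⟨hs, ?_, fun v => ?_⟩
  · rw [← ht, ← hd, hsin, hcos]
    ring
  · set a := (D 1).re
    set d := (D Complex.I).im
    set b := (D 1).im with hb
    have := psd_two (p := sin φ * a + cos φ) (q := sin φ * b) (r := sin φ * d + cos φ)
      (x := v.re) (y := v.im)
      (by
        have : sin φ * a + cos φ + (sin φ * d + cos φ) =
          (sin φ * l₁ + cos φ) + (sin φ * l₂ + cos φ) := by
          linear_combination (-sin φ) * ht
        rw [this]; positivity)
      (by
        have : (sin φ * a + cos φ) * (sin φ * d + cos φ) - (sin φ * b) ^ 2 =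
          (sin φ * l₁ + cos φ) * (sin φ * l₂ + cos φ) := by
          linear_combination -(sin φ) ^ 2 * hd - sin φ * cos φ * ht
        rw [this]; positivity)
    rw [inner_re_im, clm_re, clm_im, ← Complex.normSq_eq_norm_sq, Complex.normSq_apply, ← hs]
    linarith

/-- The rotated gradient map `x ↦ cos (φ₀/2) x + sin (φ₀/2) D x` is coercive when the phase of `D`
is close to `φ₀`. -/
theorem HasPhase.coercive {D : ℂ →L[ℝ] ℂ} {φ φ₀ κ : ℝ} (h : HasPhase D φ) (hφ : 0 < sin φ)
    (hκ : 0 ≤ κ) (hs : 0 ≤ sin (φ₀ / 2)) (hd : κ ≤ sin (φ - φ₀ / 2)) (v : ℂ) :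
    κ * ‖v‖ ^ 2 ≤ inner ℝ (cos (φ₀ / 2) • v + sin (φ₀ / 2) • D v) v := by
  have h1 := h.nonneg v
  rw [inner_add_left, real_inner_smul_left, real_inner_smul_left, real_inner_self_eq_norm_sq]
  rw [sin_sub] at hd
  have hφ1 := sin_le_one φ
  have h3 := mul_nonneg hs h1
  have hv : 0 ≤ ‖v‖ ^ 2 := by positivity
  have h4 := mul_le_mul_of_nonneg_right hd hv
  have key : sin φ * (κ * ‖v‖ ^ 2) ≤
      sin φ * (cos (φ₀ / 2) * ‖v‖ ^ 2 + sin (φ₀ / 2) * inner ℝ (D v) v) := by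
    have : sin φ * (κ * ‖v‖ ^ 2) ≤ 1 * (κ * ‖v‖ ^ 2) := by gcongr
    nlinarith
  exact le_of_mul_le_mul_left key hφ

/-- All the trigonometric lower bounds needed below hold uniformly for phases `φ` and rotation angles
`φ₀ / 2` with `φ, φ₀` close to `θ ∈ (0, π)`. -/
theorem near_theta {θ : ℝ} (h0 : 0 < θ) (hπ : θ < π) : ∃ κ η : ℝ, 0 < κ ∧ κ ≤ 1 ∧ 0 < η ∧
    ∀ φ φ₀ : ℝ, |φ - θ| ≤ η → |φ₀ - θ| ≤ η →
      κ ≤ sin φ ∧ κ ≤ sin (φ₀ / 2) ∧ 2 * κ ≤ sin (φ - φ₀ / 2) := by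
  have s1 : 0 < sin θ := sin_pos_of_pos_of_lt_pi h0 hπ
  have s2 : 0 < sin (θ / 2) := sin_pos_of_pos_of_lt_pi (by linarith) (by linarith)
  set m := min (sin θ) (sin (θ / 2)) with hm
  have hm0 : 0 < m := lt_min s1 s2
  have hm1 : m ≤ sin θ := min_le_left _ _
  have hm2 : m ≤ sin (θ / 2) := min_le_right _ _
  have hlip : ∀ a b : ℝ, sin a - |b - a| ≤ sin b := fun a b => by
    have := abs_sin_sub_sin_le a b
    have := (abs_le.1 (abs_sin_sub_sin_le a b)).2
    rw [abs_sub_comm a b] at this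
    linarith
  refine ⟨m / 4, m / 4, by linarith, by linarith [sin_le_one θ], by linarith,
    fun φ φ₀ h1 h2 => ⟨?_, ?_, ?_⟩⟩
  · linarith [hlip θ φ]
  · have := hlip (θ / 2) (φ₀ / 2)
    have e : |φ₀ / 2 - θ / 2| = |φ₀ - θ| / 2 := by
      rw [← sub_div, abs_div, abs_two]
    linarith
  · have := hlip (θ / 2) (φ - φ₀ / 2)
    have e : |φ - φ₀ / 2 - θ / 2| ≤ |φ - θ| + |φ₀ - θ| / 2 := by
      have : φ - φ₀ / 2 - θ / 2 = (φ - θ) - (φ₀ - θ) / 2 := by ring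
      rw [this]
      refine (abs_sub _ _).trans ?_
      rw [abs_div, abs_two]
    linarith

/-- In the rotated coordinates the conjugate of the rotated gradient has a `∂/∂z̄`-derivative
controlled by the phase defect. -/
theorem HasPhase.dbar_le {D E : ℂ →L[ℝ] ℂ} {φ φ₀ κ : ℝ} (h : HasPhase D φ) (hκ : 0 < κ)
    (hκ1 : κ ≤ 1) (hφ : κ ≤ sin φ) (hs : κ ≤ sin (φ₀ / 2))
    (hco : ∀ v, κ * ‖v‖ ^ 2 ≤ inner ℝ (cos (φ₀ / 2) • v + sin (φ₀ / 2) • D v) v)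
    (hE : ∀ v, E (cos (φ₀ / 2) • v + sin (φ₀ / 2) • D v) =
      (starRingEnd ℂ) (cos (φ₀ / 2) • D v - sin (φ₀ / 2) • v)) :
    ‖dbar E‖ ≤ 4 / κ ^ 4 * |φ - φ₀| := by
  have hsin0 : sin φ₀ = 2 * sin (φ₀ / 2) * cos (φ₀ / 2) := by
    rw [← sin_two_mul]; ring_nf
  have hcos0 : cos φ₀ = cos (φ₀ / 2) ^ 2 - sin (φ₀ / 2) ^ 2 := by
    rw [← cos_two_mul']; ring_nf
  have hc1 := cos_le_one (φ₀ / 2)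
  have hc2 := neg_one_le_cos (φ₀ / 2)
  have hdet := h.det
  have hsym := h.symm
  have hsd : |sin (φ - φ₀)| ≤ |φ - φ₀| := abs_sin_le_abs
  rw [sin_sub] at hsd
  generalize sin (φ₀ / 2) = s at *
  generalize cos (φ₀ / 2) = c at *
  set a := (D 1).re with ha
  set d := (D Complex.I).im with hdd
  set b := (D 1).im with hb
  set p := c + s * a with hp
  set q := s * b with hq
  set r := c + s * d with hr
  set Δ := p * r - q ^ 2 with hΔ
  have hBre : ∀ x y : ℝ, (c • (⟨x, y⟩ : ℂ) + s • D ⟨x, y⟩) = ⟨p * x + q * y, q * x + r * y⟩ := by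
    intro x y
    apply Complex.ext
    · simp only [Complex.add_re, Complex.real_smul, Complex.re_ofReal_mul, clm_re D ⟨x, y⟩]
      rw [← hsym]; ring
    · simp only [Complex.add_im, Complex.real_smul, Complex.im_ofReal_mul, clm_im D ⟨x, y⟩]
      ring
  have hform : ∀ x y : ℝ, κ * (x ^ 2 + y ^ 2) ≤ (p * x + q * y) * x + (q * x + r * y) * y := by
    intro x y
    have := hco ⟨x, y⟩
    rw [hBre, inner_re_im, ← Complex.normSq_eq_norm_sq, Complex.normSq_apply] at this
    simp only at this
    linarith
  have hpκ : κ ≤ p := by simpa using hform 1 0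
  have hrκ : κ ≤ r := by simpa using hform 0 1
  have f1 := hform r (-q)
  have f2 := hform (-q) p
  have g1 : κ * r ≤ Δ := by
    have : r * (κ * r) ≤ r * Δ := by nlinarith [mul_nonneg hκ.le (sq_nonneg q)]
    exact le_of_mul_le_mul_left this (by linarith)
  have g2 : κ * p ≤ Δ := by
    have : p * (κ * p) ≤ p * Δ := by nlinarith [mul_nonneg hκ.le (sq_nonneg q)]
    exact le_of_mul_le_mul_left this (by linarith)
  have hΔ0 : 0 < Δ := lt_of_lt_of_le (mul_pos hκ (lt_of_lt_of_le hκ hpκ)) g2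
  -- the values of `E` on the standard basis, up to the factor `Δ`
  have E1 : (Δ : ℂ) * E 1 = (starRingEnd ℂ) (c • D ⟨r, -q⟩ - s • ⟨r, -q⟩) := by
    rw [← hE, hBre, ← Complex.real_smul, ← map_smul]
    congr 1
    apply Complex.ext
    · simp only [Complex.smul_re, Complex.one_re, smul_eq_mul, hΔ]; ring
    · simp only [Complex.smul_im, Complex.one_im, smul_eq_mul]; ring
  have E2 : (Δ : ℂ) * E Complex.I = (starRingEnd ℂ) (c • D ⟨-q, p⟩ - s • ⟨-q, p⟩) := by
    rw [← hE, hBre, ← Complex.real_smul, ← map_smul]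
    congr 1
    apply Complex.ext
    · simp only [Complex.smul_re, Complex.I_re, smul_eq_mul]; ring
    · simp only [Complex.smul_im, Complex.I_im, smul_eq_mul, hΔ]; ring
  have hsum : (Δ : ℂ) * dbar E = ((cos φ₀ * (a + d) - sin φ₀ * (1 - (a * d - b ^ 2)) : ℝ) : ℂ) := by
    have : (Δ : ℂ) * dbar E = (Δ : ℂ) * E 1 + Complex.I * ((Δ : ℂ) * E Complex.I) := by
      simp only [dbar]; ring
    rw [this, E1, E2, hcos0, hsin0]
    apply Complex.ext
    · simp only [Complex.add_re, Complex.mul_re, Complex.conj_re, Complex.conj_im, Complex.sub_re,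
        Complex.sub_im, Complex.smul_re, Complex.smul_im, smul_eq_mul,
        clm_re D ⟨r, -q⟩, clm_re D ⟨-q, p⟩, clm_im D ⟨-q, p⟩, Complex.I_re, Complex.I_im,
        Complex.ofReal_re]
      rw [← hsym, ← ha, ← hb, ← hdd, hp, hq, hr]
      ring
    · simp only [Complex.add_im, Complex.mul_im, Complex.conj_re, Complex.conj_im, Complex.sub_re,
        Complex.sub_im, Complex.smul_re, Complex.smul_im, smul_eq_mul,
        clm_im D ⟨r, -q⟩, clm_re D ⟨-q, p⟩, clm_im D ⟨-q, p⟩, Complex.I_re, Complex.I_im,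
        Complex.ofReal_im]
      rw [← hsym, ← ha, ← hb, ← hdd, hp, hq, hr]
      ring
  have hn : Δ * ‖dbar E‖ = |cos φ₀ * (a + d) - sin φ₀ * (1 - (a * d - b ^ 2))| := by
    have := congrArg norm hsum
    rwa [norm_mul, Complex.norm_real, Complex.norm_real, Real.norm_of_nonneg hΔ0.le] at this
  have hn2 : sin φ * (Δ * ‖dbar E‖) =
      |a + d| * |sin φ * cos φ₀ - cos φ * sin φ₀| := by
    rw [hn, ← abs_mul, ← abs_of_nonneg (hκ.le.trans hφ), ← abs_mul, abs_of_nonneg (hκ.le.trans hφ)]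
    congr 1
    linear_combination (-sin φ₀) * hdet
  have hT : κ ^ 3 * |a + d| ≤ 4 * Δ := by
    have : s * |a + d| ≤ p + r + 2 := by
      have e : s * |a + d| = |p + r - 2 * c| := by
        rw [← abs_of_pos (lt_of_lt_of_le hκ hs), ← abs_mul]
        congr 1
        rw [hp, hr]
        ring
      rw [e, abs_le]
      constructor <;> linarith
    have h5 : κ * |a + d| ≤ p + r + 2 := le_trans (by gcongr) this
    have h6 : κ * (p + r + 2) ≤ 2 * (p + r) := by
      have : κ * (p + r) ≤ 1 * (p + r) := mul_le_mul_of_nonneg_right hκ1 (by linarith)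
      linarith
    have h7 : κ * (p + r) ≤ 2 * Δ := by linarith
    have h8 : κ * (κ * |a + d|) ≤ 2 * (p + r) := le_trans (by gcongr) h6
    calc κ ^ 3 * |a + d| = κ * (κ * (κ * |a + d|)) := by ring
      _ ≤ κ * (2 * (p + r)) := by gcongr
      _ ≤ 4 * Δ := by linarith
  rw [div_mul_eq_mul_div, le_div_iff₀ (by positivity)]
  have h9 : κ ^ 3 * (κ * (Δ * ‖dbar E‖)) ≤ Δ * (4 * |φ - φ₀|) := by
    calc κ ^ 3 * (κ * (Δ * ‖dbar E‖)) ≤ κ ^ 3 * (sin φ * (Δ * ‖dbar E‖)) := by gcongr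
      _ = (κ ^ 3 * |a + d|) * |sin φ * cos φ₀ - cos φ * sin φ₀| := by rw [hn2]; ring
      _ ≤ (4 * Δ) * |φ - φ₀| := by gcongr
      _ = _ := by ring
  have : Δ * (‖dbar E‖ * κ ^ 4) ≤ Δ * (4 * |φ - φ₀|) := by
    calc _ = κ ^ 3 * (κ * (Δ * ‖dbar E‖)) := by ring
      _ ≤ _ := h9
  exact le_of_mul_le_mul_left this hΔ0

/-- For a quadratic solution the conjugate of the rotated gradient is complex linear in the
rotated coordinate. -/
theorem HasPhase.complex_linear {A : ℂ →L[ℝ] ℂ} {θ κ : ℝ} (h : HasPhase A θ) (hκ : 0 < κ)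
    (hκ1 : κ ≤ 1) (hφ : κ ≤ sin θ) (hs : κ ≤ sin (θ / 2))
    (hco : ∀ v, κ * ‖v‖ ^ 2 ≤ inner ℝ (cos (θ / 2) • v + sin (θ / 2) • A v) v) :
    ∃ m : ℂ, ∃ L : ℝ, 0 < L ∧
      (∀ v, (starRingEnd ℂ) (cos (θ / 2) • A v - sin (θ / 2) • v) =
        m * (cos (θ / 2) • v + sin (θ / 2) • A v)) ∧
      ∀ v, ‖v‖ ≤ L * ‖(starRingEnd ℂ) (cos (θ / 2) • v) - m * (sin (θ / 2) • v)‖ := by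
  set c := cos (θ / 2) with hc
  set s := sin (θ / 2) with hs'
  set B : ℂ →L[ℝ] ℂ := c • ContinuousLinearMap.id ℝ ℂ + s • A with hB
  have hBv : ∀ v, B v = c • v + s • A v := fun v => by simp [hB]
  have hinj : Function.Injective B := by
    rw [injective_iff_map_eq_zero]
    intro v hv
    have := hco v
    rw [← hBv, hv, inner_zero_left] at this
    have h1 : ‖v‖ ^ 2 ≤ 0 := by
      by_contra h2
      push Not at h2
      nlinarith
    have : ‖v‖ = 0 := by nlinarith [norm_nonneg v]
    exact norm_eq_zero.1 this
  let Be : ℂ ≃L[ℝ] ℂ :=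
    (LinearEquiv.ofInjectiveEndo (B : ℂ →ₗ[ℝ] ℂ) hinj).toContinuousLinearEquiv
  have hBe : ∀ v, Be v = B v := fun v => rfl
  let E : ℂ →L[ℝ] ℂ := (Complex.conjCLE : ℂ →L[ℝ] ℂ).comp
    ((c • A - s • ContinuousLinearMap.id ℝ ℂ).comp (Be.symm : ℂ →L[ℝ] ℂ))
  have hE : ∀ v, E (c • v + s • A v) = (starRingEnd ℂ) (c • A v - s • v) := fun v => by
    have : Be.symm (c • v + s • A v) = v := by
      rw [← hBv, ← hBe]; exact Be.symm_apply_apply v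
    change (starRingEnd ℂ) (c • A (Be.symm (c • v + s • A v)) - s • Be.symm (c • v + s • A v)) = _
    rw [this]
  have hdb := h.dbar_le hκ hκ1 hφ hs hco hE
  rw [sub_self, abs_zero, mul_zero, norm_le_zero_iff, dbar] at hdb
  have hI : E Complex.I = Complex.I * E 1 := by
    linear_combination (-Complex.I) * hdb + E Complex.I * Complex.I_mul_I
  have hlin : ∀ v, E v = E 1 * v := fun v => by
    conv_lhs => rw [show v = v.re • (1:ℂ) + v.im • Complex.I by simp]
    rw [map_add, map_smul, map_smul, hI, Complex.real_smul, Complex.real_smul]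
    conv_rhs => rw [← Complex.re_add_im v]
    ring
  have hm : ∀ v, (starRingEnd ℂ) (c • A v - s • v) = E 1 * (c • v + s • A v) := fun v => by
    rw [← hE, hlin]
  refine ⟨E 1, ‖B‖ + 1, by positivity, hm, fun v => ?_⟩
  obtain ⟨x, rfl⟩ := Be.surjective v
  have e1 : (starRingEnd ℂ) (c • Be x) - E 1 * (s • Be x) = (starRingEnd ℂ) x := by
    have h1 : E 1 * (s • Be x) = s • (starRingEnd ℂ) (c • A x - s • x) := by
      rw [hm, hBe, hBv]
      simp only [Complex.real_smul]
      ring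
    rw [h1, hBe, hBv]
    have h2 : (c:ℂ) ^ 2 + (s:ℂ) ^ 2 = 1 := by
      norm_cast
      rw [hc, hs', cos_sq_add_sin_sq]
    simp only [Complex.real_smul, map_add, map_sub, map_mul, Complex.conj_ofReal]
    linear_combination (starRingEnd ℂ) x * h2
  rw [e1, RCLike.norm_conj]
  calc ‖Be x‖ = ‖B x‖ := by rw [hBe]
    _ ≤ ‖B‖ * ‖x‖ := B.le_opNorm x
    _ ≤ (‖B‖ + 1) * ‖x‖ := by gcongr; linarith

/-! ### Gradient interpolation and coercive extension -/

/-- Interpolation: a function of growth `2 - ε` whose Hessian is bounded below has a gradient of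
growth `1 - ε/2`. -/
theorem grad_bound {w : ℂ → ℝ} {q : ℂ → ℂ} {K C ε R : ℝ} (hε : 0 < ε) (hε1 : ε < 1) (hK : 0 ≤ K)
    (hC : 0 ≤ C) (hR : 1 ≤ R) (hw : ∀ z, HasFDerivAt w (innerSL ℝ (q z)) z) (hq : ContDiff ℝ 1 q)
    (hH : ∀ x, R ≤ ‖x‖ → ∀ v, -K * ‖v‖ ^ 2 ≤ inner ℝ (fderiv ℝ q x v) v)
    (hb : ∀ x, R ≤ ‖x‖ → |w x| ≤ C * ‖x‖ ^ (2 - ε)) (x : ℂ) (hx : 2 * R ≤ ‖x‖) :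
    ‖q x‖ ≤ (10 * C + K) * ‖x‖ ^ (1 - ε / 2) := by
  set r := ‖x‖ with hr
  have hr1 : 1 ≤ r := by linarith
  have hr0 : 0 < r := by linarith
  by_cases hq0 : ‖q x‖ = 0
  · rw [hq0]; positivity
  have hq1 : 0 < ‖q x‖ := lt_of_le_of_ne (norm_nonneg _) (Ne.symm hq0)
  set v : ℂ := ‖q x‖⁻¹ • q x with hv
  have hv1 : ‖v‖ = 1 := by
    rw [hv, norm_smul, norm_inv, norm_norm, inv_mul_cancel₀ hq0]
  have hqv : inner ℝ (q x) v = ‖q x‖ := by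
    rw [hv, real_inner_smul_right, real_inner_self_eq_norm_sq]
    field_simp
  -- the length which balances the two error terms
  set t := r ^ (1 - ε / 2) / 2 with ht
  have hrp : 0 < r ^ (1 - ε / 2) := by positivity
  have ht0 : 0 < t := by positivity
  have htr : t ≤ r / 2 := by
    have : r ^ (1 - ε / 2) ≤ r ^ (1:ℝ) := Real.rpow_le_rpow_of_exponent_le hr1 (by linarith)
    rw [Real.rpow_one] at this
    linarith
  have hpath : ∀ s : ℝ, HasDerivAt (fun s : ℝ => x + s • v) v s := fun s => by
    simpa using ((hasDerivAt_id s).smul_const v).const_add x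
  have hh : ∀ s : ℝ, HasDerivAt (fun s : ℝ => w (x + s • v)) (inner ℝ (q (x + s • v)) v) s :=
    fun s => by
      have := (hw (x + s • v)).comp_hasDerivAt s (hpath s)
      exact this
  have hh' : ∀ s : ℝ, HasDerivAt (fun s : ℝ => inner ℝ (q (x + s • v)) v)
      (inner ℝ (fderiv ℝ q (x + s • v) v) v) s := fun s => by
    have a1 : HasFDerivAt q (fderiv ℝ q (x + s • v)) (x + s • v) :=
      ((hq.differentiable (by norm_num)) _).hasFDerivAt
    have a3 := a1.comp_hasDerivAt s (hpath s)
    simpa using a3.inner ℝ (hasDerivAt_const s v)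
  have hfar : ∀ s, 0 ≤ s → s ≤ t → R ≤ ‖x + s • v‖ := fun s hs0 hst => by
    have h1 := norm_sub_le (x + s • v) (s • v)
    rw [add_sub_cancel_right, norm_smul, hv1, Real.norm_of_nonneg hs0] at h1
    linarith
  have hmono : ∀ s, 0 ≤ s → s ≤ t → ‖q x‖ - K * t ≤ inner ℝ (q (x + s • v)) v := by
    intro s hs0 hst
    have := Convex.mul_sub_le_image_sub_of_le_deriv (convex_Icc (0:ℝ) t)
      (f := fun s : ℝ => inner ℝ (q (x + s • v)) v) (C := -K)
      (fun s _ => (hh' s).continuousAt.continuousWithinAt)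
      (fun s _ => (hh' s).differentiableAt.differentiableWithinAt)
      (fun s hs => by
        rw [interior_Icc] at hs
        rw [(hh' s).deriv]
        have := hH _ (hfar s hs.1.le hs.2.le) v
        rw [hv1] at this
        linarith) 0 ⟨le_rfl, ht0.le⟩ s ⟨hs0, hst⟩ hs0
    simp only [zero_smul, add_zero, hqv] at this
    have : K * s ≤ K * t := by gcongr
    linarith
  have hmain := Convex.mul_sub_le_image_sub_of_le_deriv (convex_Icc (0:ℝ) t)
      (f := fun s : ℝ => w (x + s • v)) (C := ‖q x‖ - K * t)
      (fun s _ => (hh s).continuousAt.continuousWithinAt)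
      (fun s _ => (hh s).differentiableAt.differentiableWithinAt)
      (fun s hs => by
        rw [interior_Icc] at hs
        rw [(hh s).deriv]
        exact hmono s hs.1.le hs.2.le) 0 ⟨le_rfl, ht0.le⟩ t ⟨ht0.le, le_rfl⟩ ht0.le
  simp only [zero_smul, add_zero, sub_zero] at hmain
  have hb0 := hb x (by linarith)
  have hb1 := hb _ (hfar t ht0.le le_rfl)
  have hup : ‖x + t • v‖ ≤ 2 * r := by
    have := norm_add_le x (t • v)
    rw [norm_smul, hv1, Real.norm_of_nonneg ht0.le] at this
    linarith
  have h4 : ‖x + t • v‖ ^ (2 - ε) ≤ 4 * r ^ (2 - ε) := by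
    calc ‖x + t • v‖ ^ (2 - ε) ≤ (2 * r) ^ (2 - ε) := by
          apply Real.rpow_le_rpow (norm_nonneg _) hup (by linarith)
      _ = 2 ^ (2 - ε) * r ^ (2 - ε) := Real.mul_rpow (by norm_num) hr0.le
      _ ≤ 2 ^ (2:ℝ) * r ^ (2 - ε) := by
          gcongr
          · norm_num
          · linarith
      _ = 4 * r ^ (2 - ε) := by norm_num
  have hsq : r ^ (2 - ε) = r ^ (1 - ε / 2) * r ^ (1 - ε / 2) := by
    rw [← Real.rpow_add hr0]; congr 1; ring
  set P := r ^ (1 - ε / 2) with hP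
  rw [hsq] at h4 hb0
  have hdiff : w (x + t • v) - w x ≤ 5 * C * (P * P) := by
    have a1 := (abs_le.1 hb1).2
    have a2 := (abs_le.1 hb0).1
    have a3 : C * ‖x + t • v‖ ^ (2 - ε) ≤ C * (4 * (P * P)) := by gcongr
    linarith
  have : (‖q x‖ - K * t) * t ≤ 5 * C * (P * P) := hmain.trans hdiff
  rw [ht] at this
  have h5 : P * (‖q x‖ - K * (P / 2)) ≤ P * (10 * C * P) := by linarith
  have h6 := le_of_mul_le_mul_left h5 hrp
  nlinarith [mul_nonneg hK hrp.le]

/-- The perturbation `q` can be modified in a ball so that all the rotated gradient maps with angle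
near `θ` become coercive on the whole plane. -/
theorem exists_extension {θ κ η C ε R₁ : ℝ} (hκ : 0 < κ) (hε : 0 < ε)
    (hη : 0 ≤ η)
    (hnear : ∀ φ φ₀ : ℝ, |φ - θ| ≤ η → |φ₀ - θ| ≤ η →
      κ ≤ sin φ ∧ κ ≤ sin (φ₀ / 2) ∧ 2 * κ ≤ sin (φ - φ₀ / 2))
    {A : ℂ →L[ℝ] ℂ} (hA : HasPhase A θ) {F : ℂ → ℝ} {q : ℂ → ℂ} (hq : ContDiff ℝ 1 q) (hC : 0 ≤ C)
    (hF : ∀ x, R₁ ≤ ‖x‖ → |F x| ≤ η)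
    (hP : ∀ x, R₁ ≤ ‖x‖ → HasPhase (A + fderiv ℝ q x) (θ + F x))
    (hb : ∀ x, R₁ ≤ ‖x‖ → ‖q x‖ ≤ C * ‖x‖ ^ (1 - ε / 2)) (hε1 : ε < 1) :
    ∃ R : ℝ, R₁ ≤ R ∧ 1 ≤ R ∧ ∃ p : ℂ → ℂ, ContDiff ℝ 1 p ∧ (∀ x, R ≤ ‖x‖ → p x = q x) ∧
      ∀ φ₀, |φ₀ - θ| ≤ η → ∀ x v, κ * ‖v‖ ^ 2 ≤
        inner ℝ (cos (φ₀ / 2) • v + sin (φ₀ / 2) • (A v + fderiv ℝ p x v)) v := by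
  obtain ⟨χ, B, hB, hχ, hχ0, hχ1, hχi, hχo, hDB, hDi, hDo⟩ := exists_cutoff
  have hlim : ∀ᶠ ρ : ℝ in Filter.atTop, B * C * ρ ^ (-(ε / 2)) < κ := by
    have := (tendsto_rpow_neg_atTop (y := ε / 2) (by linarith)).const_mul (B * C)
    rw [mul_zero] at this
    exact this.eventually_lt_const hκ
  obtain ⟨R, hRs, hRR, hR1⟩ := (hlim.and ((Filter.eventually_ge_atTop (2 * |R₁|)).and
    (Filter.eventually_ge_atTop 1))).exists
  have hRabs := le_abs_self R₁
  have hRabs' := abs_nonneg R₁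
  have hR0 : 0 < R := by linarith
  set ψ : ℂ → ℝ := fun x => 1 - χ (R⁻¹ • x) with hψ
  have hχc : ContDiff ℝ 1 χ := hχ.of_le (by exact_mod_cast le_top)
  have hψc : ContDiff ℝ 1 ψ := contDiff_const.sub (hχc.comp (by fun_prop))
  have hψd : ∀ x, DifferentiableAt ℝ ψ x := fun x => (hψc.differentiable (by norm_num)) x
  have hqd : ∀ x, DifferentiableAt ℝ q x := fun x => (hq.differentiable (by norm_num)) x
  have hns : ∀ x : ℂ, ‖R⁻¹ • x‖ = ‖x‖ / R := fun x => by
    rw [norm_smul, norm_inv, Real.norm_of_nonneg hR0.le, inv_mul_eq_div]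
  have hψf : ∀ x, fderiv ℝ ψ x = -(R⁻¹ • fderiv ℝ χ (R⁻¹ • x)) := fun x => by
    have a1 : HasFDerivAt χ (fderiv ℝ χ (R⁻¹ • x)) (R⁻¹ • x) :=
      ((hχc.differentiable (by norm_num)) _).hasFDerivAt
    have a2 : HasFDerivAt (fun x : ℂ => R⁻¹ • x) (R⁻¹ • ContinuousLinearMap.id ℝ ℂ) x := by
      exact (hasFDerivAt_id (𝕜 := ℝ) x).const_smul R⁻¹
    have a3 : fderiv ℝ ψ x = _ := ((a1.comp x a2).const_sub 1).fderiv
    rw [a3]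
    ext v
    simp
  refine ⟨R, by linarith, hR1, fun x => ψ x • q x, hψc.smul hq, fun x hx => ?_, ?_⟩
  · have : χ (R⁻¹ • x) = 0 := hχo _ (by rw [hns, le_div_iff₀ hR0]; linarith)
    simp only [hψ, this, sub_zero, one_smul]
  intro φ₀ hφ₀ x v
  have hθ := hnear θ φ₀ (by simpa using hη) hφ₀
  have hs : 0 ≤ sin (φ₀ / 2) := hκ.le.trans hθ.2.1
  have cA := hA.coercive (φ := θ) (φ₀ := φ₀) (κ := 2 * κ) (lt_of_lt_of_le hκ hθ.1) (by positivity)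
    hs hθ.2.2 v
  have hfd : fderiv ℝ (fun x => ψ x • q x) x v =
      ψ x • fderiv ℝ q x v + (fderiv ℝ ψ x v) • q x := by
    rw [fderiv_fun_smul (hψd x) (hqd x)]
    simp
  have hψ0 : 0 ≤ ψ x := by have := hχ1 (R⁻¹ • x); simp only [hψ]; linarith
  have hψ1 : ψ x ≤ 1 := by have := hχ0 (R⁻¹ • x); simp only [hψ]; linarith
  have hv2 : 0 ≤ ‖v‖ ^ 2 := by positivity
  rw [hfd]
  simp only [inner_add_left, real_inner_smul_left, real_inner_self_eq_norm_sq] at cA ⊢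
  by_cases hx : ‖x‖ ≤ R / 2
  · have h1 : fderiv ℝ ψ x = 0 := by
      rw [hψf, hDi _ (by rw [hns, div_le_iff₀ hR0]; linarith)]; simp
    have h2 : ψ x = 0 := by
      have := hχi (R⁻¹ • x) (by rw [hns, div_le_iff₀ hR0]; linarith)
      simp only [hψ, this, sub_self]
    rw [h1, h2]
    simp only [zero_mul, zero_apply, add_zero]
    nlinarith
  push Not at hx
  have hxR : R₁ ≤ ‖x‖ := by linarith
  have hF' := hF x hxR
  have hθ' := hnear (θ + F x) φ₀ (by simpa using hF') hφ₀
  have cM := (hP x hxR).coercive (φ := θ + F x) (φ₀ := φ₀) (κ := 2 * κ)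
    (lt_of_lt_of_le hκ hθ'.1) (by positivity) hs hθ'.2.2 v
  simp only [inner_add_left, real_inner_smul_left, real_inner_self_eq_norm_sq,
    add_apply] at cM
  have herr : |fderiv ℝ ψ x v * inner ℝ (q x) v| ≤ κ * ‖v‖ ^ 2 := by
    by_cases hxo : R ≤ ‖x‖
    · have h1 : fderiv ℝ ψ x = 0 := by
        rw [hψf, hDo _ (by rw [hns, le_div_iff₀ hR0]; linarith)]; simp
      rw [h1]
      simp only [zero_apply, zero_mul, abs_zero]
      positivity
    push Not at hxo
    have h1 : ‖fderiv ℝ ψ x v‖ ≤ R⁻¹ * B * ‖v‖ := by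
      refine (ContinuousLinearMap.le_opNorm _ _).trans ?_
      rw [hψf, norm_neg, norm_smul, norm_inv, Real.norm_of_nonneg hR0.le]
      gcongr
      exact hDB _
    have h2 : ‖q x‖ ≤ C * R ^ (1 - ε / 2) := (hb x hxR).trans (by gcongr; linarith)
    have h3 : |inner ℝ (q x) v| ≤ ‖q x‖ * ‖v‖ := abs_real_inner_le_norm _ _
    have h4 : R⁻¹ * R ^ (1 - ε / 2) = R ^ (-(ε / 2)) := by
      rw [← Real.rpow_neg_one, ← Real.rpow_add hR0]; congr 1; ring
    rw [abs_mul]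
    calc |fderiv ℝ ψ x v| * |inner ℝ (q x) v|
        ≤ (R⁻¹ * B * ‖v‖) * (C * R ^ (1 - ε / 2) * ‖v‖) := by
          gcongr
          · exact h1
          · exact h3.trans (by gcongr)
      _ = B * C * (R⁻¹ * R ^ (1 - ε / 2)) * ‖v‖ ^ 2 := by ring
      _ ≤ κ * ‖v‖ ^ 2 := by rw [h4]; gcongr
  have herr2 : -(κ * ‖v‖ ^ 2) ≤ sin (φ₀ / 2) * (fderiv ℝ ψ x v * inner ℝ (q x) v) := by
    have h1 := sin_le_one (φ₀ / 2)
    have : |sin (φ₀ / 2) * (fderiv ℝ ψ x v * inner ℝ (q x) v)| ≤ 1 * (κ * ‖v‖ ^ 2) := by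
      rw [abs_mul, abs_of_nonneg hs]
      gcongr
    have := (abs_le.1 this).1
    linarith
  have p1 := mul_le_mul_of_nonneg_left cM hψ0
  have p2 := mul_le_mul_of_nonneg_left cA (sub_nonneg.2 hψ1)
  nlinarith

/-! ### Rotated coordinates and boundedness of the perturbation -/

/-- In the coordinate `ζ = cos (φ₀/2) x + sin (φ₀/2) g(x)` the map
`conj (cos (φ₀/2) g(x) - sin (φ₀/2) x) - m ζ` is almost holomorphic, with defect controlled by the
deviation of the phase of `Dg` from `φ₀`. -/
theorem rotated_coords {g : ℂ → ℂ} (hg : ContDiff ℝ 1 g) {κ φ₀ : ℝ} (hκ : 0 < κ) (hκ1 : κ ≤ 1)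
    (hs : κ ≤ sin (φ₀ / 2))
    (hco : ∀ x v, κ * ‖v‖ ^ 2 ≤
      inner ℝ (cos (φ₀ / 2) • v + sin (φ₀ / 2) • fderiv ℝ g x v) v) (m : ℂ) :
    ∃ W : ℂ → ℂ, ContDiff ℝ 1 W ∧
      (∀ x, W (cos (φ₀ / 2) • x + sin (φ₀ / 2) • g x) =
        (starRingEnd ℂ) (cos (φ₀ / 2) • g x - sin (φ₀ / 2) • x) -
          m * (cos (φ₀ / 2) • x + sin (φ₀ / 2) • g x)) ∧
      (∀ ζ, ∃ x, cos (φ₀ / 2) • x + sin (φ₀ / 2) • g x = ζ) ∧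
      (∀ x y, κ * ‖x - y‖ ≤ ‖(cos (φ₀ / 2) • x + sin (φ₀ / 2) • g x) -
        (cos (φ₀ / 2) • y + sin (φ₀ / 2) • g y)‖) ∧
      ∀ x φ, HasPhase (fderiv ℝ g x) φ → κ ≤ sin φ →
        ‖dbar (fderiv ℝ W (cos (φ₀ / 2) • x + sin (φ₀ / 2) • g x))‖ ≤ 4 / κ ^ 4 * |φ - φ₀| := by
  set c := cos (φ₀ / 2) with hc
  set s := sin (φ₀ / 2) with hsd
  set Z : ℂ → ℂ := fun x => c • x + s • g x with hZ
  have hgd : ∀ x, HasFDerivAt g (fderiv ℝ g x) x := fun x =>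
    ((hg.differentiable (by norm_num)) x).hasFDerivAt
  have hZc : ContDiff ℝ 1 Z := by
    have := hg
    fun_prop
  have hZd : ∀ x, HasFDerivAt Z (c • ContinuousLinearMap.id ℝ ℂ + s • fderiv ℝ g x) x := fun x =>
    ((hasFDerivAt_id (𝕜 := ℝ) x).const_smul c).add ((hgd x).const_smul s)
  have hZf : ∀ x v, fderiv ℝ Z x v = c • v + s • fderiv ℝ g x v := fun x v => by
    rw [(hZd x).fderiv]; rfl
  have hcoZ : ∀ x v, κ * ‖v‖ ^ 2 ≤ inner ℝ (fderiv ℝ Z x v) v := fun x v => by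
    rw [hZf]; exact hco x v
  obtain ⟨Φ, hΦc, hΦZ, hZΦ⟩ := coercive_diffeo hZc hκ hcoZ
  set Y : ℂ → ℂ := fun x => c • g x - s • x with hY
  have hYc : ContDiff ℝ 1 Y := by
    have := hg
    fun_prop
  have hYd : ∀ x, HasFDerivAt Y (c • fderiv ℝ g x - s • ContinuousLinearMap.id ℝ ℂ) x := fun x =>
    ((hgd x).const_smul c).sub ((hasFDerivAt_id (𝕜 := ℝ) x).const_smul s)
  set W : ℂ → ℂ := fun ζ => Complex.conjCLE (Y (Φ ζ)) - m * ζ with hW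
  have hWc : ContDiff ℝ 1 W :=
    (Complex.conjCLE.contDiff.comp (hYc.comp hΦc)).sub (contDiff_const.mul contDiff_id)
  refine ⟨W, hWc, fun x => ?_, fun ζ => ⟨Φ ζ, hZΦ ζ⟩, coercive_expand hZc hcoZ, fun x φ hph hφ => ?_⟩
  · change Complex.conjCLE (Y (Φ (Z x))) - m * Z x = _
    rw [hΦZ]
    rfl
  · change ‖dbar (fderiv ℝ W (Z x))‖ ≤ _
    set E : ℂ →L[ℝ] ℂ := (Complex.conjCLE : ℂ →L[ℝ] ℂ).comp
      ((c • fderiv ℝ g x - s • ContinuousLinearMap.id ℝ ℂ).comp (fderiv ℝ Φ (Z x))) with hE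
    have hΦd : HasFDerivAt Φ (fderiv ℝ Φ (Z x)) (Z x) :=
      ((hΦc.differentiable (by norm_num)) _).hasFDerivAt
    have hinv : ∀ v, fderiv ℝ Φ (Z x) (c • v + s • fderiv ℝ g x v) = v := fun v => by
      have h1 := hΦd.comp x (hZd x)
      have h2 : (Φ ∘ Z) = id := funext hΦZ
      rw [h2] at h1
      have h3 := h1.unique (hasFDerivAt_id x)
      exact DFunLike.congr_fun h3 v
    have hYΦ : HasFDerivAt (fun ζ => Complex.conjCLE (Y (Φ ζ))) E (Z x) := by
      have hYd' := hYd x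
      rw [← hΦZ x] at hYd'
      have h1 := hYd'.comp (Z x) hΦd
      rw [hΦZ x] at h1
      exact (Complex.conjCLE : ℂ →L[ℝ] ℂ).hasFDerivAt.comp (Z x) h1
    have hlin : HasFDerivAt (fun ζ : ℂ => m * ζ) (m • ContinuousLinearMap.id ℝ ℂ) (Z x) :=
      (hasFDerivAt_id (𝕜 := ℝ) (Z x)).const_mul m
    have hWd : fderiv ℝ W (Z x) = E - m • ContinuousLinearMap.id ℝ ℂ := (hYΦ.sub hlin).fderiv
    have hdb : dbar (fderiv ℝ W (Z x)) = dbar E := by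
      rw [hWd]
      simp only [dbar, sub_apply, smul_apply, ContinuousLinearMap.id_apply, smul_eq_mul]
      linear_combination (-m) * Complex.I_mul_I
    rw [hdb]
    refine hph.dbar_le hκ hκ1 hφ hs (hco x) fun v => ?_
    change (starRingEnd ℂ) (c • fderiv ℝ g x (fderiv ℝ Φ (Z x) (c • v + s • fderiv ℝ g x v)) -
      s • fderiv ℝ Φ (Z x) (c • v + s • fderiv ℝ g x v)) = _
    rw [hinv]

theorem fderiv_linear_add {A : ℂ →L[ℝ] ℂ} {q : ℂ → ℂ} (hq : ContDiff ℝ 1 q) (x : ℂ) :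
    fderiv ℝ (fun x => A x + q x) x = A + fderiv ℝ q x :=
  (A.hasFDerivAt.add ((hq.differentiable (by norm_num)) x).hasFDerivAt).fderiv

theorem norm_conj_sub_le {c s : ℝ} (hc : |c| ≤ 1) (hs : |s| ≤ 1) (m v : ℂ) :
    ‖(starRingEnd ℂ) (c • v) - m * (s • v)‖ ≤ (1 + ‖m‖) * ‖v‖ := by
  refine (norm_sub_le _ _).trans ?_
  rw [RCLike.norm_conj, norm_smul, norm_mul, norm_smul, Real.norm_eq_abs, Real.norm_eq_abs]
  have h1 := norm_nonneg v
  have h2 := norm_nonneg m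
  have : |c| * ‖v‖ ≤ 1 * ‖v‖ := by gcongr
  have : ‖m‖ * (|s| * ‖v‖) ≤ ‖m‖ * (1 * ‖v‖) := by gcongr
  linarith

/-- The perturbation of the gradient is bounded. -/
theorem global_bound {θ κ β δ C₀ C R : ℝ} (hκ : 0 < κ) (hκ1 : κ ≤ 1) (hβ : 2 < β) (hδ0 : 0 < δ)
    (hδ1 : δ < 1) (hC₀ : 0 ≤ C₀) (hC : 0 ≤ C) (hR : 1 ≤ R) (hs : κ ≤ sin (θ / 2))
    {A : ℂ →L[ℝ] ℂ} {m : ℂ} {L : ℝ} (hL : 0 < L)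
    (hm : ∀ v, (starRingEnd ℂ) (cos (θ / 2) • A v - sin (θ / 2) • v) =
        m * (cos (θ / 2) • v + sin (θ / 2) • A v))
    (hk : ∀ v, ‖v‖ ≤ L * ‖(starRingEnd ℂ) (cos (θ / 2) • v) - m * (sin (θ / 2) • v)‖)
    {F : ℂ → ℝ} {q : ℂ → ℂ} (hq : ContDiff ℝ 1 q)
    (hco : ∀ x v, κ * ‖v‖ ^ 2 ≤
      inner ℝ (cos (θ / 2) • v + sin (θ / 2) • (A v + fderiv ℝ q x v)) v)
    (hF : ∀ x, R ≤ ‖x‖ → |F x| ≤ C₀ * ‖x‖ ^ (-β))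
    (hP : ∀ x, R ≤ ‖x‖ → HasPhase (A + fderiv ℝ q x) (θ + F x) ∧ κ ≤ sin (θ + F x))
    (hb : ∀ x, R ≤ ‖x‖ → ‖q x‖ ≤ C * ‖x‖ ^ (1 - δ)) : ∃ M, ∀ x, ‖q x‖ ≤ M := by
  have hgc : ContDiff ℝ 1 (fun x => A x + q x) := A.contDiff.add hq
  have hgf := fun x => fderiv_linear_add (A := A) hq x
  obtain ⟨W, hWc, hWZ, hsurj, hexp, hdb⟩ := rotated_coords hgc hκ hκ1 hs
    (fun x v => by rw [hgf]; exact hco x v) m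
  set c := cos (θ / 2) with hcd
  set s := sin (θ / 2) with hsd
  have hc1 : |c| ≤ 1 := abs_cos_le_one _
  have hs1 : |s| ≤ 1 := abs_sin_le_one _
  set Z : ℂ → ℂ := fun x => c • x + s • (A x + q x) with hZ
  have hWZ' : ∀ x, W (Z x) = (starRingEnd ℂ) (c • q x) - m * (s • q x) := fun x => by
    have h1 := hm x
    rw [hZ]
    simp only
    rw [hWZ]
    simp only [Complex.real_smul, map_add, map_sub, map_mul, Complex.conj_ofReal] at h1 ⊢
    linear_combination h1
  -- linear growth of the rotated coordinate
  obtain ⟨N, hN⟩ : ∃ N, ∀ x, ‖x‖ ≤ R → ‖q x‖ ≤ N := by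
    obtain ⟨N, hN⟩ := (isCompact_closedBall (0:ℂ) R).exists_bound_of_continuousOn
      hq.continuous.continuousOn
    exact ⟨N, fun x hx => hN x (by simpa using hx)⟩
  have hN0 : 0 ≤ N := (norm_nonneg _).trans (hN 0 (by simp; linarith))
  set T := 2 + ‖A‖ + N + C with hT
  have hT1 : 1 ≤ T := by have := norm_nonneg A; linarith
  have hqlin : ∀ x, ‖q x‖ ≤ N + C * ‖x‖ := fun x => by
    by_cases hx : ‖x‖ ≤ R
    · have := hN x hx
      have : 0 ≤ C * ‖x‖ := by positivity
      linarith
    · push Not at hx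
      have h1 : ‖x‖ ^ (1 - δ) ≤ ‖x‖ ^ (1:ℝ) :=
        Real.rpow_le_rpow_of_exponent_le (by linarith) (by linarith)
      rw [Real.rpow_one] at h1
      have := hb x hx.le
      have : C * ‖x‖ ^ (1 - δ) ≤ C * ‖x‖ := by gcongr
      linarith
  have hZle : ∀ x, 1 + ‖Z x‖ ≤ T * (1 + ‖x‖) := fun x => by
    have h1 : ‖Z x‖ ≤ ‖x‖ + (‖A‖ * ‖x‖ + ‖q x‖) := by
      refine (norm_add_le _ _).trans ?_
      rw [norm_smul, norm_smul, Real.norm_eq_abs, Real.norm_eq_abs]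
      have := norm_add_le (A x) (q x)
      have := A.le_opNorm x
      have : |c| * ‖x‖ ≤ 1 * ‖x‖ := by gcongr
      have : |s| * ‖A x + q x‖ ≤ 1 * ‖A x + q x‖ := by gcongr
      linarith
    have := hqlin x
    have := norm_nonneg A
    have := norm_nonneg x
    rw [hT]
    nlinarith [mul_nonneg hN0 (norm_nonneg x)]
  have hxle : ∀ x, κ * ‖x‖ ≤ ‖Z x‖ + ‖Z 0‖ := fun x => by
    have h1 : κ * ‖x - 0‖ ≤ ‖Z x - Z 0‖ := hexp x 0
    rw [sub_zero] at h1
    exact h1.trans (norm_sub_le _ _)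
  -- decay of the holomorphy defect
  obtain ⟨N₂, hN₂⟩ : ∃ N₂, ∀ ζ, ‖ζ‖ ≤ T * (1 + R) → ‖dbar (fderiv ℝ W ζ)‖ ≤ N₂ := by
    obtain ⟨N, hN⟩ := (isCompact_closedBall (0:ℂ) (T * (1 + R))).exists_bound_of_continuousOn
      (dbar_continuous.comp (hWc.continuous_fderiv (by norm_num))).continuousOn
    exact ⟨N, fun x hx => hN x (by simpa using hx)⟩
  have hN₂0 : 0 ≤ N₂ := (norm_nonneg _).trans (hN₂ 0 (by simp; positivity))
  have h1 : ∀ ζ, ‖dbar (fderiv ℝ W ζ)‖ ≤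
      (N₂ * (T * (1 + R)) ^ β + 4 / κ ^ 4 * C₀ * (2 * T) ^ β) * (1 + ‖ζ‖) ^ (-β) := by
    intro ζ
    obtain ⟨x, rfl⟩ := hsurj ζ
    change ‖dbar (fderiv ℝ W (Z x))‖ ≤ _ * (1 + ‖Z x‖) ^ (-β)
    have hz1 : 0 < 1 + ‖Z x‖ := by positivity
    have hzp : 0 < (1 + ‖Z x‖) ^ (-β) := by positivity
    have e1 : ∀ u : ℝ, 0 < u → 1 + ‖Z x‖ ≤ u → 1 ≤ u ^ β * (1 + ‖Z x‖) ^ (-β) := by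
      intro u hu h
      rw [Real.rpow_neg hz1.le, ← div_eq_mul_inv, one_le_div (by positivity)]
      gcongr
    have hA1 : 0 ≤ N₂ * (T * (1 + R)) ^ β := by positivity
    have hA2 : 0 ≤ 4 / κ ^ 4 * C₀ * (2 * T) ^ β := by positivity
    by_cases hx : ‖x‖ ≤ R
    · have h2 : 1 + ‖Z x‖ ≤ T * (1 + R) := (hZle x).trans (by gcongr)
      have h3 := hN₂ (Z x) (by linarith)
      have h4 := e1 _ (by positivity) h2
      calc _ ≤ N₂ * 1 := by linarith
        _ ≤ N₂ * ((T * (1 + R)) ^ β * (1 + ‖Z x‖) ^ (-β)) := by gcongr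
        _ ≤ _ := by nlinarith
    · push Not at hx
      have hx0 : 0 < ‖x‖ := by linarith
      have h2 : 1 + ‖Z x‖ ≤ 2 * T * ‖x‖ := (hZle x).trans (by nlinarith)
      have h3 := hdb x (θ + F x) (by rw [hgf]; exact (hP x hx.le).1) (hP x hx.le).2
      rw [add_sub_cancel_left] at h3
      have h4 := e1 _ (by positivity) h2
      rw [Real.mul_rpow (by positivity) hx0.le] at h4
      calc _ ≤ 4 / κ ^ 4 * |F x| := h3
        _ ≤ 4 / κ ^ 4 * (C₀ * ‖x‖ ^ (-β) * 1) := by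
            rw [mul_one]; gcongr; exact hF x hx.le
        _ ≤ 4 / κ ^ 4 * (C₀ * ‖x‖ ^ (-β) * ((2 * T) ^ β * ‖x‖ ^ β * (1 + ‖Z x‖) ^ (-β))) := by
            gcongr
        _ = 4 / κ ^ 4 * C₀ * (2 * T) ^ β * (1 + ‖Z x‖) ^ (-β) * (‖x‖ ^ (-β) * ‖x‖ ^ β) := by ring
        _ = 4 / κ ^ 4 * C₀ * (2 * T) ^ β * (1 + ‖Z x‖) ^ (-β) := by
            rw [← Real.rpow_add hx0]; simp
        _ ≤ _ := by nlinarith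
  -- sublinear growth
  have h2 : ∀ ζ, T * (1 + R) + ‖Z 0‖ ≤ ‖ζ‖ →
      ‖W ζ‖ ≤ ((1 + ‖m‖) * C * (2 / κ)) * ‖ζ‖ ^ (1 - δ) := by
    intro ζ hζ
    obtain ⟨x, rfl⟩ := hsurj ζ
    change T * (1 + R) + ‖Z 0‖ ≤ ‖Z x‖ at hζ
    change ‖W (Z x)‖ ≤ _ * ‖Z x‖ ^ (1 - δ)
    have hz0 := norm_nonneg (Z 0)
    have hx : R ≤ ‖x‖ := by
      by_contra h
      push Not at h
      have : T * (1 + ‖x‖) ≤ T * (1 + R) := by gcongr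
      linarith [hZle x]
    have hTR : 0 ≤ T * (1 + R) := by positivity
    have h3 : ‖x‖ ≤ 2 / κ * ‖Z x‖ := by
      have := hxle x
      rw [div_mul_eq_mul_div, le_div_iff₀ hκ]
      linarith
    have h4 : (2 / κ) ^ (1 - δ) ≤ 2 / κ := by
      have : 1 ≤ 2 / κ := by rw [le_div_iff₀ hκ]; linarith
      calc (2 / κ) ^ (1 - δ) ≤ (2 / κ) ^ (1:ℝ) :=
            Real.rpow_le_rpow_of_exponent_le this (by linarith)
        _ = 2 / κ := Real.rpow_one _
    have h5 : ‖x‖ ^ (1 - δ) ≤ 2 / κ * ‖Z x‖ ^ (1 - δ) := by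
      calc ‖x‖ ^ (1 - δ) ≤ (2 / κ * ‖Z x‖) ^ (1 - δ) :=
            Real.rpow_le_rpow (norm_nonneg _) h3 (by linarith)
        _ = (2 / κ) ^ (1 - δ) * ‖Z x‖ ^ (1 - δ) :=
            Real.mul_rpow (by positivity) (norm_nonneg _)
        _ ≤ _ := by gcongr
    rw [hWZ']
    calc _ ≤ (1 + ‖m‖) * ‖q x‖ := norm_conj_sub_le hc1 hs1 m _
      _ ≤ (1 + ‖m‖) * (C * (2 / κ * ‖Z x‖ ^ (1 - δ))) := by
          gcongr
          exact (hb x hx).trans (by gcongr)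
      _ = _ := by ring
  obtain ⟨M, hM⟩ := liouville_bound hβ hδ0 hδ1 (by positivity) (by positivity) W hWc h1 h2
  refine ⟨L * M, fun x => (hk _).trans ?_⟩
  rw [← hWZ']
  gcongr
  exact hM _

/-! ### Taylor expansion in rotated coordinates -/

/-- If `k ∘ q + j` is stationary at `x₀` to order `1 + α` and `k` is invertible with bound `L`, then
`q` has a first-order expansion at `x₀` with the same order of error. -/
theorem expansion_of_stationary {q : ℂ → ℂ} {Q j k : ℂ →L[ℝ] ℂ} {x₀ : ℂ} {L N δ α : ℝ}
    (hα : 0 < α) (hL : 0 ≤ L) (hδ : 0 < δ) (hq : HasFDerivAt q Q x₀)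
    (hk : ∀ v, ‖v‖ ≤ L * ‖k v‖)
    (hr : ∀ x, ‖x - x₀‖ ≤ δ → ‖k (q x - q x₀) + j (x - x₀)‖ ≤ N * ‖x - x₀‖ ^ (1 + α)) :
    (∀ v, k (Q v) = - j v) ∧
      ∀ x, ‖x - x₀‖ ≤ δ → ‖q x - q x₀ - Q (x - x₀)‖ ≤ L * (N * ‖x - x₀‖ ^ (1 + α)) := by
  have hG : HasFDerivAt (fun x => k (q x - q x₀) + j (x - x₀)) (k.comp Q + j) x₀ := by
    have h1 := k.hasFDerivAt.comp x₀ (hq.sub_const (q x₀))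
    have h2 := j.hasFDerivAt.comp x₀ ((hasFDerivAt_id (𝕜 := ℝ) x₀).sub_const x₀)
    have h3 := h1.add h2
    rw [ContinuousLinearMap.comp_id] at h3
    exact h3
  have hz : k.comp Q + j = 0 := by
    rw [← norm_le_zero_iff]
    refine le_of_forall_pos_le_add fun e he => ?_
    rw [zero_add]
    refine hG.le_of_lip' he.le ?_
    have hc : Filter.Tendsto (fun x => N * ‖x - x₀‖ ^ α) (nhds x₀) (nhds (N * ‖x₀ - x₀‖ ^ α)) := by
      have : Continuous (fun x : ℂ => N * ‖x - x₀‖ ^ α) := by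
        refine continuous_const.mul ?_
        exact (continuous_norm.comp (continuous_id.sub continuous_const)).rpow_const
          (fun _ => Or.inr hα.le)
      exact this.tendsto x₀
    rw [sub_self, norm_zero, Real.zero_rpow hα.ne', mul_zero] at hc
    filter_upwards [hc.eventually (gt_mem_nhds he), Metric.closedBall_mem_nhds x₀ hδ] with x h1 h2
    rw [Metric.mem_closedBall, dist_eq_norm] at h2
    have h3 := hr x h2
    rw [sub_self, sub_self, map_zero, map_zero, add_zero, sub_zero]
    refine h3.trans ?_
    by_cases hx : ‖x - x₀‖ = 0
    · rw [hx, Real.zero_rpow (by linarith)]; simp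
    · have hx' : 0 < ‖x - x₀‖ := lt_of_le_of_ne (norm_nonneg _) (Ne.symm hx)
      rw [Real.rpow_add hx', Real.rpow_one]
      calc N * (‖x - x₀‖ * ‖x - x₀‖ ^ α) = (N * ‖x - x₀‖ ^ α) * ‖x - x₀‖ := by ring
        _ ≤ e * ‖x - x₀‖ := by gcongr
  have hkQ : ∀ v, k (Q v) = - j v := fun v => by
    have := DFunLike.congr_fun hz v
    exact eq_neg_of_add_eq_zero_left this
  refine ⟨hkQ, fun x hx => (hk _).trans ?_⟩
  rw [map_sub, hkQ, sub_neg_eq_add]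
  gcongr
  exact hr x hx

/-- Taylor expansion of the rotated gradient at `x₀`, in coordinates adapted to the phase at `x₀`. -/
theorem local_step {θ κ η C₀ R M α : ℝ} (hα0 : 0 < α) (hα : α < 1) (hκ : 0 < κ) (hκ1 : κ ≤ 1)
    (hC₀ : 0 ≤ C₀) (hR : 1 ≤ R) (hM : 0 ≤ M)
    (hnear : ∀ φ φ₀ : ℝ, |φ - θ| ≤ η → |φ₀ - θ| ≤ η →
      κ ≤ sin φ ∧ κ ≤ sin (φ₀ / 2) ∧ 2 * κ ≤ sin (φ - φ₀ / 2))
    {A : ℂ →L[ℝ] ℂ} {m : ℂ}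
    (hm : ∀ v, (starRingEnd ℂ) (cos (θ / 2) • A v - sin (θ / 2) • v) =
        m * (cos (θ / 2) • v + sin (θ / 2) • A v))
    {F : ℂ → ℝ} {q : ℂ → ℂ} (hq : ContDiff ℝ 1 q)
    (hco : ∀ φ₀, |φ₀ - θ| ≤ η → ∀ x v, κ * ‖v‖ ^ 2 ≤
      inner ℝ (cos (φ₀ / 2) • v + sin (φ₀ / 2) • (A v + fderiv ℝ q x v)) v)
    (hFη : ∀ x, R ≤ ‖x‖ → |F x| ≤ η) (hF : ∀ x, R ≤ ‖x‖ → |F x| ≤ C₀ / ‖x‖)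
    (hFL : ∀ x y, R ≤ ‖x‖ → ‖y - x‖ < ‖x‖ / 2 → |F y - F x| ≤ C₀ / ‖x‖ ^ 2 * ‖y - x‖)
    (hP : ∀ x, R ≤ ‖x‖ → HasPhase (A + fderiv ℝ q x) (θ + F x))
    (hqM : ∀ x, ‖q x‖ ≤ M) :
    ∃ C₂ c' R₂, 0 < C₂ ∧ 0 < c' ∧ c' ≤ 1 ∧ R ≤ R₂ ∧ ∀ x₀, R₂ ≤ ‖x₀‖ → ∀ c₀ s₀ : ℝ,
      c₀ = cos ((θ + F x₀) / 2) → s₀ = sin ((θ + F x₀) / 2) → ∃ p : ℂ, ‖p‖ ≤ C₂ / ‖x₀‖ ∧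
      ∀ x, ‖x - x₀‖ ≤ c' * ‖x₀‖ →
        ‖c₀ • (x - x₀) + s₀ • (A (x - x₀) + (q x - q x₀))‖ ≤ ‖x₀‖ ∧
        ‖(starRingEnd ℂ) (c₀ • (A (x - x₀) + (q x - q x₀)) - s₀ • (x - x₀)) -
          (m + p) * (c₀ • (x - x₀) + s₀ • (A (x - x₀) + (q x - q x₀)))‖ ≤
        C₂ * ‖x₀‖ ^ (-1 - α) * ‖c₀ • (x - x₀) + s₀ • (A (x - x₀) + (q x - q x₀))‖ ^ (1 + α) := by
  obtain ⟨CT, hCT, hT⟩ := local_taylor hα0 hα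
  have hAn := norm_nonneg A
  have hmn := norm_nonneg m
  set S := (1 + ‖m‖) * ((1 + ‖A‖) * 2 * C₀ + M) with hS
  have hS0 : 0 ≤ S := by positivity
  set C₂ := CT * (4 * S / κ + C₀ / κ ^ 4) + 1 with hC₂
  have hC₂0 : 0 < C₂ := by positivity
  have h4κ : 1 ≤ 4 / κ := by rw [le_div_iff₀ hκ]; linarith
  have h4κα : (4 / κ) ^ α ≥ 1 := Real.one_le_rpow h4κ hα0.le
  refine ⟨C₂ * (4 / κ) ^ α, κ / (16 * (1 + ‖A‖)), max (2 * R) (32 * M / κ), by positivity,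
    by positivity, ?_, ?_, ?_⟩
  · rw [div_le_one (by positivity)]; nlinarith
  · exact le_trans (by linarith) (le_max_left _ _)
  intro x₀ hx₀ c₀ s₀ hc₀ hs₀
  have hr1 : 2 * R ≤ ‖x₀‖ := (le_max_left _ _).trans hx₀
  have hr2 : 32 * M / κ ≤ ‖x₀‖ := (le_max_right _ _).trans hx₀
  have hr0 : 0 < ‖x₀‖ := by linarith
  set r := ‖x₀‖ with hr
  have hxR : R ≤ ‖x₀‖ := by linarith
  have hφ₀ : |θ + F x₀ - θ| ≤ η := by rw [add_sub_cancel_left]; exact hFη _ hxR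
  have hgc : ContDiff ℝ 1 (fun x => A x + q x) := A.contDiff.add hq
  have hgf := fun x => fderiv_linear_add (A := A) hq x
  obtain ⟨W, hWc, hWZ, hsurj, hexp, hdb⟩ := rotated_coords (φ₀ := θ + F x₀) hgc hκ hκ1
    (hnear _ _ hφ₀ hφ₀).2.1 (fun x v => by rw [hgf]; exact hco _ hφ₀ x v) m
  rw [← hc₀, ← hs₀] at hWZ hsurj hexp hdb
  have hc1 : |c₀| ≤ 1 := by rw [hc₀]; exact abs_cos_le_one _
  have hs1 : |s₀| ≤ 1 := by rw [hs₀]; exact abs_sin_le_one _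
  have hFx₀ : |F x₀| ≤ C₀ / r := hF _ hxR
  have hdc : |c₀ - cos (θ / 2)| ≤ C₀ / r := by
    rw [hc₀]
    refine (abs_cos_sub_cos_le _ _).trans ?_
    rw [show (θ + F x₀) / 2 - θ / 2 = F x₀ / 2 by ring, abs_div, abs_two]
    linarith [abs_nonneg (F x₀)]
  have hds : |s₀ - sin (θ / 2)| ≤ C₀ / r := by
    rw [hs₀]
    refine (abs_sin_sub_sin_le _ _).trans ?_
    rw [show (θ + F x₀) / 2 - θ / 2 = F x₀ / 2 by ring, abs_div, abs_two]
    linarith [abs_nonneg (F x₀)]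
  set c := cos (θ / 2) with hcd
  set s := sin (θ / 2) with hsd
  set Z : ℂ → ℂ := fun x => c₀ • x + s₀ • (A x + q x) with hZ
  have hZd : ∀ x y, Z x - Z y = c₀ • (x - y) + s₀ • (A (x - y) + (q x - q y)) := fun x y => by
    simp only [hZ, map_sub, smul_sub, smul_add]; abel
  set ρ := κ * r / 4 with hρ
  have hρ0 : 0 < ρ := by positivity
  set K := 4 / κ ^ 4 * (C₀ / r ^ 2 / κ) with hK
  have hK0 : 0 ≤ K := by positivity
  have hnx : ∀ x, ‖Z x - Z x₀‖ ≤ ρ → ‖x - x₀‖ ≤ r / 4 := fun x hx => by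
    have h1 : κ * ‖x - x₀‖ ≤ κ * (r / 4) := (hexp x x₀).trans (by
      change ‖Z x - Z x₀‖ ≤ _; linarith)
    exact le_of_mul_le_mul_left h1 hκ
  have hb1 : ∀ w, ‖w - Z x₀‖ ≤ ρ → ‖dbar (fderiv ℝ W w)‖ ≤ K * ‖w - Z x₀‖ := by
    intro w hw
    obtain ⟨x, rfl⟩ := hsurj w
    change ‖dbar (fderiv ℝ W (Z x))‖ ≤ K * ‖Z x - Z x₀‖
    have h1 := hnx x hw
    have h2 : R ≤ ‖x‖ := by
      have := norm_sub_norm_le x₀ x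
      rw [norm_sub_rev] at this
      linarith
    have h3 := hdb x (θ + F x) (by rw [hgf]; exact hP x h2)
      (hnear (θ + F x) (θ + F x) (by rw [add_sub_cancel_left]; exact hFη _ h2)
        (by rw [add_sub_cancel_left]; exact hFη _ h2)).1
    rw [show θ + F x - (θ + F x₀) = F x - F x₀ by ring] at h3
    have h4 := hFL x₀ x hxR (by linarith)
    have h5 : ‖x - x₀‖ ≤ ‖Z x - Z x₀‖ / κ := by
      rw [le_div_iff₀ hκ, mul_comm]; exact hexp x x₀
    calc _ ≤ 4 / κ ^ 4 * |F x - F x₀| := h3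
      _ ≤ 4 / κ ^ 4 * (C₀ / r ^ 2 * (‖Z x - Z x₀‖ / κ)) := by
        gcongr; exact h4.trans (by gcongr)
      _ = _ := by rw [hK]; ring
  have hb2 : ∀ w, ‖w - Z x₀‖ ≤ ρ → ‖W w‖ ≤ S := by
    intro w hw
    obtain ⟨x, rfl⟩ := hsurj w
    change ‖W (Z x)‖ ≤ S
    have h1 := hnx x hw
    have h2 : ‖x‖ ≤ 2 * r := by
      have := norm_sub_norm_le x x₀
      linarith
    have h3 : W (Z x) = ((starRingEnd ℂ) ((c₀ - c) • A x - (s₀ - s) • x) -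
        m * ((c₀ - c) • x + (s₀ - s) • A x)) +
        ((starRingEnd ℂ) (c₀ • q x) - m * (s₀ • q x)) := by
      have h4 := hm x
      have h5 := hWZ x
      change W (Z x) = _ at h5
      rw [h5]
      simp only [Complex.real_smul, map_add, map_sub, map_mul, Complex.conj_ofReal,
        Complex.ofReal_sub] at h4 ⊢
      linear_combination h4
    have hax : ‖A x‖ ≤ ‖A‖ * (2 * r) := (A.le_opNorm x).trans (by gcongr)
    have e1 : ‖(c₀ - c) • A x - (s₀ - s) • x‖ ≤ (1 + ‖A‖) * 2 * C₀ := by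
      refine (norm_sub_le _ _).trans ?_
      rw [norm_smul, norm_smul, Real.norm_eq_abs, Real.norm_eq_abs]
      calc _ ≤ C₀ / r * (‖A‖ * (2 * r)) + C₀ / r * (2 * r) := by gcongr
        _ = _ := by field_simp; ring
    have e2 : ‖(c₀ - c) • x + (s₀ - s) • A x‖ ≤ (1 + ‖A‖) * 2 * C₀ := by
      refine (norm_add_le _ _).trans ?_
      rw [norm_smul, norm_smul, Real.norm_eq_abs, Real.norm_eq_abs]
      calc _ ≤ C₀ / r * (2 * r) + C₀ / r * (‖A‖ * (2 * r)) := by gcongr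
        _ = _ := by field_simp
    rw [h3]
    refine (norm_add_le _ _).trans ?_
    have e3 := norm_conj_sub_le hc1 hs1 m (q x)
    have e4 : ‖(starRingEnd ℂ) ((c₀ - c) • A x - (s₀ - s) • x) -
        m * ((c₀ - c) • x + (s₀ - s) • A x)‖ ≤ (1 + ‖A‖) * 2 * C₀ +
          ‖m‖ * ((1 + ‖A‖) * 2 * C₀) := by
      refine (norm_sub_le _ _).trans ?_
      rw [RCLike.norm_conj, norm_mul]
      gcongr
    have e5 : (1 + ‖m‖) * ‖q x‖ ≤ (1 + ‖m‖) * M := by gcongr; exact hqM x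
    rw [hS]
    linarith
  obtain ⟨p, hp, hpT⟩ := hT W hWc (Z x₀) ρ K S hρ0 hK0 hS0 hb1 hb2
  have hτ : CT * (S / ρ + K * ρ) ≤ C₂ / r := by
    have : CT * (S / ρ + K * ρ) = CT * (4 * S / κ + C₀ / κ ^ 4) / r := by
      rw [hρ, hK]; field_simp
    rw [this, hC₂]
    gcongr
    linarith
  have hτ0 : 0 ≤ CT * (S / ρ + K * ρ) := by positivity
  refine ⟨p, hp.trans (hτ.trans ?_), fun x hx => ?_⟩
  · gcongr
    exact le_mul_of_one_le_right hC₂0.le h4κα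
  have hz : ‖Z x - Z x₀‖ ≤ ρ / 2 := by
    rw [hZd]
    have h1 : ‖A (x - x₀)‖ ≤ ‖A‖ * ‖x - x₀‖ := A.le_opNorm _
    have h2 : ‖q x - q x₀‖ ≤ M + M := (norm_sub_le _ _).trans (add_le_add (hqM _) (hqM _))
    have h3 : ‖c₀ • (x - x₀)‖ ≤ 1 * ‖x - x₀‖ := by
      rw [norm_smul, Real.norm_eq_abs]; gcongr
    have h4 : ‖s₀ • (A (x - x₀) + (q x - q x₀))‖ ≤ 1 * (‖A (x - x₀)‖ + ‖q x - q x₀‖) := by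
      rw [norm_smul, Real.norm_eq_abs]
      gcongr
      exact norm_add_le _ _
    have h5 := norm_add_le (c₀ • (x - x₀)) (s₀ • (A (x - x₀) + (q x - q x₀)))
    have h6 : (1 + ‖A‖) * ‖x - x₀‖ ≤ κ * r / 16 := by
      calc _ ≤ (1 + ‖A‖) * (κ / (16 * (1 + ‖A‖)) * r) := by gcongr
        _ = _ := by field_simp
    have h7 : 32 * M ≤ r * κ := by rwa [div_le_iff₀ hκ] at hr2
    rw [hρ]
    linarith
  have hfin := hpT (Z x) hz
  have hWd : W (Z x) - W (Z x₀) - p * (Z x - Z x₀) =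
      (starRingEnd ℂ) (c₀ • (A (x - x₀) + (q x - q x₀)) - s₀ • (x - x₀)) -
        (m + p) * (Z x - Z x₀) := by
    have h5 := hWZ x
    have h6 := hWZ x₀
    change W (Z x) = _ at h5
    change W (Z x₀) = _ at h6
    rw [h5, h6]
    simp only [hZ, Complex.real_smul, map_add, map_sub, map_mul, Complex.conj_ofReal]
    ring
  rw [hWd] at hfin
  rw [← hZd]
  refine ⟨hz.trans ?_, hfin.trans ?_⟩
  · rw [hρ]
    have : κ * r ≤ 1 * r := by gcongr
    linarith
  refine mul_le_mul_of_nonneg_right ?_ (by positivity)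
  calc CT * (S / ρ + K * ρ) * ρ ^ (-α) ≤ C₂ / r * ρ ^ (-α) := by gcongr
    _ = C₂ * (4 / κ) ^ α * r ^ (-1 - α) := by
      rw [hρ, show κ * r / 4 = (4 / κ)⁻¹ * r by field_simp, Real.mul_rpow (by positivity) hr0.le,
        Real.inv_rpow (by positivity), Real.rpow_neg (by positivity), inv_inv,
        show -1 - α = -1 + -α by ring, Real.rpow_add hr0, Real.rpow_neg_one]
      ring

/-! ### Decay and Hölder continuity of the derivative -/

/-- First-order expansion of the perturbation `q` at every far point, with the sharp decay rate. -/
theorem expansion {θ κ η C₀ R M α : ℝ} (hα0 : 0 < α) (hα : α < 1) (hκ : 0 < κ) (hκ1 : κ ≤ 1)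
    (hC₀ : 0 ≤ C₀) (hR : 1 ≤ R) (hM : 0 ≤ M)
    (hnear : ∀ φ φ₀ : ℝ, |φ - θ| ≤ η → |φ₀ - θ| ≤ η →
      κ ≤ sin φ ∧ κ ≤ sin (φ₀ / 2) ∧ 2 * κ ≤ sin (φ - φ₀ / 2))
    {A : ℂ →L[ℝ] ℂ} {m : ℂ} {L : ℝ} (hL : 0 < L)
    (hm : ∀ v, (starRingEnd ℂ) (cos (θ / 2) • A v - sin (θ / 2) • v) =
        m * (cos (θ / 2) • v + sin (θ / 2) • A v))
    (hk : ∀ v, ‖v‖ ≤ L * ‖(starRingEnd ℂ) (cos (θ / 2) • v) - m * (sin (θ / 2) • v)‖)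
    {F : ℂ → ℝ} {q : ℂ → ℂ} (hq : ContDiff ℝ 1 q)
    (hco : ∀ φ₀, |φ₀ - θ| ≤ η → ∀ x v, κ * ‖v‖ ^ 2 ≤
      inner ℝ (cos (φ₀ / 2) • v + sin (φ₀ / 2) • (A v + fderiv ℝ q x v)) v)
    (hFη : ∀ x, R ≤ ‖x‖ → |F x| ≤ η) (hF : ∀ x, R ≤ ‖x‖ → |F x| ≤ C₀ / ‖x‖)
    (hFL : ∀ x y, R ≤ ‖x‖ → ‖y - x‖ < ‖x‖ / 2 → |F y - F x| ≤ C₀ / ‖x‖ ^ 2 * ‖y - x‖)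
    (hP : ∀ x, R ≤ ‖x‖ → HasPhase (A + fderiv ℝ q x) (θ + F x))
    (hqM : ∀ x, ‖q x‖ ≤ M) :
    ∃ C c' R₁, 0 < C ∧ 0 < c' ∧ c' ≤ 1 ∧ R ≤ R₁ ∧ ∀ x₀, R₁ ≤ ‖x₀‖ →
      ‖fderiv ℝ q x₀‖ ≤ C / ‖x₀‖ ∧ ∀ x, ‖x - x₀‖ ≤ c' * ‖x₀‖ →
      ‖q x - q x₀ - fderiv ℝ q x₀ (x - x₀)‖ ≤
        C * ‖x₀‖ ^ (-1 - α) * ‖x - x₀‖ ^ (1 + α) := by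
  obtain ⟨C₂, c', R₂, hC₂, hc', hc'1, hR₂, hloc⟩ :=
    local_step hα0 hα hκ hκ1 hC₀ hR hM hnear hm hq hco hFη hF hFL hP hqM
  have hAn := norm_nonneg A
  have hmn := norm_nonneg m
  set a := 1 + ‖A‖ with ha
  set B := ((1 + ‖m‖) * C₀ + C₂) * a with hB
  have ha1 : 1 ≤ a := by linarith
  have hB0 : 0 ≤ B := by positivity
  set N := C₂ * (1 + a) ^ (1 + α) with hN
  have hN0 : 0 < N := by positivity
  refine ⟨2 * L * (B + N), c', max R₂ (4 * L * ((1 + ‖m‖) * C₀ + C₂ + B + C₂ * a)), by positivity,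
    hc', hc'1, hR₂.trans (le_max_left _ _), fun x₀ hx₀ => ?_⟩
  have hr1 := (le_max_left _ _).trans hx₀
  have hr2 := (le_max_right _ _).trans hx₀
  have hr0 : 0 < ‖x₀‖ := by linarith
  set r := ‖x₀‖ with hr
  have hxR : R ≤ ‖x₀‖ := by linarith
  obtain ⟨p, hp, hpT⟩ := hloc x₀ hr1 _ _ rfl rfl
  have hFx₀ : |F x₀| ≤ C₀ / r := hF _ hxR
  set c := cos (θ / 2) with hcd
  set s := sin (θ / 2) with hsd
  set c₀ := cos ((θ + F x₀) / 2) with hc₀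
  set s₀ := sin ((θ + F x₀) / 2) with hs₀
  have hc1 : |c₀| ≤ 1 := abs_cos_le_one _
  have hs1 : |s₀| ≤ 1 := abs_sin_le_one _
  have hdc : |c₀ - c| ≤ C₀ / r := by
    refine (abs_cos_sub_cos_le _ _).trans ?_
    rw [show (θ + F x₀) / 2 - θ / 2 = F x₀ / 2 by ring, abs_div, abs_two]
    linarith [abs_nonneg (F x₀)]
  have hds : |s₀ - s| ≤ C₀ / r := by
    refine (abs_sin_sub_sin_le _ _).trans ?_
    rw [show (θ + F x₀) / 2 - θ / 2 = F x₀ / 2 by ring, abs_div, abs_two]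
    linarith [abs_nonneg (F x₀)]
  clear_value c s c₀ s₀
  set k : ℂ →L[ℝ] ℂ := c₀ • (Complex.conjCLE : ℂ →L[ℝ] ℂ) -
    (s₀ • (m + p)) • ContinuousLinearMap.id ℝ ℂ with hkdef
  set j : ℂ →L[ℝ] ℂ := (c₀ • (Complex.conjCLE : ℂ →L[ℝ] ℂ).comp A -
    s₀ • (Complex.conjCLE : ℂ →L[ℝ] ℂ)) -
      (m + p) • (c₀ • ContinuousLinearMap.id ℝ ℂ + s₀ • A) with hjdef
  have hkv : ∀ v, k v = (starRingEnd ℂ) (c₀ • v) - (m + p) * (s₀ • v) := fun v => by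
    have : k v = c₀ • (starRingEnd ℂ) v - (s₀ • (m + p)) • v := rfl
    rw [this]
    simp only [Complex.real_smul, map_mul, Complex.conj_ofReal, smul_eq_mul]
    ring
  have hjv : ∀ v, j v = (starRingEnd ℂ) (c₀ • A v - s₀ • v) - (m + p) * (c₀ • v + s₀ • A v) :=
    fun v => by
    have : j v = (c₀ • (starRingEnd ℂ) (A v) - s₀ • (starRingEnd ℂ) v) -
      (m + p) • (c₀ • v + s₀ • A v) := rfl
    rw [this]
    simp only [Complex.real_smul, map_mul, map_sub, Complex.conj_ofReal, smul_eq_mul]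
  have hAv : ∀ v, ‖A v‖ ≤ ‖A‖ * ‖v‖ := A.le_opNorm
  -- `k` is a small perturbation of the map that is invertible by `hk`
  have hkinv : ∀ v, ‖v‖ ≤ 2 * L * ‖k v‖ := fun v => by
    have h1 := hk v
    have h2 : (starRingEnd ℂ) (c • v) - m * (s • v) = k v - ((starRingEnd ℂ) ((c₀ - c) • v) -
        m * ((s₀ - s) • v)) + p * (s₀ • v) := by
      rw [hkv]
      simp only [Complex.real_smul, map_mul, Complex.conj_ofReal, Complex.ofReal_sub, map_sub]
      ring
    have h3 : ‖(starRingEnd ℂ) ((c₀ - c) • v) - m * ((s₀ - s) • v)‖ ≤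
        (1 + ‖m‖) * C₀ / r * ‖v‖ := by
      refine (norm_sub_le _ _).trans ?_
      rw [RCLike.norm_conj, norm_smul, norm_mul, norm_smul, Real.norm_eq_abs, Real.norm_eq_abs]
      calc _ ≤ C₀ / r * ‖v‖ + ‖m‖ * (C₀ / r * ‖v‖) := by gcongr
        _ = _ := by ring
    have h4 : ‖p * (s₀ • v)‖ ≤ C₂ / r * ‖v‖ := by
      rw [norm_mul, norm_smul, Real.norm_eq_abs]
      calc _ ≤ C₂ / r * (1 * ‖v‖) := by gcongr
        _ = _ := by ring
    have h5 : L * ((1 + ‖m‖) * C₀ / r + C₂ / r) ≤ 1 / 2 := by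
      rw [← add_div, ← mul_div_assoc, div_le_iff₀ hr0]
      have : 0 ≤ L * (B + C₂ * a) := by positivity
      have : 0 ≤ L * ((1 + ‖m‖) * C₀ + C₂) := by positivity
      linarith
    have h6 : ‖(starRingEnd ℂ) (c • v) - m * (s • v)‖ ≤
        ‖k v‖ + ((1 + ‖m‖) * C₀ / r + C₂ / r) * ‖v‖ := by
      rw [h2]
      refine (norm_add_le _ _).trans ?_
      have := norm_sub_le (k v) ((starRingEnd ℂ) ((c₀ - c) • v) - m * ((s₀ - s) • v))
      linarith
    have h7 : L * ‖(starRingEnd ℂ) (c • v) - m * (s • v)‖ ≤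
        L * (‖k v‖ + ((1 + ‖m‖) * C₀ / r + C₂ / r) * ‖v‖) := by gcongr
    have h8 : L * ((1 + ‖m‖) * C₀ / r + C₂ / r) * ‖v‖ ≤ 1 / 2 * ‖v‖ := by gcongr
    linarith
  -- `j` would vanish by `hm` if the phase at `x₀` were `θ` and `p` were zero
  have hjb : ∀ v, ‖j v‖ ≤ B / r * ‖v‖ := fun v => by
    have h1 := hm v
    have h2 : j v = (starRingEnd ℂ) ((c₀ - c) • A v - (s₀ - s) • v) -
        m * ((c₀ - c) • v + (s₀ - s) • A v) - p * (c₀ • v + s₀ • A v) := by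
      rw [hjv]
      simp only [Complex.real_smul, map_sub, map_mul, Complex.conj_ofReal,
        Complex.ofReal_sub] at h1 ⊢
      linear_combination h1
    have e1 : ‖(c₀ - c) • A v - (s₀ - s) • v‖ ≤ C₀ / r * (a * ‖v‖) := by
      refine (norm_sub_le _ _).trans ?_
      rw [norm_smul, norm_smul, Real.norm_eq_abs, Real.norm_eq_abs]
      calc _ ≤ C₀ / r * (‖A‖ * ‖v‖) + C₀ / r * ‖v‖ := by gcongr; exact hAv v
        _ = _ := by rw [ha]; ring
    have e2 : ‖(c₀ - c) • v + (s₀ - s) • A v‖ ≤ C₀ / r * (a * ‖v‖) := by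
      refine (norm_add_le _ _).trans ?_
      rw [norm_smul, norm_smul, Real.norm_eq_abs, Real.norm_eq_abs]
      calc _ ≤ C₀ / r * ‖v‖ + C₀ / r * (‖A‖ * ‖v‖) := by gcongr; exact hAv v
        _ = _ := by rw [ha]; ring
    have e3 : ‖c₀ • v + s₀ • A v‖ ≤ a * ‖v‖ := by
      refine (norm_add_le _ _).trans ?_
      rw [norm_smul, norm_smul, Real.norm_eq_abs, Real.norm_eq_abs]
      calc _ ≤ 1 * ‖v‖ + 1 * (‖A‖ * ‖v‖) := by gcongr; exact hAv v
        _ = _ := by rw [ha]; ring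
    rw [h2]
    refine (norm_sub_le _ _).trans ?_
    have e4 := norm_sub_le ((starRingEnd ℂ) ((c₀ - c) • A v - (s₀ - s) • v))
        (m * ((c₀ - c) • v + (s₀ - s) • A v))
    rw [RCLike.norm_conj, norm_mul m] at e4
    rw [norm_mul p]
    calc _ ≤ (C₀ / r * (a * ‖v‖) + ‖m‖ * (C₀ / r * (a * ‖v‖))) + C₂ / r * (a * ‖v‖) := by
          refine add_le_add (e4.trans ?_) ?_ <;> gcongr
      _ = _ := by rw [hB]; ring
  have hQ : HasFDerivAt q (fderiv ℝ q x₀) x₀ :=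
    ((hq.differentiable (by norm_num)) x₀).hasFDerivAt
  -- the remainder of `local_step`, expressed through `x - x₀` instead of `ζ`
  have hrem : ∀ x, ‖x - x₀‖ ≤ c' * r →
      ‖k (q x - q x₀) + j (x - x₀)‖ ≤ N * r ^ (-1 - α) * ‖x - x₀‖ ^ (1 + α) := by
    intro x hx
    obtain ⟨hz, hT⟩ := hpT x hx
    have e0 : (starRingEnd ℂ) (c₀ • (A (x - x₀) + (q x - q x₀)) - s₀ • (x - x₀)) -
          (m + p) * (c₀ • (x - x₀) + s₀ • (A (x - x₀) + (q x - q x₀))) =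
          k (q x - q x₀) + j (x - x₀) := by
      rw [hkv, hjv]
      simp only [Complex.real_smul, map_add, map_sub, map_mul, Complex.conj_ofReal]
      ring
    rw [e0] at hT
    generalize q x - q x₀ = Δ at hz hT ⊢
    generalize x - x₀ = y at hz hT ⊢
    set ζ := c₀ • y + s₀ • (A y + Δ) with hζ
    have hζn : ‖ζ‖ ≤ a * ‖y‖ + ‖Δ‖ := by
      have h1 := norm_add_le (c₀ • y) (s₀ • (A y + Δ))
      rw [norm_smul, norm_smul, Real.norm_eq_abs, Real.norm_eq_abs] at h1
      have h2 : |c₀| * ‖y‖ ≤ 1 * ‖y‖ := by gcongr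
      have h3 : |s₀| * ‖A y + Δ‖ ≤ 1 * (‖A‖ * ‖y‖ + ‖Δ‖) := by
        gcongr
        exact (norm_add_le _ _).trans (add_le_add (hAv y) le_rfl)
      linarith
    -- a crude form of the remainder estimate, linear in `ζ`
    have h1 : r ^ (-1 - α) * ‖ζ‖ ^ (1 + α) ≤ ‖ζ‖ / r := by
      rcases eq_or_ne ‖ζ‖ 0 with h0 | h0
      · rw [h0, Real.zero_rpow (by linarith)]; simp
      · have h0' : 0 < ‖ζ‖ := lt_of_le_of_ne (norm_nonneg _) (Ne.symm h0)
        rw [show -1 - α = -1 + -α by ring, Real.rpow_add hr0, Real.rpow_add h0', Real.rpow_one,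
          Real.rpow_neg_one]
        have : r ^ (-α) * ‖ζ‖ ^ α ≤ 1 := by
          rw [Real.rpow_neg hr0.le, inv_mul_le_iff₀ (by positivity), mul_one]
          gcongr
        calc _ = ‖ζ‖ / r * (r ^ (-α) * ‖ζ‖ ^ α) := by ring
          _ ≤ ‖ζ‖ / r * 1 := by gcongr
          _ = _ := mul_one _
    have h2 : ‖k Δ + j y‖ ≤ C₂ / r * (a * ‖y‖ + ‖Δ‖) := by
      calc _ ≤ C₂ * r ^ (-1 - α) * ‖ζ‖ ^ (1 + α) := hT
        _ = C₂ * (r ^ (-1 - α) * ‖ζ‖ ^ (1 + α)) := by ring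
        _ ≤ C₂ * (‖ζ‖ / r) := by gcongr
        _ = C₂ / r * ‖ζ‖ := by ring
        _ ≤ _ := by gcongr
    have h3 : ‖k Δ‖ ≤ C₂ / r * (a * ‖y‖ + ‖Δ‖) + B / r * ‖y‖ := by
      have := norm_sub_le (k Δ + j y) (j y)
      rw [add_sub_cancel_right] at this
      linarith [hjb y]
    have h4 : 2 * L * ‖k Δ‖ ≤ 2 * L * (C₂ / r * (a * ‖y‖ + ‖Δ‖) + B / r * ‖y‖) := by gcongr
    have hX : 0 ≤ (1 + ‖m‖) * C₀ := by positivity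
    have hY : 0 ≤ C₂ * a := by positivity
    have h5 : 2 * L * (C₂ / r) ≤ 1 / 2 := by
      rw [← mul_div_assoc, div_le_iff₀ hr0]
      have : 0 ≤ L * ((1 + ‖m‖) * C₀ + B + C₂ * a) := by positivity
      linarith
    have h6 : 2 * L * (C₂ / r * a + B / r) ≤ 1 / 2 := by
      rw [div_mul_eq_mul_div, ← add_div, ← mul_div_assoc, div_le_iff₀ hr0]
      have : 0 ≤ L * ((1 + ‖m‖) * C₀ + C₂) := by positivity
      linarith
    -- absorbing the terms in `Δ` gives a Lipschitz bound, hence `|ζ| ≤ (1 + a) |y|`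
    have h7 : ‖Δ‖ ≤ ‖y‖ := by
      have h8 := hkinv Δ
      have h9 : 2 * L * (C₂ / r) * ‖Δ‖ ≤ 1 / 2 * ‖Δ‖ := by gcongr
      have h10 : 2 * L * (C₂ / r * a + B / r) * ‖y‖ ≤ 1 / 2 * ‖y‖ := by gcongr
      linarith
    calc _ ≤ C₂ * r ^ (-1 - α) * ‖ζ‖ ^ (1 + α) := hT
      _ ≤ C₂ * r ^ (-1 - α) * ((1 + a) * ‖y‖) ^ (1 + α) := by
          gcongr; linarith
      _ = _ := by rw [Real.mul_rpow (by positivity) (norm_nonneg _), hN]; ring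
  obtain ⟨hkQ, hexp⟩ := expansion_of_stationary hα0 (by positivity : 0 ≤ 2 * L)
    (by positivity : 0 < c' * r) hQ hkinv hrem
  refine ⟨ContinuousLinearMap.opNorm_le_bound _ (by positivity) fun v => ?_, fun x hx =>
    (hexp x hx).trans ?_⟩
  · have h1 := hkinv (fderiv ℝ q x₀ v)
    rw [hkQ, norm_neg] at h1
    calc _ ≤ 2 * L * ‖j v‖ := h1
      _ ≤ 2 * L * (B / r * ‖v‖) := by gcongr; exact hjb v
      _ = 2 * L * B / r * ‖v‖ := by ring
      _ ≤ _ := by gcongr; linarith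
  · calc _ = (2 * L * N) * (r ^ (-1 - α) * ‖x - x₀‖ ^ (1 + α)) := by ring
      _ ≤ (2 * L * (B + N)) * (r ^ (-1 - α) * ‖x - x₀‖ ^ (1 + α)) := by gcongr; linarith
      _ = _ := by ring

/-- Comparing first-order expansions at two nearby points gives the Hölder bound for the
derivative. -/
theorem holder_of_expansion {q : ℂ → ℂ} {C c' R α : ℝ} (hα0 : 0 < α) (hα : α < 1) (hC : 0 < C)
    (hc' : 0 < c') (hc'1 : c' ≤ 1) (hR : 0 < R)
    (h : ∀ x₀, R ≤ ‖x₀‖ → ‖fderiv ℝ q x₀‖ ≤ C / ‖x₀‖ ∧ ∀ x, ‖x - x₀‖ ≤ c' * ‖x₀‖ →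
      ‖q x - q x₀ - fderiv ℝ q x₀ (x - x₀)‖ ≤ C * ‖x₀‖ ^ (-1 - α) * ‖x - x₀‖ ^ (1 + α)) :
    ∃ C', 0 < C' ∧ ∀ x₀ x₁, 2 * R ≤ ‖x₀‖ → ‖x₁ - x₀‖ ≤ ‖x₀‖ / 2 →
      ‖fderiv ℝ q x₁ - fderiv ℝ q x₀‖ ≤ C' * ‖x₀‖ ^ (-1 - α) * ‖x₁ - x₀‖ ^ α := by
  refine ⟨C * (4 + 1 + 4) + 3 * C * (4 / c'), by positivity, fun x₀ x₁ hx₀ hd => ?_⟩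
  have hr0 : 0 < ‖x₀‖ := by linarith
  obtain ⟨hQ₀, hE₀⟩ := h x₀ (by linarith)
  have hx₁ : ‖x₀‖ / 2 ≤ ‖x₁‖ := by
    have := norm_sub_norm_le x₀ x₁
    rw [norm_sub_rev] at this
    linarith
  obtain ⟨hQ₁, hE₁⟩ := h x₁ (by linarith)
  rcases eq_or_ne x₁ x₀ with rfl | hne
  · rw [sub_self, norm_zero]; positivity
  have hd0 : 0 < ‖x₁ - x₀‖ := norm_pos_iff.2 (sub_ne_zero.2 hne)
  set d := ‖x₁ - x₀‖ with hdd
  set r := ‖x₀‖ with hr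
  have hrα : 0 < r ^ (-1 - α) := by positivity
  have hdα : 0 < d ^ α := by positivity
  have hX : 0 ≤ C * (r ^ (-1 - α) * d ^ α) := by positivity
  by_cases hsmall : d ≤ c' * r / 4
  · have key : ‖fderiv ℝ q x₁ - fderiv ℝ q x₀‖ ≤ C * (4 + 1 + 4) * r ^ (-1 - α) * d ^ α := by
      refine ContinuousLinearMap.opNorm_le_of_unit_norm (by positivity) fun v hv => ?_
      -- test both expansions at a third point, at distance `d` from `x₁` in the direction `v`
      set x := x₁ + d • v with hx
      have n1 : ‖x - x₁‖ = d := by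
        rw [hx, add_sub_cancel_left, norm_smul, hv, Real.norm_of_nonneg hd0.le, mul_one]
      have n0 : ‖x - x₀‖ ≤ 2 * d := by
        have := norm_add_le (x - x₁) (x₁ - x₀)
        rw [sub_add_sub_cancel] at this
        linarith
      have e1 := hE₁ x (by rw [n1]; nlinarith)
      have e2 := hE₀ x (by nlinarith)
      have e3 := hE₀ x₁ (by rw [← hdd]; nlinarith)
      have p1 : (2:ℝ) ^ (1 + α) ≤ 4 := by
        calc (2:ℝ) ^ (1 + α) ≤ (2:ℝ) ^ (2:ℝ) :=
              Real.rpow_le_rpow_of_exponent_le (by norm_num) (by linarith)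
          _ = 4 := by norm_num
      have b1 : ‖q x - q x₁ - fderiv ℝ q x₁ (x - x₁)‖ ≤ C * (4 * r ^ (-1 - α)) * d ^ (1 + α) := by
        refine e1.trans ?_
        rw [n1]
        gcongr
        calc ‖x₁‖ ^ (-1 - α) ≤ (r / 2) ^ (-1 - α) :=
              Real.rpow_le_rpow_of_nonpos (by positivity) hx₁ (by linarith)
          _ = (2:ℝ) ^ (1 + α) * r ^ (-1 - α) := by
              rw [Real.div_rpow hr0.le (by norm_num), show -1 - α = -(1 + α) by ring,
                Real.rpow_neg (by norm_num : (0:ℝ) ≤ 2), div_inv_eq_mul, mul_comm]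
          _ ≤ _ := by gcongr
      have b2 : ‖q x - q x₀ - fderiv ℝ q x₀ (x - x₀)‖ ≤ C * r ^ (-1 - α) * (4 * d ^ (1 + α)) := by
        refine e2.trans ?_
        gcongr
        calc ‖x - x₀‖ ^ (1 + α) ≤ (2 * d) ^ (1 + α) := by gcongr
          _ = (2:ℝ) ^ (1 + α) * d ^ (1 + α) := Real.mul_rpow (by norm_num) hd0.le
          _ ≤ _ := by gcongr
      have hid : d • ((fderiv ℝ q x₁ - fderiv ℝ q x₀) v) =
          (q x - q x₀ - fderiv ℝ q x₀ (x - x₀)) - (q x₁ - q x₀ - fderiv ℝ q x₀ (x₁ - x₀)) -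
          (q x - q x₁ - fderiv ℝ q x₁ (x - x₁)) := by
        have hA : x - x₀ = d • v + (x₁ - x₀) := by rw [hx]; abel
        have hB : x - x₁ = d • v := by rw [hx]; abel
        rw [hA, hB, map_add, map_smul, map_smul, sub_apply, smul_sub]
        abel
      have hn : d * ‖(fderiv ℝ q x₁ - fderiv ℝ q x₀) v‖ ≤
          C * (4 + 1 + 4) * r ^ (-1 - α) * d ^ (1 + α) := by
        rw [← Real.norm_of_nonneg hd0.le, ← norm_smul, Real.norm_of_nonneg hd0.le, hid]
        refine (norm_sub_le _ _).trans ?_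
        have := norm_sub_le (q x - q x₀ - fderiv ℝ q x₀ (x - x₀))
          (q x₁ - q x₀ - fderiv ℝ q x₀ (x₁ - x₀))
        rw [← hdd] at e3
        linarith
      refine le_of_mul_le_mul_left (hn.trans (le_of_eq ?_)) hd0
      rw [Real.rpow_add hd0, Real.rpow_one]
      ring
    refine key.trans ?_
    have : 0 ≤ 3 * C * (4 / c') * (r ^ (-1 - α) * d ^ α) := by positivity
    linarith
  · push Not at hsmall
    have h1 : ‖fderiv ℝ q x₁‖ ≤ 2 * C / r := by
      refine hQ₁.trans ?_
      rw [div_le_div_iff₀ (by linarith) hr0]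
      nlinarith
    have h2 : 1 ≤ 4 / c' * (r ^ (-α) * d ^ α) := by
      have hq : 4 * d / c' ≥ r := by
        rw [ge_iff_le, le_div_iff₀ hc']; linarith
      have h3 : 1 ≤ (4 / c') := by rw [le_div_iff₀ hc']; linarith
      have h4 : r ^ α ≤ 4 / c' * d ^ α := by
        calc r ^ α ≤ (4 / c' * d) ^ α := by
              gcongr; rw [div_mul_eq_mul_div]; exact hq
          _ = (4 / c') ^ α * d ^ α := Real.mul_rpow (by positivity) hd0.le
          _ ≤ (4 / c') ^ (1:ℝ) * d ^ α := by
              gcongr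
          _ = _ := by rw [Real.rpow_one]
      have h5 : r ^ (-α) * r ^ α = 1 := by rw [← Real.rpow_add hr0]; simp
      calc 1 = r ^ (-α) * r ^ α := h5.symm
        _ ≤ r ^ (-α) * (4 / c' * d ^ α) := by gcongr
        _ = _ := by ring
    calc _ ≤ 2 * C / r + C / r := (norm_sub_le _ _).trans (add_le_add h1 hQ₀)
      _ = 3 * C / r * 1 := by ring
      _ ≤ 3 * C / r * (4 / c' * (r ^ (-α) * d ^ α)) := by gcongr
      _ = 3 * C * (4 / c') * r ^ (-1 - α) * d ^ α := by
        rw [show -1 - α = -1 + -α by ring, Real.rpow_add hr0, Real.rpow_neg_one]; ring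
      _ ≤ _ := by
        have : 0 ≤ C * (4 + 1 + 4) * (r ^ (-1 - α) * d ^ α) := by positivity
        linarith

/-! ### Asymptotics in complex form -/

/-- The full estimate for the perturbation `q` of a linear map of constant phase, in complex
form: a gradient field `A x + q x` of phase `θ + F` with subquadratic potential has
`q = O(1)` and `Dq = O(1/|x|)`, with the matching Hölder bound. -/
theorem complex_asymptotics {θ β ε C₀ C₁ R₀ α : ℝ} (hθ0 : 0 < θ) (hθπ : θ < π) (hβ : 2 < β)
    (hε0 : 0 < ε) (hε1 : ε < 1) (hC₀ : 0 ≤ C₀) (hC₁ : 0 ≤ C₁) (hα0 : 0 < α) (hα : α < 1)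
    {A : ℂ →L[ℝ] ℂ} (hA : HasPhase A θ) {F w : ℂ → ℝ} {q : ℂ → ℂ}
    (hw : ∀ z, HasFDerivAt w (innerSL ℝ (q z)) z) (hq : ContDiff ℝ 1 q)
    (hP : ∀ x, HasPhase (A + fderiv ℝ q x) (θ + F x))
    (hF : ∀ x, R₀ ≤ ‖x‖ → |F x| ≤ C₀ * ‖x‖ ^ (-β))
    (hFL : ∀ x y, R₀ ≤ ‖x‖ → ‖y - x‖ < ‖x‖ / 2 →
      |F y - F x| ≤ C₀ * ‖x‖ ^ (-(β + 1)) * ‖y - x‖)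
    (hb : ∀ x, R₀ ≤ ‖x‖ → |w x| ≤ C₁ * ‖x‖ ^ (2 - ε)) :
    ∃ C R, 0 < C ∧ 1 ≤ R ∧ ∀ x, R ≤ ‖x‖ → |w x| ≤ C * ‖x‖ ∧ ‖q x‖ ≤ C ∧
      ‖fderiv ℝ q x‖ ≤ C / ‖x‖ ∧ ∀ x₁, ‖x₁ - x‖ ≤ ‖x‖ / 2 →
        ‖fderiv ℝ q x₁ - fderiv ℝ q x‖ ≤ C * ‖x‖ ^ (-1 - α) * ‖x₁ - x‖ ^ α := by
  obtain ⟨κ, η, hκ, hκ1, hη, hnear⟩ := near_theta hθ0 hθπ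
  have hθη : |θ - θ| ≤ η := by rw [sub_self, abs_zero]; exact hη.le
  have hnθ := hnear θ θ hθη hθη
  have hcoA : ∀ v, κ * ‖v‖ ^ 2 ≤ inner ℝ (cos (θ / 2) • v + sin (θ / 2) • A v) v := fun v =>
    hA.coercive (by linarith) hκ.le (by linarith) (by linarith) v
  obtain ⟨m, L, hL, hm, hk⟩ := hA.complex_linear hκ hκ1 hnθ.1 hnθ.2.1 hcoA
  set R₁ := max 1 (max R₀ (C₀ / η)) with hR₁
  have hR₁1 : 1 ≤ R₁ := le_max_left _ _
  have hR₁0 : R₀ ≤ R₁ := (le_max_left _ _).trans (le_max_right _ _)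
  have hR₁η : C₀ / η ≤ R₁ := (le_max_right _ _).trans (le_max_right _ _)
  have hF1 : ∀ x, R₁ ≤ ‖x‖ → |F x| ≤ C₀ / ‖x‖ := fun x hx => by
    refine (hF x (hR₁0.trans hx)).trans ?_
    rw [div_eq_mul_inv, ← Real.rpow_neg_one]
    gcongr <;> linarith
  have hFη : ∀ x, R₁ ≤ ‖x‖ → |F x| ≤ η := fun x hx => by
    refine (hF1 x hx).trans ?_
    rw [div_le_iff₀ (by linarith), mul_comm, ← div_le_iff₀ hη]
    linarith
  have hF2 : ∀ x y, R₁ ≤ ‖x‖ → ‖y - x‖ < ‖x‖ / 2 →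
      |F y - F x| ≤ C₀ / ‖x‖ ^ 2 * ‖y - x‖ := fun x y hx hy => by
    refine (hFL x y (hR₁0.trans hx) hy).trans ?_
    have h1 : ‖x‖ ^ (-(β + 1)) ≤ (‖x‖ ^ 2)⁻¹ := by
      rw [← Real.rpow_natCast, ← Real.rpow_neg (norm_nonneg _)]
      refine Real.rpow_le_rpow_of_exponent_le (by linarith) ?_
      push_cast
      linarith
    rw [div_eq_mul_inv]
    gcongr
  have hsin : ∀ x, R₁ ≤ ‖x‖ → κ ≤ sin (θ + F x) := fun x hx => by
    have : |θ + F x - θ| ≤ η := by rw [add_sub_cancel_left]; exact hFη x hx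
    exact (hnear _ _ this this).1
  -- the Hessian of `w` is bounded below, because that of the full potential is
  have hH : ∀ x, R₁ ≤ ‖x‖ → ∀ v, -(1 / κ + ‖A‖) * ‖v‖ ^ 2 ≤ inner ℝ (fderiv ℝ q x v) v := by
    intro x hx v
    have h1 := (hP x).nonneg v
    have h2 := hsin x hx
    rw [add_apply, inner_add_left] at h1
    have h3 : inner ℝ (A v) v ≤ ‖A‖ * ‖v‖ ^ 2 := by
      refine (real_inner_le_norm _ _).trans ?_
      have := mul_le_mul_of_nonneg_right (A.le_opNorm v) (norm_nonneg v)
      linarith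
    generalize (inner ℝ (A v) v : ℝ) = a at *
    generalize (inner ℝ (fderiv ℝ q x v) v : ℝ) = b at *
    have h4 := cos_le_one (θ + F x)
    have hv : 0 ≤ ‖v‖ ^ 2 := by positivity
    have h5 : 0 ≤ sin (θ + F x) * (a + b) + ‖v‖ ^ 2 := by nlinarith
    have h6 : -(1 / κ) * ‖v‖ ^ 2 ≤ a + b := by
      by_contra hcon
      push Not at hcon
      have h7 : 0 ≤ 1 / κ * ‖v‖ ^ 2 := by positivity
      have h8 : κ * (a + b) < κ * (-(1 / κ) * ‖v‖ ^ 2) := by gcongr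
      have h9 : κ * (-(1 / κ) * ‖v‖ ^ 2) = - ‖v‖ ^ 2 := by field_simp
      nlinarith
    linarith
  have hK : 0 ≤ 1 / κ + ‖A‖ := by positivity
  have hgb := grad_bound hε0 hε1 hK hC₁ hR₁1 hw hq hH (fun x hx => hb x (hR₁0.trans hx))
  set C₂ := 10 * C₁ + (1 / κ + ‖A‖) with hC₂
  have hC₂0 : 0 ≤ C₂ := by positivity
  obtain ⟨R₂, hR₂, hR₂1, p, hp, hpq, hpco⟩ := exists_extension (R₁ := 2 * R₁) hκ hε0 hη.le hnear hA hq
    hC₂0 (fun x hx => hFη x (by linarith)) (fun x _ => hP x) hgb hε1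
  have hfd : ∀ x, R₂ < ‖x‖ → fderiv ℝ p x = fderiv ℝ q x := fun x hx => by
    refine Filter.EventuallyEq.fderiv_eq ?_
    filter_upwards [(isOpen_lt continuous_const continuous_norm).mem_nhds hx] with y hy
    exact hpq y (le_of_lt hy)
  set R₃ := R₂ + 1 with hR₃
  have hP3 : ∀ x, R₃ ≤ ‖x‖ → HasPhase (A + fderiv ℝ p x) (θ + F x) := fun x hx => by
    rw [hfd x (by linarith)]; exact hP x
  obtain ⟨M, hM⟩ := global_bound (R := R₃) (δ := ε / 2) hκ hκ1 hβ (by linarith) (by linarith) hC₀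
    hC₂0 (by linarith) hnθ.2.1 hL hm hk hp (hpco θ hθη)
    (fun x hx => hF x (by linarith)) (fun x hx => ⟨hP3 x hx, hsin x (by linarith)⟩)
    (fun x hx => by rw [hpq x (by linarith)]; exact hgb x (by linarith))
  have hM0 : 0 ≤ M := (norm_nonneg _).trans (hM 0)
  obtain ⟨C₄, c', R₄, hC₄, hc', hc'1, hR₄, hexp⟩ := expansion hα0 hα hκ hκ1 hC₀
    (by linarith : 1 ≤ R₃) hM0 hnear hL hm hk hp hpco
    (fun x hx => hFη x (by linarith)) (fun x hx => hF1 x (by linarith))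
    (fun x y hx => hF2 x y (by linarith)) hP3 hM
  obtain ⟨C₅, hC₅, hhol⟩ := holder_of_expansion hα0 hα hC₄ hc' hc'1 (by linarith) hexp
  -- a bound for `q` on the whole plane, integrated to a linear bound for `w`
  obtain ⟨N, hN⟩ : ∃ N, ∀ x, ‖x‖ ≤ R₂ → ‖q x‖ ≤ N := by
    obtain ⟨N, hN⟩ := (isCompact_closedBall (0:ℂ) R₂).exists_bound_of_continuousOn
      hq.continuous.continuousOn
    exact ⟨N, fun x hx => hN x (by simpa using hx)⟩
  have hqall : ∀ x, ‖q x‖ ≤ max M N := fun x => by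
    rcases le_total ‖x‖ R₂ with h | h
    · exact (hN x h).trans (le_max_right _ _)
    · rw [← hpq x h]; exact (hM x).trans (le_max_left _ _)
  have hMN : 0 ≤ max M N := hM0.trans (le_max_left _ _)
  have hwlin : ∀ x, |w x| ≤ |w 0| + max M N * ‖x‖ := fun x => by
    have h1 := (convex_univ (𝕜 := ℝ) (E := ℂ)).norm_image_sub_le_of_norm_hasFDerivWithin_le
      (f := w) (f' := fun z => innerSL ℝ (q z)) (C := max M N)
      (fun z _ => (hw z).hasFDerivWithinAt)
      (fun z _ => by rw [innerSL_apply_norm]; exact hqall z) (Set.mem_univ 0) (Set.mem_univ x)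
    rw [sub_zero, Real.norm_eq_abs] at h1
    have := abs_sub_abs_le_abs_sub (w x) (w 0)
    linarith
  refine ⟨|w 0| + max M N + C₄ + C₅, 2 * R₄, by positivity, by linarith, fun x hx => ?_⟩
  have hx1 : 1 ≤ ‖x‖ := by linarith
  have hw0 := abs_nonneg (w 0)
  refine ⟨?_, ?_, ?_, fun x₁ hx₁ => ?_⟩
  · have := hwlin x
    nlinarith
  · linarith [hqall x]
  · rw [← hfd x (by linarith)]
    refine (hexp x (by linarith)).1.trans ?_
    gcongr
    linarith
  · have h1 : ‖x‖ / 2 ≤ ‖x₁‖ := by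
      have := norm_sub_norm_le x x₁
      rw [norm_sub_rev] at this
      linarith
    rw [← hfd x (by linarith), ← hfd x₁ (by linarith)]
    refine (hhol x x₁ hx hx₁).trans ?_
    gcongr
    linarith

/-! ### Transfer to the Euclidean plane -/

/-- The isometric identification of `ℂ` with the Euclidean plane. -/
def planeEquiv : ℂ ≃ₗᵢ[ℝ] E2 := Complex.orthonormalBasisOneI.repr

theorem planeEquiv_one : planeEquiv 1 = EuclideanSpace.single 0 1 := by
  have := Complex.orthonormalBasisOneI.repr_self 0
  simpa [planeEquiv] using this

theorem planeEquiv_I : planeEquiv Complex.I = EuclideanSpace.single 1 1 := by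
  have := Complex.orthonormalBasisOneI.repr_self 1
  simpa [planeEquiv] using this

theorem planeEquiv_zero_coord (z : ℂ) : planeEquiv z 0 = z.re := by
  simp [planeEquiv, Complex.orthonormalBasisOneI_repr_apply]

theorem planeEquiv_one_coord (z : ℂ) : planeEquiv z 1 = z.im := by
  simp [planeEquiv, Complex.orthonormalBasisOneI_repr_apply]

/-- The gradient of a function on the plane, as a map `ℂ → ℂ`. -/
def cgrad (u : E2 → ℝ) (z : ℂ) : ℂ :=
  (fderiv ℝ (fun y => u (planeEquiv y)) z 1 : ℂ) +
    (fderiv ℝ (fun y => u (planeEquiv y)) z Complex.I : ℂ) * Complex.I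

theorem contDiff_comp_planeEquiv {u : E2 → ℝ} {n : WithTop ℕ∞} (hu : ContDiff ℝ n u) :
    ContDiff ℝ n (fun y => u (planeEquiv y)) :=
  hu.comp (planeEquiv.toContinuousLinearEquiv : ℂ →L[ℝ] E2).contDiff

theorem cgrad_contDiff {u : E2 → ℝ} (hu : ContDiff ℝ 2 u) : ContDiff ℝ 1 (cgrad u) := by
  have h1 : ContDiff ℝ 1 (fderiv ℝ (fun y => u (planeEquiv y))) :=
    (contDiff_comp_planeEquiv hu).fderiv_right (by norm_num)
  have h2 : ∀ v, ContDiff ℝ 1 (fun z => (fderiv ℝ (fun y => u (planeEquiv y)) z v : ℂ)) := fun v =>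
    Complex.ofRealCLM.contDiff.comp (h1.clm_apply contDiff_const)
  exact (h2 1).add ((h2 Complex.I).mul contDiff_const)

theorem hasFDerivAt_cgrad {u : E2 → ℝ} (hu : ContDiff ℝ 2 u) (z : ℂ) :
    HasFDerivAt (fun y => u (planeEquiv y)) (innerSL ℝ (cgrad u z)) z := by
  have h1 := ((contDiff_comp_planeEquiv hu).differentiable (by norm_num) z).hasFDerivAt
  refine h1.congr_fderiv ?_
  ext v
  symm
  rw [innerSL_apply_apply, inner_re_im]
  have hv : v = v.re • (1:ℂ) + v.im • Complex.I := by
    apply Complex.ext <;> simp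
  conv_rhs => rw [hv, map_add, map_smul, map_smul]
  simp [cgrad, mul_comm]

/-- Second derivatives on the plane in terms of the derivative of the complex gradient. -/
theorem iteratedFDeriv_two_eq {w : E2 → ℝ} {q : ℂ → ℂ} (hw : ContDiff ℝ 2 w)
    (hq : ContDiff ℝ 1 q)
    (hg : ∀ z, HasFDerivAt (fun y => w (planeEquiv y)) (innerSL ℝ (q z)) z) (x : E2)
    (m : Fin 2 → E2) :
    iteratedFDeriv ℝ 2 w x m =
      inner ℝ (fderiv ℝ q (planeEquiv.symm x) (planeEquiv.symm (m 0))) (planeEquiv.symm (m 1)) := by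
  have h1 : ∀ x v, fderiv ℝ w x v = inner ℝ (q (planeEquiv.symm x)) (planeEquiv.symm v) := by
    intro x v
    have h2 := hg (planeEquiv.symm x)
    have h3 : HasFDerivAt (planeEquiv.symm : E2 → ℂ)
        (planeEquiv.symm.toContinuousLinearEquiv : E2 →L[ℝ] ℂ) x :=
      (planeEquiv.symm.toContinuousLinearEquiv : E2 →L[ℝ] ℂ).hasFDerivAt
    have h4 := h2.comp x h3
    have h5 : (fun y => w (planeEquiv y)) ∘ (planeEquiv.symm : E2 → ℂ) = w := by
      ext y; simp
    rw [h5] at h4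
    rw [h4.fderiv]
    rfl
  rw [iteratedFDeriv_two_apply]
  have hd : DifferentiableAt ℝ (fderiv ℝ w) x :=
    ((hw.fderiv_right (m := 1) (by norm_num)).differentiable (by norm_num)) x
  have h2 : fderiv ℝ (fderiv ℝ w) x (m 0) (m 1) = fderiv ℝ (fun y => fderiv ℝ w y (m 1)) x (m 0) := by
    have := hd.hasFDerivAt.clm_apply (hasFDerivAt_const (m 1) x)
    rw [this.fderiv]
    simp
  rw [h2]
  have h3 : (fun y => fderiv ℝ w y (m 1)) =
      fun y => inner ℝ (q (planeEquiv.symm y)) (planeEquiv.symm (m 1)) := funext fun y => h1 y _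
  rw [h3]
  have h4 : HasFDerivAt (planeEquiv.symm : E2 → ℂ)
        (planeEquiv.symm.toContinuousLinearEquiv : E2 →L[ℝ] ℂ) x :=
      (planeEquiv.symm.toContinuousLinearEquiv : E2 →L[ℝ] ℂ).hasFDerivAt
  have h5 := ((hq.differentiable (by norm_num)) (planeEquiv.symm x)).hasFDerivAt.comp x h4
  have h6 := h5.inner ℝ (hasFDerivAt_const (planeEquiv.symm (m 1)) x)
  have h7 := h6.fderiv
  rw [show (fun y => (inner ℝ (q (planeEquiv.symm y)) (planeEquiv.symm (m 1)) : ℝ)) =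
    fun y => inner ℝ ((q ∘ planeEquiv.symm) y) (planeEquiv.symm (m 1)) from rfl, h7]
  simp

theorem lam_add (M : Matrix (Fin 2) (Fin 2) ℝ) : lam1 M + lam2 M = M 0 0 + M 1 1 := by
  unfold lam1 lam2; ring

theorem lam_mul (M : Matrix (Fin 2) (Fin 2) ℝ) :
    lam1 M * lam2 M = M 0 0 * M 1 1 - M 0 1 ^ 2 := by
  unfold lam1 lam2
  have h : 0 ≤ (M 0 0 - M 1 1) ^ 2 + 4 * M 0 1 ^ 2 := by positivity
  have := Real.sq_sqrt h
  linear_combination (-1 / 4) * this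

/-- A symmetric matrix as a real-linear map of the complex plane. The formula is that of the
transpose, which is immaterial for symmetric `A`. -/
def matC (A : Matrix (Fin 2) (Fin 2) ℝ) : ℂ →L[ℝ] ℂ :=
  Complex.reCLM.smulRight ((A 0 0 : ℂ) + (A 0 1 : ℂ) * Complex.I) +
    Complex.imCLM.smulRight ((A 1 0 : ℂ) + (A 1 1 : ℂ) * Complex.I)

theorem matC_re (A : Matrix (Fin 2) (Fin 2) ℝ) (z : ℂ) :
    (matC A z).re = A 0 0 * z.re + A 1 0 * z.im := by
  simp [matC]; ring

theorem matC_im (A : Matrix (Fin 2) (Fin 2) ℝ) (z : ℂ) :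
    (matC A z).im = A 0 1 * z.re + A 1 1 * z.im := by
  simp [matC]; ring

theorem matC_hasPhase {A : Matrix (Fin 2) (Fin 2) ℝ} {θ : ℝ} (hA : A ∈ calA θ) :
    HasPhase (matC A) θ := by
  obtain ⟨h1, h2⟩ := hA
  have hs : A 1 0 = A 0 1 := h1.apply 0 1
  refine hasPhase_of_eigenvalues (l₁ := lam1 A) (l₂ := lam2 A) ?_ ?_ ?_ h2
  · rw [matC_im, matC_re, hs]; simp
  · rw [matC_im, matC_re, lam_add]; simp
  · rw [matC_im, matC_im, matC_re, lam_mul]; simp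

theorem quadForm_planeEquiv (A : Matrix (Fin 2) (Fin 2) ℝ) (z : ℂ) :
    quadForm A (planeEquiv z) = inner ℝ (matC A z) z := by
  rw [inner_re_im, matC_re, matC_im]
  simp only [quadForm, Fin.sum_univ_two, planeEquiv_zero_coord, planeEquiv_one_coord]
  ring

theorem quadForm_contDiff (A : Matrix (Fin 2) (Fin 2) ℝ) {n : WithTop ℕ∞} :
    ContDiff ℝ n (quadForm A) := by
  unfold quadForm
  fun_prop

/-- The complex gradient of half the quadratic form of `A` is `A` itself. -/
theorem hasFDerivAt_quadForm {A : Matrix (Fin 2) (Fin 2) ℝ} (hA : A.IsSymm) (z : ℂ) :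
    HasFDerivAt (fun y => quadForm A (planeEquiv y) / 2) (innerSL ℝ (matC A z)) z := by
  have h1 : (fun y => quadForm A (planeEquiv y) / 2) =
      fun y => (inner ℝ (matC A y) y : ℝ) * 2⁻¹ := by
    funext y; rw [quadForm_planeEquiv, div_eq_mul_inv]
  rw [h1]
  have h2 := ((matC A).hasFDerivAt (x := z)).inner ℝ (hasFDerivAt_id (𝕜 := ℝ) z)
  have h3 := h2.mul_const (2⁻¹ : ℝ)
  refine h3.congr_fderiv ?_
  ext v
  have hs : A 1 0 = A 0 1 := hA.apply 0 1
  simp [matC_re, matC_im, hs]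
  ring

/-- The Lagrangian phase equation at a point, in terms of the complex gradient. -/
theorem cgrad_hasPhase {u : E2 → ℝ} (hu : ContDiff ℝ 2 u) {z : ℂ} {φ : ℝ}
    (h : Phase (Hess u (planeEquiv z)) = φ) : HasPhase (fderiv ℝ (cgrad u) z) φ := by
  have hM : ∀ i j, Hess u (planeEquiv z) i j =
      inner ℝ (fderiv ℝ (cgrad u) z (planeEquiv.symm (EuclideanSpace.single i 1)))
        (planeEquiv.symm (EuclideanSpace.single j 1)) := fun i j => by
    rw [Hess, Matrix.of_apply, iteratedFDeriv_two_eq hu (cgrad_contDiff hu) (hasFDerivAt_cgrad hu)]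
    simp
  have hb0 : planeEquiv.symm (EuclideanSpace.single 0 1) = 1 := by
    rw [← planeEquiv_one, LinearIsometryEquiv.symm_apply_apply]
  have hb1 : planeEquiv.symm (EuclideanSpace.single 1 1) = Complex.I := by
    rw [← planeEquiv_I, LinearIsometryEquiv.symm_apply_apply]
  have h00 := hM 0 0
  have h01 := hM 0 1
  have h10 := hM 1 0
  have h11 := hM 1 1
  rw [hb0, inner_re_im] at h00
  rw [hb0, hb1, inner_re_im] at h01 h10
  rw [hb1, inner_re_im] at h11
  simp only [Complex.one_re, Complex.one_im, Complex.I_re, Complex.I_im, mul_one, mul_zero,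
    add_zero, zero_add] at h00 h01 h10 h11
  have hsym : Hess u (planeEquiv z) 0 1 = Hess u (planeEquiv z) 1 0 := by
    rw [Hess, Matrix.of_apply, Matrix.of_apply, iteratedFDeriv_two_apply, iteratedFDeriv_two_apply]
    have := (hu.contDiffAt (x := planeEquiv z)).isSymmSndFDerivAt (by simp)
    exact this _ _
  refine hasPhase_of_eigenvalues (l₁ := lam1 (Hess u (planeEquiv z)))
    (l₂ := lam2 (Hess u (planeEquiv z))) ?_ ?_ ?_ h
  · rw [← h01, ← h10, hsym]
  · rw [lam_add, h00, h11]
  · rw [lam_mul, h00, h01, h11]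

/-- The consequences of the decay condition that are used: since `|x| ≤ |x| + |Du(x)|`, the gradient
can be dropped from the weights. -/
theorem DecayCond.pointwise {β : ℝ} {u f : E2 → ℝ} (hβ : 0 ≤ β) (h : DecayCond β u f) :
    ∃ C₀ > (0:ℝ), ∃ R₀ > (0:ℝ), ∀ x : E2, R₀ ≤ ‖x‖ → |f x| ≤ C₀ * ‖x‖ ^ (-β) ∧
      ∀ y, ‖y - x‖ < ‖x‖ / 2 → |f y - f x| ≤ C₀ * ‖x‖ ^ (-(β + 1)) * ‖y - x‖ := by
  obtain ⟨C₀, hC₀, R₀, hR₀, h⟩ := h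
  refine ⟨C₀, hC₀, R₀, hR₀, fun x hx => ?_⟩
  have hx0 : 0 < ‖x‖ := by linarith
  have h0 := h x hx
  have hs : ‖x‖ ≤ ‖x‖ + ‖gradient u x‖ := by linarith [norm_nonneg (gradient u x)]
  generalize ‖x‖ + ‖gradient u x‖ = s at h0 hs
  constructor
  · have h1 := (le_self_add).trans h0
    rw [ENNReal.ofReal_le_ofReal_iff hC₀.le] at h1
    have h2 : ‖x‖ ^ β * |f x| ≤ C₀ := le_trans (by gcongr) h1
    rw [Real.rpow_neg hx0.le, ← div_eq_mul_inv, le_div_iff₀ (by positivity)]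
    linarith
  · intro y hy
    rcases eq_or_ne y x with rfl | hne
    · simp
    have hyx : 0 < ‖y - x‖ := norm_pos_iff.2 (sub_ne_zero.2 hne)
    have h1 : ENNReal.ofReal (s ^ (β + 1)) * ENNReal.ofReal (‖f y - f x‖ / ‖y - x‖ ^ (1:ℝ)) ≤
        ENNReal.ofReal C₀ := by
      refine le_trans ?_ (le_add_self.trans h0)
      refine mul_le_mul_right ?_ _
      have hy' : y ∈ Metric.ball x (‖x‖ / 2) := by rwa [Metric.mem_ball, dist_eq_norm]
      have hx' : x ∈ Metric.ball x (‖x‖ / 2) := Metric.mem_ball_self (by positivity)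
      exact le_iSup₂_of_le y hy' (le_iSup₂_of_le x hx' le_rfl)
    have hs0 : 0 < s := by linarith
    rw [← ENNReal.ofReal_mul (by positivity), ENNReal.ofReal_le_ofReal_iff hC₀.le, Real.rpow_one,
      Real.norm_eq_abs] at h1
    have h2 : ‖x‖ ^ (β + 1) * (|f y - f x| / ‖y - x‖) ≤ C₀ := le_trans (by gcongr) h1
    rw [← mul_div_assoc, div_le_iff₀ hyx] at h2
    rw [Real.rpow_neg hx0.le, mul_assoc, mul_comm _ ‖y - x‖, ← mul_assoc, ← div_eq_mul_inv,
      le_div_iff₀ (by positivity)]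
    linarith

theorem statement14
    (θ β : ℝ) (hθ : 0 < θ) (hβ : 2 < β)
    (u f : E2 → ℝ) (hu : ContDiff ℝ (⊤ : ℕ∞) u)
    (hrange : ∀ x : E2, θ + f x ∈ Set.Ioo 0 π)
    (hfl : ∃ Ω : Set E2, Bornology.IsBounded Ω ∧ ∃ K : NNReal, LipschitzOnWith K f Ωᶜ)
    (heq : ∀ x : E2, Phase (Hess u x) = θ + f x)
    (hdecay : DecayCond β u f)
    (A : Matrix (Fin 2) (Fin 2) ℝ) (hA : A ∈ calA θ)
    (ε C₁ R₀ : ℝ) (hε : ε ∈ Set.Ioo (0:ℝ) (1/2)) (hC₁ : 0 < C₁) (hR₀ : 0 < R₀)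
    (hclose : ∀ x : E2, R₀ ≤ ‖x‖ → |u x - quadForm A x / 2| ≤ C₁ * ‖x‖ ^ (2 - ε)) :
    ∀ ε' ∈ Set.Ioo (0:ℝ) (2 * ε), ∀ α ∈ Set.Ioo (0:ℝ) 1, ∃ C > (0:ℝ), ∃ R > R₀,
      (∀ x : E2, R < ‖x‖ → ∀ k : ℕ, k ≤ 2 →
        ‖iteratedFDeriv ℝ k (fun y => u y - quadForm A y / 2) x‖
          ≤ C * ‖x‖ ^ (2 - ε' - k))
      ∧ ∀ x₁ x₂ : E2, R < ‖x₁‖ → x₂ ∈ Metric.ball x₁ (‖x₁‖ / 2) →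
          ‖iteratedFDeriv ℝ 2 (fun y => u y - quadForm A y / 2) x₁
            - iteratedFDeriv ℝ 2 (fun y => u y - quadForm A y / 2) x₂‖
            ≤ C * ‖x₁‖ ^ (-ε' - α) * ‖x₁ - x₂‖ ^ α := by
  intro ε' hε' α hα
  obtain ⟨hε0, hε2⟩ := hε
  have hθπ : θ < π := by
    rw [← hA.2]
    have h1 := arctan_lt_pi_div_two (lam1 A)
    have h2 := arctan_lt_pi_div_two (lam2 A)
    unfold Phase
    linarith
  have hu2 : ContDiff ℝ 2 u := contDiff_infty.1 hu 2
  set w : E2 → ℝ := fun y => u y - quadForm A y / 2 with hw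
  have hw2 : ContDiff ℝ 2 w := hu2.sub ((quadForm_contDiff A).div_const 2)
  set q : ℂ → ℂ := fun z => cgrad u z - matC A z with hq
  have hq1 : ContDiff ℝ 1 q := (cgrad_contDiff hu2).sub (matC A).contDiff
  have hwq : ∀ z, HasFDerivAt (fun y => w (planeEquiv y)) (innerSL ℝ (q z)) z := fun z => by
    have := (hasFDerivAt_cgrad hu2 z).sub (hasFDerivAt_quadForm hA.1 z)
    rw [← map_sub] at this
    exact this
  have hqd : ∀ z, matC A + fderiv ℝ q z = fderiv ℝ (cgrad u) z := fun z => by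
    have h1 := (((cgrad_contDiff hu2).differentiable (by norm_num)) z).hasFDerivAt.sub
      ((matC A).hasFDerivAt (x := z))
    have h2 : fderiv ℝ q z = fderiv ℝ (cgrad u) z - matC A := h1.fderiv
    rw [h2, add_sub_cancel]
  obtain ⟨C₀, hC₀, R₁, hR₁, hdec⟩ := hdecay.pointwise (by linarith)
  obtain ⟨C, R, hC, hR, hmain⟩ := complex_asymptotics (R₀ := max R₀ R₁)
    (F := fun z => f (planeEquiv z)) (w := fun z => w (planeEquiv z)) (q := q) hθ hθπ hβ hε0
    (by linarith) hC₀.le hC₁.le hα.1 hα.2 (matC_hasPhase hA) hwq hq1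
    (fun x => by rw [hqd]; exact cgrad_hasPhase hu2 (heq _))
    (fun x hx => by
      have := (hdec (planeEquiv x) (by
        rw [LinearIsometryEquiv.norm_map]; exact (le_max_right _ _).trans hx)).1
      rwa [LinearIsometryEquiv.norm_map] at this)
    (fun x y hx hy => by
      have := (hdec (planeEquiv x) (by
        rw [LinearIsometryEquiv.norm_map]; exact (le_max_right _ _).trans hx)).2 (planeEquiv y) (by
          rwa [← map_sub, LinearIsometryEquiv.norm_map, LinearIsometryEquiv.norm_map])
      rwa [← map_sub, LinearIsometryEquiv.norm_map, LinearIsometryEquiv.norm_map] at this)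
    (fun x hx => by
      have := hclose (planeEquiv x) (by
        rw [LinearIsometryEquiv.norm_map]; exact (le_max_left _ _).trans hx)
      rwa [LinearIsometryEquiv.norm_map] at this)
  -- the rates of `complex_asymptotics` imply the claimed ones because `ε' < 2 ε < 1`
  have hε'1 : ε' < 1 := by linarith [hε'.2]
  have hsymm : ∀ x : E2, ‖planeEquiv.symm x‖ = ‖x‖ := fun x => LinearIsometryEquiv.norm_map _ x
  refine ⟨C, hC, max (R₀ + 1) R, lt_of_lt_of_le (by linarith) (le_max_left _ _), ?_, ?_⟩
  · intro x hx k hk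
    have hxR : R ≤ ‖planeEquiv.symm x‖ := by
      rw [hsymm]; exact (lt_of_le_of_lt (le_max_right _ _) hx).le
    have hx1 : 1 ≤ ‖x‖ := by rw [← hsymm]; linarith
    obtain ⟨m0, m1, m2, -⟩ := hmain _ hxR
    rw [hsymm, LinearIsometryEquiv.apply_symm_apply] at m0
    rw [hsymm] at m2
    have hpow : ∀ a b : ℝ, a ≤ b → C * ‖x‖ ^ a ≤ C * ‖x‖ ^ b := fun a b hab => by
      gcongr
    interval_cases k
    · rw [norm_iteratedFDeriv_zero, Real.norm_eq_abs]
      refine m0.trans ?_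
      have := hpow 1 (2 - ε' - (0:ℕ)) (by push_cast; linarith)
      rwa [Real.rpow_one] at this
    · rw [norm_iteratedFDeriv_one]
      have h1 : ‖fderiv ℝ w x‖ ≤ C := by
        have h2 := (hwq (planeEquiv.symm x)).comp x
          (planeEquiv.symm.toContinuousLinearEquiv : E2 →L[ℝ] ℂ).hasFDerivAt
        have h3 : (fun y => w (planeEquiv y)) ∘ (planeEquiv.symm : E2 → ℂ) = w := by
          ext y; simp
        rw [h3] at h2
        rw [h2.fderiv]
        refine ContinuousLinearMap.opNorm_le_bound _ hC.le fun v => ?_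
        change ‖(inner ℝ (q (planeEquiv.symm x)) (planeEquiv.symm v) : ℝ)‖ ≤ _
        refine (norm_inner_le_norm _ _).trans ?_
        rw [hsymm]
        gcongr
      refine h1.trans ?_
      have := hpow 0 (2 - ε' - (1:ℕ)) (by push_cast; linarith)
      rwa [Real.rpow_zero, mul_one] at this
    · have h1 : ‖iteratedFDeriv ℝ 2 w x‖ ≤ C / ‖x‖ := by
        refine ContinuousMultilinearMap.opNorm_le_bound (by positivity) fun m => ?_
        rw [iteratedFDeriv_two_eq hw2 hq1 hwq, Fin.prod_univ_two]
        refine (norm_inner_le_norm _ _).trans ?_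
        rw [hsymm, ← mul_assoc]
        gcongr
        refine (ContinuousLinearMap.le_opNorm _ _).trans ?_
        rw [hsymm]
        gcongr
      refine h1.trans ?_
      have := hpow (-1) (2 - ε' - (2:ℕ)) (by push_cast; linarith)
      rwa [Real.rpow_neg_one, ← div_eq_mul_inv] at this
  · intro x₁ x₂ hx₁ hx₂
    have hxR : R ≤ ‖planeEquiv.symm x₁‖ := by
      rw [hsymm]; exact (lt_of_le_of_lt (le_max_right _ _) hx₁).le
    have hx1 : 1 ≤ ‖x₁‖ := by rw [← hsymm]; linarith
    have hd : ‖planeEquiv.symm x₂ - planeEquiv.symm x₁‖ = ‖x₁ - x₂‖ := by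
      rw [← map_sub, hsymm, norm_sub_rev]
    rw [Metric.mem_ball, dist_comm, dist_eq_norm] at hx₂
    have m3 := (hmain _ hxR).2.2.2 (planeEquiv.symm x₂) (by rw [hd, hsymm]; exact hx₂.le)
    rw [hd, hsymm, norm_sub_rev] at m3
    refine le_trans (b := C * ‖x₁‖ ^ (-1 - α) * ‖x₁ - x₂‖ ^ α) ?_ ?_
    · refine ContinuousMultilinearMap.opNorm_le_bound (by positivity) fun m => ?_
      rw [sub_apply, iteratedFDeriv_two_eq hw2 hq1 hwq,
        iteratedFDeriv_two_eq hw2 hq1 hwq, ← inner_sub_left, ← sub_apply, Fin.prod_univ_two]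
      refine (norm_inner_le_norm _ _).trans ?_
      rw [hsymm, ← mul_assoc]
      gcongr
      refine (ContinuousLinearMap.le_opNorm _ _).trans ?_
      rw [hsymm]
      gcongr
    · gcongr
end
end

section
/- Let θ ∈ (0,π), β ∈ (2,3), c, d ∈ ℝ, and set a = tan(θ/2). Define u₀(x) = (a/2)|x|² + d ln|x| + (d/2) ln(a²+1) + c + |x|^{2−β} for x ∈ ℝ² with |x| > 2. Then there exist constants C > 0 and R ≥ 2 such that for all |x| ≥ R: |arctan λ₁(D²u₀(x)) + arctan λ₂(D²u₀(x)) − θ| ≤ C |x|^{−β}, and the gradient of the function x ↦ arctan λ₁(D²u₀(x)) + arctan λ₂(D²u₀(x)) has norm at most C |x|^{−β−1}. -/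
/-!
The function `u₀` is radial, `u₀ x = f ‖x‖`, so `D²u₀` has the tangential eigenvalue
`P = f' / r` and the radial eigenvalue `Q = f''` (`hess_radial`, `phase_hess_eq`):
`P = a + d r⁻² + (2 - β) r ^ (-β)` and `Q = a - d r⁻² + (2 - β) (1 - β) r ^ (-β)`.
The phase is `G r = arctan P + arctan Q` with `2 arctan a = θ`.

In the first-order expansion of `arctan` at `a` the terms `± d r⁻²` cancel; what remains is
`O(r ^ (-β))` plus a quadratic error `O(r⁻⁴)`, and `r⁻⁴ ≤ r ^ (-β)`. In
`G' = P' / (1 + P²) + Q' / (1 + Q²)` the terms `∓ 2 d r⁻³` cancel up to the factor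
`1 / (1 + Q²) - 1 / (1 + P²) = O(P - Q) = O(r⁻²)`, so `G' = O(r ^ (-β - 1))`; the gradient of
`G ‖x‖` has norm `|G'|` (`hasFDerivAt_radial`). Both estimates are in `phase_bounds`.
-/


open Real MeasureTheory

noncomputable section

theorem hasFDerivAt_radial {g : ℝ → ℝ} {g' : ℝ} {x : E2} (hx : x ≠ 0)
    (hg : HasDerivAt g g' ‖x‖) :
    HasFDerivAt (fun y : E2 => g ‖y‖) ((g' / ‖x‖) • innerSL ℝ x) x := by
  have hn : ‖x‖ ≠ 0 := norm_ne_zero_iff.mpr hx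
  have h1 : HasFDerivAt (fun y : E2 => ‖y‖ ^ 2) (2 • innerSL ℝ x) x :=
    (hasStrictFDerivAt_norm_sq x).hasFDerivAt
  have h2 := h1.sqrt (pow_ne_zero 2 hn)
  have h3 : (fun y : E2 => √(‖y‖ ^ 2)) = fun y => ‖y‖ := by
    funext y; exact Real.sqrt_sq (norm_nonneg y)
  rw [h3, Real.sqrt_sq (norm_nonneg x)] at h2
  have h4 := hg.comp_hasFDerivAt x h2
  convert! h4 using 1
  ext v
  simp
  field_simp

/-- The Hessian of the radial function `f ‖x‖` when `f' = r p`: it is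
`p I + (p' / r) x ⊗ x`. -/
theorem hess_radial {f p p' : ℝ → ℝ} {ρ : ℝ} (hρ : 0 ≤ ρ)
    (hf : ∀ r, ρ < r → HasDerivAt f (r * p r) r)
    (hp : ∀ r, ρ < r → HasDerivAt p (p' r) r)
    {u : E2 → ℝ} (hu : ∀ x : E2, ρ < ‖x‖ → u x = f ‖x‖)
    {x : E2} (hx : ρ < ‖x‖) (i j : Fin 2) :
    Hess u x i j = p ‖x‖ * (if i = j then 1 else 0) + p' ‖x‖ / ‖x‖ * (x i * x j) := by
  have ho : IsOpen {y : E2 | ρ < ‖y‖} := isOpen_lt continuous_const continuous_norm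
  have hne : ∀ y : E2, ρ < ‖y‖ → y ≠ 0 := fun y hy =>
    norm_pos_iff.mp (hρ.trans_lt hy)
  have h1 : ∀ y : E2, ρ < ‖y‖ → fderiv ℝ u y = p ‖y‖ • innerSL ℝ y := by
    intro y hy
    have he : u =ᶠ[nhds y] fun z => f ‖z‖ := by
      filter_upwards [ho.mem_nhds hy] with z hz using hu z hz
    rw [he.fderiv_eq, (hasFDerivAt_radial (hne y hy) (hf _ hy)).fderiv]
    rw [mul_div_cancel_left₀ _ (norm_ne_zero_iff.mpr (hne y hy))]
  -- `innerSL` is conjugate-linear in its first slot; over `ℝ` it is definitionally linear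
  let L : E2 →L[ℝ] E2 →L[ℝ] ℝ := innerSL ℝ
  have hL : ∀ v w : E2, L v w = inner ℝ v w := fun _ _ => rfl
  have he : fderiv ℝ u =ᶠ[nhds x] fun y => p ‖y‖ • L y := by
    filter_upwards [ho.mem_nhds hx] with z hz using h1 z hz
  have h2 : HasFDerivAt (fun y => p ‖y‖ • L y)
      (p ‖x‖ • L + ((p' ‖x‖ / ‖x‖) • L x).smulRight (L x)) x :=
    (hasFDerivAt_radial (hne x hx) (hp _ hx)).smul L.hasFDerivAt
  simp only [Hess, Matrix.of_apply, iteratedFDeriv_two_apply]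
  rw [he.fderiv_eq, h2.fderiv]
  simp only [add_apply, smul_apply,
    ContinuousLinearMap.smulRight_apply, hL, smul_eq_mul]
  fin_cases i <;> fin_cases j <;> simp [EuclideanSpace.inner_single_right] <;> ring

/-- Identifies the phase from the trace and the discriminant. The larger of `P` and `Q` is
not specified: the phase is symmetric in the two eigenvalues, so it stays smooth where they
cross. -/
theorem phase_eq {M : Matrix (Fin 2) (Fin 2) ℝ} {P Q : ℝ} (ht : M 0 0 + M 1 1 = P + Q)
    (hd : (M 0 0 - M 1 1) ^ 2 + 4 * M 0 1 ^ 2 = (P - Q) ^ 2) :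
    Phase M = Real.arctan P + Real.arctan Q := by
  rw [Phase, lam1, lam2, ht, hd, Real.sqrt_sq_eq_abs]
  rcases abs_cases (P - Q) with ⟨h, -⟩ | ⟨h, -⟩ <;> rw [h]
  · rw [add_comm]; congr 2 <;> ring
  · congr 2 <;> ring

theorem abs_inv_sub_inv_le (x y : ℝ) :
    |1 / (1 + x ^ 2) - 1 / (1 + y ^ 2)| ≤ |x - y| := by
  have hx : 0 < 1 + x ^ 2 := by positivity
  have hy : 0 < 1 + y ^ 2 := by positivity
  have h : 1 / (1 + x ^ 2) - 1 / (1 + y ^ 2)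
      = (y - x) * ((x + y) / ((1 + x ^ 2) * (1 + y ^ 2))) := by
    field_simp; ring
  rw [h, abs_mul, abs_sub_comm y x]
  refine mul_le_of_le_one_right (abs_nonneg _) ?_
  rw [abs_div, abs_of_pos (mul_pos hx hy), div_le_one (mul_pos hx hy), abs_le]
  constructor <;> nlinarith [sq_nonneg (x - 1), sq_nonneg (y - 1), sq_nonneg (x + 1),
    sq_nonneg (y + 1), sq_nonneg (x * y)]

/-- First-order Taylor estimate for `arctan`, uniform in both points. -/
theorem abs_arctan_taylor_le (x a : ℝ) :
    |Real.arctan x - Real.arctan a - (x - a) / (1 + a ^ 2)| ≤ (x - a) ^ 2 := by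
  have key := (convex_uIcc a x).norm_image_sub_le_of_norm_hasDerivWithin_le
    (f := fun t => Real.arctan t - t * (1 / (1 + a ^ 2)))
    (f' := fun t => 1 / (1 + t ^ 2) - 1 / (1 + a ^ 2)) (C := |x - a|)
    (fun t _ => by
      have h := (Real.hasDerivAt_arctan t).sub
        ((hasDerivAt_id t).mul_const (1 / (1 + a ^ 2)))
      rw [one_mul] at h
      exact h.hasDerivWithinAt)
    (fun t ht => (abs_inv_sub_inv_le t a).trans
      (Set.abs_sub_left_of_mem_uIcc ht))
    Set.left_mem_uIcc Set.right_mem_uIcc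
  simp only [Real.norm_eq_abs] at key
  rw [← sq, sq_abs] at key
  convert key using 2
  ring

/-- The tangential eigenvalue `f'(r) / r`, where `f` is the radial profile of `u₀`. -/
def P (a β d r : ℝ) : ℝ := a + d / r ^ 2 + (2 - β) * r ^ (-β)

/-- The radial eigenvalue `f''(r)`. -/
def Q (a β d r : ℝ) : ℝ := a - d / r ^ 2 + (2 - β) * (1 - β) * r ^ (-β)

/-- The derivative of `P` in `r`. -/
def dP (β d r : ℝ) : ℝ := -2 * d / r ^ 3 - β * (2 - β) * (r ^ (-β) / r)

/-- The derivative of `Q` in `r`. -/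
def dQ (β d r : ℝ) : ℝ := 2 * d / r ^ 3 - β * ((2 - β) * (1 - β)) * (r ^ (-β) / r)

theorem hasDerivAt_P (a β d : ℝ) {r : ℝ} (hr : 0 < r) :
    HasDerivAt (P a β d) (dP β d r) r := by
  have h1 : HasDerivAt (fun r : ℝ => d / r ^ 2) (-2 * d / r ^ 3) r := by
    convert! (hasDerivAt_const r d).div (hasDerivAt_pow 2 r) (by positivity) using 1
    field_simp; simp [mul_comm]
  have h2 := Real.hasDerivAt_rpow_const (x := r) (p := -β) (Or.inl hr.ne')
  convert! ((h1.const_add a).add (h2.const_mul (2 - β))) using 1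
  rw [dP, Real.rpow_sub hr, Real.rpow_one]; ring

theorem hasDerivAt_Q (a β d : ℝ) {r : ℝ} (hr : 0 < r) :
    HasDerivAt (Q a β d) (dQ β d r) r := by
  have h1 : HasDerivAt (fun r : ℝ => d / r ^ 2) (-2 * d / r ^ 3) r := by
    convert! (hasDerivAt_const r d).div (hasDerivAt_pow 2 r) (by positivity) using 1
    field_simp; simp [mul_comm]
  have h2 := Real.hasDerivAt_rpow_const (x := r) (p := -β) (Or.inl hr.ne')
  convert! ((h1.const_sub a).add (h2.const_mul ((2 - β) * (1 - β)))) using 1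
  rw [dQ, Real.rpow_sub hr, Real.rpow_one]; ring

/-- The identity `f'' = (r P)'`. -/
theorem Q_eq (a β d : ℝ) {r : ℝ} (hr : 0 < r) : Q a β d r = P a β d r + r * dP β d r := by
  simp only [P, Q, dP]; field_simp; ring

theorem hasDerivAt_profile (a β d c : ℝ) {r : ℝ} (hr : 0 < r) :
    HasDerivAt (fun r : ℝ => a / 2 * r ^ 2 + d * Real.log r
        + d / 2 * Real.log (a ^ 2 + 1) + c + r ^ (2 - β)) (r * P a β d r) r := by
  have h2 := Real.hasDerivAt_rpow_const (x := r) (p := 2 - β) (Or.inl hr.ne')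
  convert! ((((((hasDerivAt_pow 2 r).const_mul (a / 2)).add
    ((Real.hasDerivAt_log hr.ne').const_mul d)).add_const
      (d / 2 * Real.log (a ^ 2 + 1))).add_const c).add h2) using 1
  rw [show 2 - β - 1 = -β + 1 by ring, Real.rpow_add hr, Real.rpow_one, P]
  field_simp; push_cast; ring

theorem phase_hess_eq {a β d c : ℝ} {u₀ : E2 → ℝ}
    (hu₀ : ∀ x : E2, 2 < ‖x‖ →
      u₀ x = a / 2 * ‖x‖ ^ 2 + d * Real.log ‖x‖
        + d / 2 * Real.log (a ^ 2 + 1) + c + ‖x‖ ^ (2 - β)) {x : E2} (hx : 2 < ‖x‖) :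
    Phase (Hess u₀ x) = Real.arctan (P a β d ‖x‖) + Real.arctan (Q a β d ‖x‖) := by
  have hr : 0 < ‖x‖ := by linarith
  have H := hess_radial (ρ := 2) (by norm_num)
    (fun r hr => hasDerivAt_profile a β d c (by linarith))
    (fun r hr => hasDerivAt_P a β d (by linarith)) hu₀ hx
  have hn : ‖x‖ ^ 2 = x 0 ^ 2 + x 1 ^ 2 := by
    rw [EuclideanSpace.norm_sq_eq]; simp
  have hQ := Q_eq a β d hr
  set k := dP β d ‖x‖ / ‖x‖ with hk
  have hQ' : Q a β d ‖x‖ = P a β d ‖x‖ + k * (x 0 ^ 2 + x 1 ^ 2) := by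
    rw [hQ, ← hn, hk]; field_simp
  apply phase_eq
  · simp only [H, hQ']; simp; ring
  · simp only [H, hQ']; simp; ring

/-- The quantitative core. With `s = r⁻²` and `w = r ^ (-β)` one has `s² ≤ w ≤ s` for
`2 < β < 3` and `r ≥ 1`. The contributions `± d s` of the two eigenvalues cancel to first
order, which leaves terms of size `w` and `s²` only. -/
theorem phase_bounds {a β d r : ℝ} (hβ : β ∈ Set.Ioo (2 : ℝ) 3) (hr : 1 ≤ r) :
    let K := |d| + |2 - β| + |(2 - β) * (1 - β)|
    |Real.arctan (P a β d r) + Real.arctan (Q a β d r) - 2 * Real.arctan a|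
        ≤ (K + 2 * K ^ 2) * r ^ (-β) ∧
    |1 / (1 + P a β d r ^ 2) * dP β d r + 1 / (1 + Q a β d r ^ 2) * dQ β d r|
        ≤ (4 * |d| * K + β * K) * r ^ (-β - 1) := by
  intro K
  obtain ⟨hβ2, hβ3⟩ := hβ
  have hr0 : 0 < r := by linarith
  set w := r ^ (-β) with hw
  have hw0 : 0 ≤ w := Real.rpow_nonneg hr0.le _
  set s := 1 / r ^ 2 with hs
  have hs0 : 0 ≤ s := by positivity
  have hsr : s = r ^ (-2 : ℝ) := by
    rw [Real.rpow_neg hr0.le, hs, one_div]; norm_cast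
  have hws : w ≤ s := by
    rw [hsr]; exact Real.rpow_le_rpow_of_exponent_le hr (by linarith)
  have hsw : s ^ 2 ≤ w := by
    rw [hsr, ← Real.rpow_natCast, ← Real.rpow_mul hr0.le]
    exact Real.rpow_le_rpow_of_exponent_le hr (by push_cast; linarith)
  have hK0 : 0 ≤ K := by positivity
  set p := 2 - β with hp
  set q := (2 - β) * (1 - β) with hq
  have hPa : P a β d r - a = d * s + p * w := by simp only [P, hs]; ring
  have hQa : Q a β d r - a = -d * s + q * w := by simp only [Q, hs]; ring
  have hlin : ∀ e t : ℝ, |e| + |t| ≤ K → |e * s + t * w| ≤ K * s := by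
    intro e t h
    calc |e * s + t * w| ≤ |e| * s + |t| * w := by
          refine (abs_add_le _ _).trans ?_
          rw [abs_mul, abs_mul, abs_of_nonneg hs0, abs_of_nonneg hw0]
      _ ≤ |e| * s + |t| * s := by gcongr
      _ = (|e| + |t|) * s := by ring
      _ ≤ K * s := by gcongr
  have hPK : |P a β d r - a| ≤ K * s := by
    rw [hPa]; apply hlin; simp only [K]; linarith [abs_nonneg q]
  have hQK : |Q a β d r - a| ≤ K * s := by
    rw [hQa]; apply hlin; simp only [K]; rw [abs_neg]; linarith [abs_nonneg p]
  have hsq : ∀ z : ℝ, |z| ≤ K * s → z ^ 2 ≤ K ^ 2 * w := by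
    intro z hz
    calc z ^ 2 = |z| ^ 2 := (sq_abs z).symm
      _ ≤ (K * s) ^ 2 := by gcongr
      _ = K ^ 2 * s ^ 2 := by ring
      _ ≤ K ^ 2 * w := by gcongr
  have hpq : |p| + |q| ≤ K := by simp only [K]; linarith [abs_nonneg d]
  constructor
  · have h1 := (abs_arctan_taylor_le (P a β d r) a).trans (hsq _ hPK)
    have h2 := (abs_arctan_taylor_le (Q a β d r) a).trans (hsq _ hQK)
    -- the `d / r ^ 2` terms of the two eigenvalues cancel to first order
    have h3 : |(P a β d r - a) / (1 + a ^ 2) + (Q a β d r - a) / (1 + a ^ 2)| ≤ K * w := by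
      rw [← add_div, hPa, hQa, show d * s + p * w + (-d * s + q * w) = (p + q) * w by ring,
        abs_div, abs_mul, abs_of_nonneg hw0, abs_of_pos (by positivity : 0 < 1 + a ^ 2)]
      refine (div_le_self (by positivity) (by nlinarith [sq_nonneg a])).trans ?_
      gcongr
      exact (abs_add_le _ _).trans hpq
    rw [abs_le] at *
    constructor <;> linarith [h1.1, h1.2, h2.1, h2.2, h3.1, h3.2]
  · have hPQ : |Q a β d r - P a β d r| ≤ 2 * K * s := by
      rw [abs_le] at *
      constructor <;> linarith [hPK.1, hPK.2, hQK.1, hQK.2]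
    set A := 1 / (1 + P a β d r ^ 2) with hA
    set B := 1 / (1 + Q a β d r ^ 2) with hB
    have hBA : |B - A| ≤ 2 * K * s := (abs_inv_sub_inv_le _ _).trans hPQ
    have hA1 : |A| ≤ 1 := by
      rw [abs_of_pos (by positivity), hA, div_le_one (by positivity)]
      nlinarith [sq_nonneg (P a β d r)]
    have hB1 : |B| ≤ 1 := by
      rw [abs_of_pos (by positivity), hB, div_le_one (by positivity)]
      nlinarith [sq_nonneg (Q a β d r)]
    have he : A * dP β d r + B * dQ β d r
        = (2 * d * s * (B - A) - β * w * (A * p + B * q)) / r := by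
      simp only [dP, dQ, hs, ← hw, ← hp]
      field_simp; ring
    rw [he, abs_div, abs_of_pos hr0, Real.rpow_sub hr0, Real.rpow_one, ← hw,
      ← mul_div_assoc (4 * |d| * K + β * K)]
    refine div_le_div_of_nonneg_right ?_ hr0.le
    have h1 : |2 * d * s * (B - A)| ≤ 4 * |d| * K * w := by
      rw [abs_mul, abs_mul, abs_mul, abs_of_nonneg hs0, abs_two]
      calc 2 * |d| * s * |B - A| ≤ 2 * |d| * s * (2 * K * s) := by gcongr
        _ = 4 * |d| * K * s ^ 2 := by ring
        _ ≤ 4 * |d| * K * w := by gcongr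
    have h2 : |β * w * (A * p + B * q)| ≤ β * K * w := by
      rw [abs_mul, abs_of_nonneg (by positivity : 0 ≤ β * w)]
      have : |A * p + B * q| ≤ K := by
        refine (abs_add_le _ _).trans (le_trans ?_ hpq)
        rw [abs_mul, abs_mul]
        gcongr
        · exact mul_le_of_le_one_left (abs_nonneg _) hA1
        · exact mul_le_of_le_one_left (abs_nonneg _) hB1
      calc β * w * |A * p + B * q| ≤ β * w * K := by gcongr
        _ = β * K * w := by ring
    calc _ ≤ |2 * d * s * (B - A)| + |β * w * (A * p + B * q)| := abs_sub _ _
      _ ≤ _ := by linarith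

theorem statement15
    (θ β c d : ℝ) (hθ : θ ∈ Set.Ioo 0 π) (hβ : β ∈ Set.Ioo (2:ℝ) 3)
    (u₀ : E2 → ℝ)
    (hu₀ : ∀ x : E2, 2 < ‖x‖ →
      u₀ x = Real.tan (θ / 2) / 2 * ‖x‖ ^ 2 + d * Real.log ‖x‖
        + d / 2 * Real.log (Real.tan (θ / 2) ^ 2 + 1) + c + ‖x‖ ^ (2 - β)) :
    ∃ C > (0:ℝ), ∃ R : ℝ, 2 ≤ R ∧ ∀ x : E2, R ≤ ‖x‖ →
      |Phase (Hess u₀ x) - θ| ≤ C * ‖x‖ ^ (-β)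
      ∧ ‖gradient (fun y => Phase (Hess u₀ y)) x‖ ≤ C * ‖x‖ ^ (-β - 1) := by
  have hat : 2 * Real.arctan (Real.tan (θ / 2)) = θ := by
    rw [Real.arctan_tan (by linarith [hθ.1, Real.pi_pos]) (by linarith [hθ.2])]; ring
  set a := Real.tan (θ / 2) with ha
  set K := |d| + |2 - β| + |(2 - β) * (1 - β)| with hK
  have hK0 : 0 ≤ K := by positivity
  have hβ0 : 0 < β := by linarith [hβ.1]
  refine ⟨(K + 2 * K ^ 2) + (4 * |d| * K + β * K) + 1, by positivity, 3, by norm_num, ?_⟩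
  intro x hx
  have hr : 0 < ‖x‖ := by linarith
  have hx2 : 2 < ‖x‖ := by linarith
  obtain ⟨h1, h2⟩ := phase_bounds (a := a) (d := d) hβ (by linarith : 1 ≤ ‖x‖)
  rw [← hK] at h1 h2
  rw [hat] at h1
  constructor
  · rw [phase_hess_eq hu₀ hx2]
    refine h1.trans (mul_le_mul_of_nonneg_right ?_ (Real.rpow_nonneg hr.le _))
    have : 0 ≤ 4 * |d| * K + β * K := by positivity
    linarith
  · have he : (fun y => Phase (Hess u₀ y)) =ᶠ[nhds x]
        fun y => Real.arctan (P a β d ‖y‖) + Real.arctan (Q a β d ‖y‖) := by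
      filter_upwards [(isOpen_lt continuous_const continuous_norm).mem_nhds hx2] with y hy
      exact phase_hess_eq hu₀ hy
    have hG := hasFDerivAt_radial (norm_pos_iff.mp hr)
      ((hasDerivAt_P a β d hr).arctan.add (hasDerivAt_Q a β d hr).arctan)
    have hf := he.fderiv_eq.trans hG.fderiv
    rw [gradient, LinearIsometryEquiv.norm_map, hf, norm_smul, innerSL_apply_norm, norm_div,
      norm_norm, div_mul_cancel₀ _ hr.ne', Real.norm_eq_abs]
    refine h2.trans (mul_le_mul_of_nonneg_right ?_ (Real.rpow_nonneg hr.le _))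
    have : 0 ≤ K + 2 * K ^ 2 := by positivity
    linarith
end
end
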